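/- arXiv:1812.08742 — 3 statements merged into one kernel-verified Lean document; each statement's English description precedes it below -/
import Mathlib

section
/- Let F be a field other than the two-element field (i.e. F contains an element x with x ≠ 0 and x ≠ 1). For every n ≥ 1, the stabilization map Sp_{2n}(F) → Sp_{2n+2}(F), extending an automorphism by the identity on an added hyperbolic plane, induces an isomorphism H_d(Sp_{2n}(F); ℤ) → H_d(Sp_{2n+2}(F); ℤ) for all d ≤ n − 1, and a surjection for d = n. -/
/-! # Group homology via the inhomogeneous bar complex (trivial coefficients) -/

namespace GroupHomologyBar

variable (G : Type) [Group G] (A : Type) [AddCommGroup A]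

/-- Inhomogeneous `n`-chains of `G` with coefficients in `A`. -/
abbrev chains (n : ℕ) : Type := (Fin n → G) →₀ A

/-- The differential of the inhomogeneous bar complex with trivial `G`-action on the
coefficients, sending `[g₁|…|g_{n+1}] ⊗ a` to
`[g₂|…|g_{n+1}] ⊗ a + ∑ⱼ (-1)^{j+1} [g₁|…|gⱼg_{j+1}|…|g_{n+1}] ⊗ a`
(the last summand of the sum being `(-1)^{n+1} [g₁|…|g_n] ⊗ a`). -/
noncomputable def d (n : ℕ) : chains G A (n + 1) →ₗ[ℤ] chains G A n :=
  Finsupp.lsum ℤ fun g =>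
    (Finsupp.lsingle (Fin.tail g) : A →ₗ[ℤ] chains G A n)
      + ∑ j : Fin (n + 1),
          ((-1 : ℤ) ^ ((j : ℕ) + 1)) • Finsupp.lsingle (Fin.contractNth j (· * ·) g)

/-- The `n`-cycles. -/
noncomputable def cycles : (n : ℕ) → Submodule ℤ (chains G A n)
  | 0 => ⊤
  | (n + 1) => LinearMap.ker (d G A n)

/-- The `n`-boundaries, viewed as a submodule of the `n`-cycles. -/
noncomputable def boundaries (n : ℕ) : Submodule ℤ (cycles G A n) :=
  Submodule.comap (cycles G A n).subtype (LinearMap.range (d G A n))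

/-- The group homology `H_n(G; A)` of `G` with trivial coefficients in `A`. -/
abbrev Homology (n : ℕ) : Type := cycles G A n ⧸ boundaries G A n

variable {G}
variable {G' : Type} [Group G']

/-- The map on chains induced by a group homomorphism. -/
noncomputable def chainsMap (φ : G →* G') (n : ℕ) : chains G A n →ₗ[ℤ] chains G' A n :=
  Finsupp.lmapDomain A ℤ fun v => φ ∘ v

lemma chainsMap_single (φ : G →* G') {n : ℕ} (v : Fin n → G) (a : A) :
    chainsMap A φ n (Finsupp.single v a) = Finsupp.single (φ ∘ v) a := by
  simp [chainsMap, Finsupp.mapDomain_single]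

lemma d_single {n : ℕ} (g : Fin (n + 1) → G) (a : A) :
    d G A n (Finsupp.single g a)
      = Finsupp.single (Fin.tail g) a
        + ∑ j : Fin (n + 1),
            ((-1 : ℤ) ^ ((j : ℕ) + 1)) • Finsupp.single (Fin.contractNth j (· * ·) g) a := by
  simp [d, Finsupp.lsum_single]

lemma d_chainsMap (φ : G →* G') (n : ℕ) :
    (d G' A n).comp (chainsMap A φ (n + 1)) = (chainsMap A φ n).comp (d G A n) := by
  apply Finsupp.lhom_ext
  intro g a
  have hc : ∀ j : Fin (n + 1),
      φ ∘ Fin.contractNth j (· * ·) g = Fin.contractNth j (· * ·) (φ ∘ g) := by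
    intro j
    funext k
    simp only [Function.comp_apply, Fin.contractNth]
    split_ifs <;> simp
  simp only [LinearMap.comp_apply, chainsMap_single, d_single, map_add, map_sum, map_smul,
    chainsMap_single, Fin.comp_tail, hc]

lemma chainsMap_mem_cycles (φ : G →* G') (n : ℕ) :
    ∀ x ∈ cycles G A n, chainsMap A φ n x ∈ cycles G' A n := by
  intro x hx
  cases n with
  | zero => trivial
  | succ n =>
    simp only [cycles, LinearMap.mem_ker] at hx ⊢
    have := congrArg (fun L : chains G A (n + 1) →ₗ[ℤ] chains G' A n => L x) (d_chainsMap A φ n)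
    simp only [LinearMap.comp_apply] at this
    rw [this, hx, map_zero]

/-- The map on cycles induced by a group homomorphism. -/
noncomputable def cyclesMap (φ : G →* G') (n : ℕ) : cycles G A n →ₗ[ℤ] cycles G' A n :=
  (chainsMap A φ n).restrict (chainsMap_mem_cycles A φ n)

/-- The map `H_n(G; A) → H_n(G'; A)` on group homology induced by a group
homomorphism `φ : G →* G'`. -/
noncomputable def inducedMap (φ : G →* G') (n : ℕ) :
    Homology G A n →ₗ[ℤ] Homology G' A n :=
  Submodule.mapQ _ _ (cyclesMap A φ n) (by
    rintro ⟨x, hx⟩ hmem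
    simp only [boundaries, Submodule.mem_comap, Submodule.subtype_apply,
      LinearMap.mem_range] at hmem ⊢
    obtain ⟨y, hy⟩ := hmem
    refine ⟨chainsMap A φ (n + 1) y, ?_⟩
    have := congrArg (fun L : chains G A (n + 1) →ₗ[ℤ] chains G' A n => L y) (d_chainsMap A φ n)
    simp only [LinearMap.comp_apply] at this
    rw [this, hy]
    rfl)

end GroupHomologyBar

section Isometries

variable (F : Type) [Field F] {W : Type} [AddCommGroup W] [Module F W]

/-- The group of linear automorphisms of a vector space `V` preserving a
function `Q : V → F` (e.g. a quadratic form). -/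
def quadIsoms {V : Type} [AddCommGroup V] [Module F V] (Q : V → F) :
    Subgroup (V ≃ₗ[F] V) where
  carrier := {g | ∀ v, Q (g v) = Q v}
  one_mem' := fun _ => rfl
  mul_mem' := fun {a b} ha hb v => by
    rw [show (a * b) v = a (b v) from rfl, ha, hb]
  inv_mem' := fun {a} ha v => by
    rw [show (a⁻¹ : V ≃ₗ[F] V) v = a.symm v from rfl, ← ha (a.symm v), a.apply_symm_apply]

/-- The group of linear automorphisms of a vector space `V` preserving a
pairing `ω : V → V → F` (e.g. a bilinear or sesquilinear form). -/
def bilinIsoms {V : Type} [AddCommGroup V] [Module F V] (ω : V → V → F) :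
    Subgroup (V ≃ₗ[F] V) where
  carrier := {g | ∀ v w, ω (g v) (g w) = ω v w}
  one_mem' := fun _ _ => rfl
  mul_mem' := fun {a b} ha hb v w => by
    rw [show (a * b) v = a (b v) from rfl, show (a * b) w = a (b w) from rfl, ha, hb]
  inv_mem' := fun {a} ha v w => by
    rw [show (a⁻¹ : V ≃ₗ[F] V) v = a.symm v from rfl,
      show (a⁻¹ : V ≃ₗ[F] V) w = a.symm w from rfl,
      ← ha (a.symm v) (a.symm w), a.apply_symm_apply, a.apply_symm_apply]

/-- The "orthogonal sum" form `x ↦ ∑ i, q (x i)` on `W^n`. -/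
def sumForm (q : W → F) (n : ℕ) (x : Fin n → W) : F := ∑ i, q (x i)

/-- The "orthogonal sum" pairing `(x, y) ↦ ∑ i, β (x i) (y i)` on `W^n`. -/
def pairForm (β : W → W → F) (n : ℕ) (x y : Fin n → W) : F := ∑ i, β (x i) (y i)

/-- The linear equivalence `W^{n+1} ≃ W^n × W` splitting off the last coordinate. -/
def lastSplit (n : ℕ) : (Fin (n + 1) → W) ≃ₗ[F] (Fin n → W) × W where
  toLinearMap := (LinearMap.funLeft F W Fin.castSucc).prod (LinearMap.proj (Fin.last n))
  invFun p := Fin.snoc p.1 p.2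
  left_inv x := Fin.snoc_init_self x
  right_inv p := by
    refine Prod.ext (funext fun i => ?_) ?_
    · exact @Fin.snoc_castSucc n (fun _ => W) p.2 p.1 i
    · exact @Fin.snoc_last n (fun _ => W) p.2 p.1

lemma lastSplit_symm_apply (n : ℕ) (p : Fin n → W) (w : W) :
    (lastSplit F n).symm (p, w) = Fin.snoc p w := rfl

/-- Extension of an automorphism of `W^n` to `W^{n+1}` by the identity on the
added last coordinate. -/
def stabAut (n : ℕ) (g : (Fin n → W) ≃ₗ[F] (Fin n → W)) :
    (Fin (n + 1) → W) ≃ₗ[F] (Fin (n + 1) → W) :=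
  (lastSplit F n).trans ((g.prodCongr (LinearEquiv.refl F W)).trans (lastSplit F n).symm)

lemma stabAut_symm_apply (n : ℕ) (g : (Fin n → W) ≃ₗ[F] (Fin n → W))
    (p : Fin n → W) (w : W) :
    stabAut F n g ((lastSplit F n).symm (p, w)) = (lastSplit F n).symm (g p, w) := by
  simp [stabAut, LinearEquiv.trans_apply, LinearEquiv.apply_symm_apply, LinearEquiv.prodCongr_apply]

lemma sumForm_snoc (q : W → F) (n : ℕ) (p : Fin n → W) (w : W) :
    sumForm F q (n + 1) ((lastSplit F n).symm (p, w)) = sumForm F q n p + q w := by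
  simp [sumForm, lastSplit_symm_apply, Fin.sum_univ_castSucc, Fin.snoc_castSucc, Fin.snoc_last]

lemma pairForm_snoc (β : W → W → F) (n : ℕ) (p p' : Fin n → W) (w w' : W) :
    pairForm F β (n + 1) ((lastSplit F n).symm (p, w)) ((lastSplit F n).symm (p', w'))
      = pairForm F β n p p' + β w w' := by
  simp [pairForm, lastSplit_symm_apply, Fin.sum_univ_castSucc, Fin.snoc_castSucc, Fin.snoc_last]

/-- The stabilization homomorphism on the isometry group of the form `sumForm q n`,
extending an isometry by the identity on the added summand. -/
def quadStab (q : W → F) (n : ℕ) :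
    quadIsoms F (sumForm F q n) →* quadIsoms F (sumForm F q (n + 1)) where
  toFun g := ⟨stabAut F n g.1, by
    intro v
    obtain ⟨⟨p, w⟩, rfl⟩ : ∃ x, (lastSplit F n).symm x = v :=
      ⟨lastSplit F n v, (lastSplit F n).symm_apply_apply v⟩
    rw [stabAut_symm_apply, sumForm_snoc, sumForm_snoc, g.2 p]⟩
  map_one' := by
    refine Subtype.ext (LinearEquiv.ext fun v => ?_)
    show stabAut F n 1 v = v
    obtain ⟨⟨p, w⟩, rfl⟩ : ∃ x, (lastSplit F n).symm x = v :=
      ⟨lastSplit F n v, (lastSplit F n).symm_apply_apply v⟩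
    rw [stabAut_symm_apply]
    rfl
  map_mul' g h := by
    refine Subtype.ext (LinearEquiv.ext fun v => ?_)
    show stabAut F n (g.1 * h.1) v = stabAut F n g.1 (stabAut F n h.1 v)
    obtain ⟨⟨p, w⟩, rfl⟩ : ∃ x, (lastSplit F n).symm x = v :=
      ⟨lastSplit F n v, (lastSplit F n).symm_apply_apply v⟩
    rw [stabAut_symm_apply, stabAut_symm_apply, stabAut_symm_apply]
    rfl

/-- The stabilization homomorphism on the isometry group of the pairing `pairForm β n`,
extending an isometry by the identity on the added summand. -/
def bilinStab (β : W → W → F) (n : ℕ) :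
    bilinIsoms F (pairForm F β n) →* bilinIsoms F (pairForm F β (n + 1)) where
  toFun g := ⟨stabAut F n g.1, by
    intro v v'
    obtain ⟨⟨p, w⟩, rfl⟩ : ∃ x, (lastSplit F n).symm x = v :=
      ⟨lastSplit F n v, (lastSplit F n).symm_apply_apply v⟩
    obtain ⟨⟨p', w'⟩, rfl⟩ : ∃ x, (lastSplit F n).symm x = v' :=
      ⟨lastSplit F n v', (lastSplit F n).symm_apply_apply v'⟩
    rw [stabAut_symm_apply, stabAut_symm_apply, pairForm_snoc, pairForm_snoc, g.2 p p']⟩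
  map_one' := by
    refine Subtype.ext (LinearEquiv.ext fun v => ?_)
    show stabAut F n 1 v = v
    obtain ⟨⟨p, w⟩, rfl⟩ : ∃ x, (lastSplit F n).symm x = v :=
      ⟨lastSplit F n v, (lastSplit F n).symm_apply_apply v⟩
    rw [stabAut_symm_apply]
    rfl
  map_mul' g h := by
    refine Subtype.ext (LinearEquiv.ext fun v => ?_)
    show stabAut F n (g.1 * h.1) v = stabAut F n g.1 (stabAut F n h.1 v)
    obtain ⟨⟨p, w⟩, rfl⟩ : ∃ x, (lastSplit F n).symm x = v :=
      ⟨lastSplit F n v, (lastSplit F n).symm_apply_apply v⟩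
    rw [stabAut_symm_apply, stabAut_symm_apply, stabAut_symm_apply]
    rfl

end Isometries

/-- The standard alternating pairing on the hyperbolic plane `F² = F × F`. -/
def sympPair (F : Type) [Field F] (s t : F × F) : F := s.1 * t.2 - s.2 * t.1

/-!
Let `V` be a symplectic space with a fixed hyperbolic pair `P`, and write `Fix S` for the group of
isometries fixing a subspace `S` pointwise. The image of the stabilization map is the subgroup of
`Sp_{2n+2}` fixing a hyperbolic plane, so both claims say that the homology of `Fix 0` relative to
`Fix P` vanishes in low degrees. This is generalized to all `S` orthogonal to `P`: the homology of
`Fix S` relative to `Fix (S ⊔ P)` vanishes in degree `q` as soon as `S^⊥` contains `q + 1`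
orthogonal hyperbolic planes.

The proof is by induction on `q`, enlarging `S` one vector `x` at a time. The orbit of `x` under
`Fix S` is essentially `{y ∉ S | y - x ∈ S^⊥}`, and the tuples of vectors of this set form an
acyclic complex, the cone with apex `x` being a contraction. In the double complex of
this action the tuples contribute relative homology of their stabilizers, which are again of the
form `Fix T` and vanish by induction, apart from the tuples spanning too large a subspace; those are
removed by comparing the faces of longer tuples and conjugating by scalings of hyperbolic planes.
So relative classes of `Fix S` come from `Fix (S ⊔ ⟨x⟩)`. Taking both vectors of a hyperbolic pair
`Q` orthogonal to `S` and to `P` for `x` in turn, they come from `Fix (S ⊔ Q)`. Finally an isometry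
carrying `Q` to `P` is a product of Eichler transformations, each the commutator of a
scaling by some `κ ≠ 0, 1` with another Eichler transformation. Conjugation by such a product is
trivial on the relative homology, while it moves `Fix (S ⊔ Q)` into `Fix P`, where relative classes
vanish.

All homology is computed with chains of the bar complex of the groupoid of `Sp(V)` acting on tuples
of vectors.
-/

namespace SymplecticStability

section BarComplex

variable {Γ X : Type*}

/-- Chains of the bar complex of the action groupoid of `Γ` acting on `X`. The pair
`([g₁, …, g_q], x)` is the simplex `g₁ ⋯ g_q x ← ⋯ ← g_q x ← x`; for `X` a point this is the bar
complex of `Γ`. All degrees are summed together. -/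
abbrev BarChain (Γ X : Type*) : Type _ := (List Γ × X) →₀ ℤ

/-- The basis chain given by a single simplex. -/
noncomputable abbrev simplex (l : List Γ) (x : X) : BarChain Γ X := Finsupp.single (l, x) 1

variable {M : Type*} [AddCommGroup M]

lemma hom_ext {f g : BarChain Γ X →ₗ[ℤ] M} (h : ∀ l x, f (simplex l x) = g (simplex l x)) :
    f = g :=
  Finsupp.lhom_ext' fun p => LinearMap.ext_ring (h p.1 p.2)

lemma map_mem_of_supported (f : BarChain Γ X →ₗ[ℤ] M) {N : Submodule ℤ M}
    {s : Set (List Γ × X)} (h : ∀ l x, (l, x) ∈ s → f (simplex l x) ∈ N)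
    {z : BarChain Γ X} (hz : z ∈ Finsupp.supported ℤ ℤ s) : f z ∈ N := by
  rw [Finsupp.supported_eq_span_single] at hz
  refine (Submodule.span_le (p := N.comap f)).2 ?_ hz
  rintro - ⟨p, hp, rfl⟩
  exact h p.1 p.2 hp

lemma map_eq_zero_of_supported {f : BarChain Γ X →ₗ[ℤ] M} {s : Set (List Γ × X)}
    (h : ∀ l x, (l, x) ∈ s → f (simplex l x) = 0)
    {z : BarChain Γ X} (hz : z ∈ Finsupp.supported ℤ ℤ s) : f z = 0 :=
  map_mem_of_supported (N := ⊥) f h hz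

lemma map_eq_of_supported {f g : BarChain Γ X →ₗ[ℤ] M} {s : Set (List Γ × X)}
    (h : ∀ l x, (l, x) ∈ s → f (simplex l x) = g (simplex l x))
    {z : BarChain Γ X} (hz : z ∈ Finsupp.supported ℤ ℤ s) : f z = g z := by
  have : (f - g) z = 0 := map_eq_zero_of_supported (fun l x hx => by simp [h l x hx]) hz
  simpa [sub_eq_zero] using this

lemma simplex_mem_supported {s : Set (List Γ × X)} {l : List Γ} {x : X} (h : (l, x) ∈ s) :
    simplex l x ∈ Finsupp.supported ℤ ℤ s :=
  Finsupp.single_mem_supported ℤ _ h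

/-- Adjoins a group element at the front of every simplex. -/
noncomputable def prepend (g : Γ) : BarChain Γ X →ₗ[ℤ] BarChain Γ X :=
  Finsupp.lmapDomain ℤ ℤ fun p => (g :: p.1, p.2)

@[simp] lemma prepend_simplex (g : Γ) (l : List Γ) (x : X) :
    prepend g (simplex l x) = simplex (g :: l) x := by
  simp [prepend]

variable [Group Γ] [MulAction Γ X]

/-- The alternating sum of all the faces of the simplex `(g :: l, x)` except the initial face
`(l, x)`. -/
noncomputable def tailFaces : Γ → List Γ → X → BarChain Γ X
  | g, [], x => simplex [] (g • x)
  | g, h :: l, x => simplex ((g * h) :: l) x - prepend g (tailFaces h l x)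

/-- The linear extension of `tailFaces`. -/
noncomputable def tailFacesHom (g : Γ) : BarChain Γ X →ₗ[ℤ] BarChain Γ X :=
  Finsupp.linearCombination ℤ fun p => tailFaces g p.1 p.2

@[simp] lemma tailFacesHom_simplex (g : Γ) (l : List Γ) (x : X) :
    tailFacesHom g (simplex l x) = tailFaces g l x := by
  simp [tailFacesHom]

/-- The alternating sum of the faces of a simplex. -/
noncomputable def boundary : List Γ → X → BarChain Γ X
  | [], _ => 0
  | g :: l, x => simplex l x - tailFaces g l x

/-- The differential of the bar complex. -/
noncomputable def barD : BarChain Γ X →ₗ[ℤ] BarChain Γ X :=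
  Finsupp.linearCombination ℤ fun p => boundary p.1 p.2

@[simp] lemma barD_simplex (l : List Γ) (x : X) : barD (simplex l x) = boundary l x := by
  simp [barD]

lemma barD_prepend (g : Γ) (z : BarChain Γ X) : barD (prepend g z) = z - tailFacesHom g z :=
  LinearMap.congr_fun (f := barD ∘ₗ prepend g) (g := LinearMap.id - tailFacesHom g)
    (hom_ext fun l x => by simp [boundary]) z

lemma tailFacesHom_prepend (g h : Γ) (z : BarChain Γ X) :
    tailFacesHom g (prepend h z) = prepend (g * h) z - prepend g (tailFacesHom h z) :=
  LinearMap.congr_fun (f := tailFacesHom g ∘ₗ prepend h)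
    (g := prepend (g * h) - prepend g ∘ₗ tailFacesHom h)
    (hom_ext fun l x => by simp [tailFaces]) z

lemma tailFacesHom_tailFaces (g h : Γ) (l : List Γ) (x : X) :
    tailFacesHom g (tailFaces h l x) = tailFaces (g * h) l x := by
  induction l generalizing g h with
  | nil => simp [tailFaces, mul_smul]
  | cons k l ih =>
    simp only [tailFaces, map_sub, tailFacesHom_simplex, tailFacesHom_prepend, ih, mul_assoc]
    abel

lemma barD_tailFaces (g : Γ) (l : List Γ) (x : X) :
    barD (tailFaces g l x) = boundary l x := by
  cases l with
  | nil => simp [tailFaces, boundary]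
  | cons h l =>
    simp only [tailFaces, map_sub, barD_simplex, boundary, barD_prepend, tailFacesHom_tailFaces]
    abel

lemma barD_barD (z : BarChain Γ X) : barD (barD z) = 0 := by
  have : barD ∘ₗ barD = (0 : BarChain Γ X →ₗ[ℤ] BarChain Γ X) := hom_ext fun l x => by
    cases l with
    | nil => simp [boundary]
    | cons h l => simp [boundary, barD_tailFaces]
  exact LinearMap.congr_fun this z

/-- The point at which a simplex ends; the point `x` of the pair `(l, x)` is where it starts. -/
def target (l : List Γ) (x : X) : X := l.prod • x

@[simp] lemma target_nil (x : X) : target ([] : List Γ) x = x := by simp [target]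

@[simp] lemma target_cons (g : Γ) (l : List Γ) (x : X) :
    target (g :: l) x = g • target l x := by
  simp [target, mul_smul]

lemma tailFaces_mem_supported_target (g : Γ) (l : List Γ) (x : X) :
    tailFaces g l x ∈ Finsupp.supported ℤ ℤ {p | target p.1 p.2 = g • target l x} := by
  induction l generalizing g with
  | nil => exact simplex_mem_supported (by simp)
  | cons h l ih =>
    refine Submodule.sub_mem _ (simplex_mem_supported (by simp [mul_smul])) ?_
    refine map_mem_of_supported (prepend g) (fun l' x' hx => ?_) (ih h)
    rw [prepend_simplex]
    exact simplex_mem_supported (by simpa using hx)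

end BarComplex

section Gauge

variable {Γ X : Type*} [Group Γ] [MulAction Γ X]

/-- The image of `l` under the gauge transformation by `c`; see `gauge`. -/
def gaugeList (c : X → Γ) : List Γ → X → List Γ
  | [], _ => []
  | h :: l, x => (c (h • target l x) * h * (c (target l x))⁻¹) :: gaugeList c l x

/-- The chain map induced by the endofunctor of the action groupoid that moves each object `x` to
`c x • x` along `c x`. It is homotopic to the identity. -/
noncomputable def gauge (c : X → Γ) : BarChain Γ X →ₗ[ℤ] BarChain Γ X :=
  Finsupp.lmapDomain ℤ ℤ fun p => (gaugeList c p.1 p.2, c p.2 • p.2)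

@[simp] lemma gauge_simplex (c : X → Γ) (l : List Γ) (x : X) :
    gauge c (simplex l x) = simplex (gaugeList c l x) (c x • x) := by
  simp [gauge]

/-- The prism between a simplex and its image under `gauge c`. -/
noncomputable def gaugePrism (c : X → Γ) : List Γ → X → BarChain Γ X
  | [], x => simplex [c x] x
  | h :: l, x => simplex (c (h • target l x) :: h :: l) x
      - prepend (c (h • target l x) * h * (c (target l x))⁻¹) (gaugePrism c l x)

/-- The chain homotopy from `gauge c` to the identity. -/
noncomputable def gaugeHomotopy (c : X → Γ) : BarChain Γ X →ₗ[ℤ] BarChain Γ X :=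
  Finsupp.linearCombination ℤ fun p => gaugePrism c p.1 p.2

@[simp] lemma gaugeHomotopy_simplex (c : X → Γ) (l : List Γ) (x : X) :
    gaugeHomotopy c (simplex l x) = gaugePrism c l x := by
  simp [gaugeHomotopy]

lemma gaugeHomotopy_prepend (c : X → Γ) (h : Γ) (b : X) {z : BarChain Γ X}
    (hz : z ∈ Finsupp.supported ℤ ℤ {p : List Γ × X | target p.1 p.2 = b}) :
    gaugeHomotopy c (prepend h z) = prepend (c (h • b)) (prepend h z)
      - prepend (c (h • b) * h * (c b)⁻¹) (gaugeHomotopy c z) := by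
  refine map_eq_of_supported (f := gaugeHomotopy c ∘ₗ prepend h)
    (g := prepend (c (h • b)) ∘ₗ prepend h - prepend (c (h • b) * h * (c b)⁻¹) ∘ₗ gaugeHomotopy c)
    (fun l x hx => ?_) hz
  obtain rfl : target l x = b := hx
  simp [gaugePrism]

lemma tailFacesHom_gaugePrism (c : X → Γ) (h : Γ) (l : List Γ) (x : X) :
    tailFacesHom (c (h • target l x) * h * (c (target l x))⁻¹) (gaugePrism c l x)
      - gaugeHomotopy c (tailFaces h l x)
      = simplex ((c (h • target l x) * h) :: l) x
        - prepend (c (h • target l x)) (tailFaces h l x)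
        - simplex ((c (h • target l x) * h * (c (target l x))⁻¹) :: gaugeList c l x) (c x • x) := by
  induction l generalizing h with
  | nil =>
    simp [gaugePrism, tailFaces, gaugeList]
    abel
  | cons k l ih =>
    have prism_k := congrArg
      (prepend (c (h • k • target l x) * h * (c (k • target l x))⁻¹)) (ih k)
    have prepend_faces := gaugeHomotopy_prepend c h _ (tailFaces_mem_supported_target k l x)
    have smul_smul_target : c ((h * k) • target l x) = c (h • k • target l x) := by
      rw [mul_smul]
    have cancel (a b u v w : Γ) : a * b * u⁻¹ * (u * v * w) = a * (b * v) * w := by group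
    simp only [map_sub, prepend_simplex] at prism_k
    rw [sub_eq_iff_eq_add] at prism_k
    simp only [tailFaces, gaugePrism, gaugeList, map_sub, prepend_faces, target_cons,
      tailFacesHom_prepend, tailFacesHom_simplex, prepend_simplex, gaugeHomotopy_simplex,
      smul_smul_target, cancel, inv_mul_cancel_right, prism_k]
    simp only [mul_assoc]
    abel

lemma barD_gaugeHomotopy_add (c : X → Γ) (z : BarChain Γ X) :
    barD (gaugeHomotopy c z) + gaugeHomotopy c (barD z) = z - gauge c z := by
  refine LinearMap.congr_fun (f := barD ∘ₗ gaugeHomotopy c + gaugeHomotopy c ∘ₗ barD)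
    (g := LinearMap.id - gauge c) (hom_ext fun l x => ?_) z
  cases l with
  | nil => simp [gaugePrism, boundary, tailFaces, gaugeList]
  | cons h l =>
    have prism := tailFacesHom_gaugePrism c h l x
    rw [sub_eq_iff_eq_add] at prism
    simp only [LinearMap.add_apply, LinearMap.comp_apply, LinearMap.sub_apply,
      LinearMap.id_apply, gaugeHomotopy_simplex, barD_simplex, boundary, gaugePrism, map_sub,
      gauge_simplex, gaugeList, barD_prepend, tailFaces, prism]
    abel

lemma barD_gauge (c : X → Γ) (z : BarChain Γ X) : barD (gauge c z) = gauge c (barD z) := by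
  have gauge_eq (y : BarChain Γ X) :
      gauge c y = y - (barD (gaugeHomotopy c y) + gaugeHomotopy c (barD y)) := by
    rw [barD_gaugeHomotopy_add, sub_sub_cancel]
  simp [gauge_eq, barD_barD]

lemma length_gaugeList (c : X → Γ) (l : List Γ) (x : X) :
    (gaugeList c l x).length = l.length := by
  induction l with
  | nil => rfl
  | cons h l ih => simp [gaugeList, ih]

lemma gaugeList_const (g : Γ) (l : List Γ) (x : X) :
    gaugeList (fun _ => g) l x = l.map fun h => g * h * g⁻¹ := by
  induction l with
  | nil => rfl
  | cons h l ih => simp [gaugeList, ih]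

lemma gaugeList_const_of_commute {g : Γ} {l : List Γ} (hl : ∀ h ∈ l, Commute g h) (x : X) :
    gaugeList (fun _ => g) l x = l := by
  rw [gaugeList_const, List.map_congr_left (g := id) fun h hh => ?_, List.map_id]
  rw [(hl h hh).eq, mul_inv_cancel_right, id]

end Gauge

section Supports

variable {Γ X : Type*} [Group Γ] {K K' : Subgroup Γ} {Y Y' : Set X}
  {q : ℕ} {l : List Γ} {x : X} {z : BarChain Γ X}

/-- The chains all of whose group elements lie in `K` and all of whose starting points lie
in `Y`. -/
def chainsOn (K : Subgroup Γ) (Y : Set X) : Submodule ℤ (BarChain Γ X) :=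
  Finsupp.supported ℤ ℤ {p | (∀ g ∈ p.1, g ∈ K) ∧ p.2 ∈ Y}

/-- The chains of `chainsOn K Y` that are homogeneous of degree `q`. -/
def chainsOfDeg (K : Subgroup Γ) (Y : Set X) (q : ℕ) : Submodule ℤ (BarChain Γ X) :=
  Finsupp.supported ℤ ℤ {p | p.1.length = q ∧ (∀ g ∈ p.1, g ∈ K) ∧ p.2 ∈ Y}

lemma chainsOfDeg_le_chainsOn : chainsOfDeg K Y q ≤ chainsOn K Y :=
  Finsupp.supported_mono fun _ hp => hp.2

lemma chainsOfDeg_mono (hK : K ≤ K') (hY : Y ⊆ Y') : chainsOfDeg K Y q ≤ chainsOfDeg K' Y' q :=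
  Finsupp.supported_mono fun _ hp => ⟨hp.1, fun g hg => hK (hp.2.1 g hg), hY hp.2.2⟩

lemma chainsOn_mono (hK : K ≤ K') (hY : Y ⊆ Y') : chainsOn K Y ≤ chainsOn K' Y' :=
  Finsupp.supported_mono fun _ hp => ⟨fun g hg => hK (hp.1 g hg), hY hp.2⟩

lemma simplex_mem_chainsOfDeg (hq : l.length = q) (hl : ∀ g ∈ l, g ∈ K) (hx : x ∈ Y) :
    simplex l x ∈ chainsOfDeg K Y q :=
  simplex_mem_supported ⟨hq, hl, hx⟩

lemma simplex_mem_chainsOn (hl : ∀ g ∈ l, g ∈ K) (hx : x ∈ Y) : simplex l x ∈ chainsOn K Y :=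
  simplex_mem_supported ⟨hl, hx⟩

lemma map_mem_of_chainsOn {M : Type*} [AddCommGroup M] (f : BarChain Γ X →ₗ[ℤ] M)
    {N : Submodule ℤ M} (h : ∀ q, ∀ y ∈ chainsOfDeg K Y q, f y ∈ N) (hz : z ∈ chainsOn K Y) :
    f z ∈ N :=
  map_mem_of_supported f (fun l _ hl => h l.length _ (simplex_mem_chainsOfDeg rfl hl.1 hl.2)) hz

lemma prepend_mem_chainsOfDeg {g : Γ} (hg : g ∈ K) (hz : z ∈ chainsOfDeg K Y q) :
    prepend g z ∈ chainsOfDeg K Y (q + 1) := by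
  refine map_mem_of_supported (prepend g) ?_ hz
  rintro l x ⟨rfl, hl, hx⟩
  rw [prepend_simplex]
  exact simplex_mem_chainsOfDeg rfl (by simpa using ⟨hg, hl⟩) hx

variable [MulAction Γ X]

/-- The set `Y` is carried into itself by every element of the subgroup `K`. -/
def IsStable (K : Subgroup Γ) (Y : Set X) : Prop := ∀ g ∈ K, ∀ y ∈ Y, g • y ∈ Y

lemma tailFaces_mem_chainsOfDeg (hY : IsStable K Y) {g : Γ} (hg : g ∈ K)
    (hl : ∀ h ∈ l, h ∈ K) (hx : x ∈ Y) : tailFaces g l x ∈ chainsOfDeg K Y l.length := by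
  induction l generalizing g with
  | nil => exact simplex_mem_chainsOfDeg rfl (by simp) (hY g hg x hx)
  | cons h l ih =>
    obtain ⟨hh, hl⟩ := List.forall_mem_cons.1 hl
    exact Submodule.sub_mem _
      (simplex_mem_chainsOfDeg rfl (List.forall_mem_cons.2 ⟨K.mul_mem hg hh, hl⟩) hx)
      (prepend_mem_chainsOfDeg hg (ih hh hl))

lemma barD_mem_chainsOfDeg (hY : IsStable K Y) (hz : z ∈ chainsOfDeg K Y (q + 1)) :
    barD z ∈ chainsOfDeg K Y q := by
  refine map_mem_of_supported barD ?_ hz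
  rintro (_ | ⟨g, l⟩) x ⟨hq, hl, hx⟩
  · simp at hq
  obtain rfl : l.length = q := by simpa using hq
  obtain ⟨hg, hl⟩ := List.forall_mem_cons.1 hl
  rw [barD_simplex]
  exact Submodule.sub_mem _ (simplex_mem_chainsOfDeg rfl hl hx)
    (tailFaces_mem_chainsOfDeg hY hg hl hx)

lemma barD_eq_zero_of_deg_zero (hz : z ∈ chainsOfDeg K Y 0) : barD z = 0 := by
  refine map_eq_zero_of_supported ?_ hz
  rintro l x ⟨hl, -⟩
  obtain rfl := List.length_eq_zero_iff.1 hl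
  simp [boundary]

lemma barD_mem_chainsOn (hY : IsStable K Y) (hz : z ∈ chainsOn K Y) : barD z ∈ chainsOn K Y := by
  refine map_mem_of_chainsOn barD (fun q y hy => ?_) hz
  cases q with
  | zero => simp [barD_eq_zero_of_deg_zero hy]
  | succ q => exact chainsOfDeg_le_chainsOn (barD_mem_chainsOfDeg hY hy)

lemma target_mem (hY : IsStable K Y) (hl : ∀ g ∈ l, g ∈ K) (hx : x ∈ Y) : target l x ∈ Y :=
  hY _ (K.list_prod_mem hl) x hx

variable {c : X → Γ}

lemma gaugePrism_mem_chainsOfDeg (hY : IsStable K Y) (hc : ∀ y ∈ Y, c y ∈ K)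
    (hl : ∀ g ∈ l, g ∈ K) (hx : x ∈ Y) : gaugePrism c l x ∈ chainsOfDeg K Y (l.length + 1) := by
  induction l with
  | nil => exact simplex_mem_chainsOfDeg rfl (by simpa using hc x hx) hx
  | cons h l ih =>
    have hhl := hl
    obtain ⟨hh, hl⟩ := List.forall_mem_cons.1 hl
    have ht := target_mem hY hl hx
    have hht := hc _ (hY h hh _ ht)
    exact Submodule.sub_mem _
      (simplex_mem_chainsOfDeg rfl (List.forall_mem_cons.2 ⟨hht, hhl⟩) hx)
      (prepend_mem_chainsOfDeg (K.mul_mem (K.mul_mem hht hh) (K.inv_mem (hc _ ht))) (ih hl))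

lemma gaugeHomotopy_mem_chainsOfDeg (hY : IsStable K Y) (hc : ∀ y ∈ Y, c y ∈ K)
    (hz : z ∈ chainsOfDeg K Y q) : gaugeHomotopy c z ∈ chainsOfDeg K Y (q + 1) := by
  refine map_mem_of_supported (gaugeHomotopy c) ?_ hz
  rintro l x ⟨rfl, hl, hx⟩
  rw [gaugeHomotopy_simplex]
  exact gaugePrism_mem_chainsOfDeg hY hc hl hx

lemma gaugeHomotopy_mem_chainsOn (hY : IsStable K Y) (hc : ∀ y ∈ Y, c y ∈ K)
    (hz : z ∈ chainsOn K Y) : gaugeHomotopy c z ∈ chainsOn K Y :=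
  map_mem_of_chainsOn _
    (fun _ _ hy => chainsOfDeg_le_chainsOn (gaugeHomotopy_mem_chainsOfDeg hY hc hy)) hz

lemma gaugeList_mem (hY : IsStable K Y) (hc : ∀ y ∈ Y, c y ∈ K) (hl : ∀ g ∈ l, g ∈ K)
    (hx : x ∈ Y) : ∀ g ∈ gaugeList c l x, g ∈ K := by
  induction l with
  | nil => simp [gaugeList]
  | cons h l ih =>
    obtain ⟨hh, hl⟩ := List.forall_mem_cons.1 hl
    have ht := target_mem hY hl hx
    exact List.forall_mem_cons.2
      ⟨K.mul_mem (K.mul_mem (hc _ (hY h hh _ ht)) hh) (K.inv_mem (hc _ ht)), ih hl⟩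

lemma gauge_mem_chainsOn (hY : IsStable K Y) (hc : ∀ y ∈ Y, c y ∈ K)
    (hz : z ∈ chainsOn K Y) : gauge c z ∈ chainsOn K Y := by
  refine map_mem_of_supported (gauge c) ?_ hz
  rintro l x ⟨hl, hx⟩
  rw [gauge_simplex]
  exact simplex_mem_chainsOn (gaugeList_mem hY hc hl hx) (hY _ (hc _ hx) _ hx)

end Supports

section ChangeOfPoints

variable {Γ X X' X'' : Type*}

/-- Replaces the point of every simplex by its image under `f`. -/
noncomputable def mapPoint (f : X → X') : BarChain Γ X →ₗ[ℤ] BarChain Γ X' :=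
  Finsupp.lmapDomain ℤ ℤ fun p => (p.1, f p.2)

/-- Replaces the point of every simplex by `x`. -/
noncomputable abbrev atPoint (x : X') : BarChain Γ X →ₗ[ℤ] BarChain Γ X' :=
  mapPoint fun _ => x

@[simp] lemma mapPoint_simplex (f : X → X') (l : List Γ) (x : X) :
    mapPoint f (simplex l x) = simplex l (f x) := by
  simp [mapPoint]

lemma mapPoint_mapPoint (f : X' → X'') (g : X → X') (z : BarChain Γ X) :
    mapPoint f (mapPoint g z) = mapPoint (f ∘ g) z :=
  LinearMap.congr_fun (f := mapPoint f ∘ₗ mapPoint g) (g := mapPoint (f ∘ g))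
    (hom_ext fun l x => by simp) z

lemma prepend_mapPoint (g : Γ) (f : X → X') (z : BarChain Γ X) :
    prepend g (mapPoint f z) = mapPoint f (prepend g z) :=
  LinearMap.congr_fun (f := prepend g ∘ₗ mapPoint f) (g := mapPoint f ∘ₗ prepend g)
    (hom_ext fun l x => by simp) z

variable [Group Γ] {K : Subgroup Γ} {Y : Set X} {Y' : Set X'} {f : X → X'} {q : ℕ}
  {z : BarChain Γ X}

lemma mapPoint_mem_chainsOfDeg (hf : Set.MapsTo f Y Y') (hz : z ∈ chainsOfDeg K Y q) :
    mapPoint f z ∈ chainsOfDeg K Y' q := by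
  refine map_mem_of_supported (mapPoint f) ?_ hz
  rintro l x ⟨hq, hl, hx⟩
  rw [mapPoint_simplex]
  exact simplex_mem_chainsOfDeg hq hl (hf hx)

lemma mapPoint_mem_chainsOn (hf : Set.MapsTo f Y Y') (hz : z ∈ chainsOn K Y) :
    mapPoint f z ∈ chainsOn K Y' :=
  map_mem_of_chainsOn _
    (fun _ _ hy => chainsOfDeg_le_chainsOn (mapPoint_mem_chainsOfDeg hf hy)) hz

lemma atPoint_mem_chainsOfDeg {x : X'} (hx : x ∈ Y') (hz : z ∈ chainsOfDeg K Y q) :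
    atPoint x z ∈ chainsOfDeg K Y' q :=
  mapPoint_mem_chainsOfDeg (fun _ _ => hx) hz

lemma atPoint_mem_chainsOn {x : X'} (hx : x ∈ Y') (hz : z ∈ chainsOn K Y) :
    atPoint x z ∈ chainsOn K Y' :=
  mapPoint_mem_chainsOn (fun _ _ => hx) hz

lemma atPoint_eq_self {x : X} (hz : z ∈ chainsOn K {x}) : atPoint x z = z := by
  refine map_eq_of_supported (g := LinearMap.id) ?_ hz
  rintro l _ ⟨-, rfl⟩
  simp

lemma chainsOn_inf_chainsOn {L : Subgroup Γ} {Z : Set X} :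
    chainsOn K Y ⊓ chainsOn L Z ≤ chainsOn (K ⊓ L) (Y ∩ Z) := by
  rintro z ⟨hY, hZ⟩ p hp
  exact ⟨fun g hg => ⟨(hY hp).1 g hg, (hZ hp).1 g hg⟩, (hY hp).2, (hZ hp).2⟩

variable [MulAction Γ X] [MulAction Γ X']

lemma isStable_univ (K : Subgroup Γ) : IsStable K (Set.univ : Set X) :=
  fun _ _ _ _ => Set.mem_univ _

lemma atPoint_tailFaces {x : X'} {g : Γ} (hg : g • x = x) {l : List Γ}
    (hl : ∀ h ∈ l, h • x = x) (y : X) :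
    atPoint x (tailFaces g l y) = tailFaces g l x := by
  induction l generalizing g with
  | nil => simp [tailFaces, hg]
  | cons h l ih =>
    obtain ⟨hh, hl⟩ := List.forall_mem_cons.1 hl
    simp [tailFaces, ← prepend_mapPoint, ih hh hl]

lemma barD_atPoint {x : X'} (hK : ∀ h ∈ K, h • x = x) (hz : z ∈ chainsOn K Y) :
    barD (atPoint x z) = atPoint x (barD z) := by
  refine map_eq_of_supported (f := barD ∘ₗ atPoint x) (g := atPoint x ∘ₗ barD) ?_ hz
  rintro (_ | ⟨g, l⟩) y ⟨hl, -⟩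
  · simp [boundary]
  · obtain ⟨hg, hl⟩ := List.forall_mem_cons.1 hl
    simp [boundary, atPoint_tailFaces (hK g hg) fun h hh => hK h (hl h hh)]

end ChangeOfPoints

section Tuples

variable {Γ V : Type*} [Group Γ] [MulAction Γ V]

/-- The entrywise action of a group on tuples. -/
instance : MulAction Γ (List V) where
  smul g t := t.map (g • ·)
  one_smul t := (List.map_congr_left fun v _ => one_smul Γ v).trans t.map_id
  mul_smul g h _ := (List.map_congr_left fun v _ => mul_smul g h v).trans List.map_map.symm

@[simp] lemma smul_nil (g : Γ) : g • ([] : List V) = [] := rfl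

@[simp] lemma smul_cons (g : Γ) (y : V) (t : List V) : g • (y :: t) = g • y :: g • t := rfl

lemma mem_smul_list {g : Γ} {t : List V} {w : V} : w ∈ g • t ↔ ∃ v ∈ t, g • v = w :=
  List.mem_map

@[simp] lemma length_smul_list (g : Γ) (t : List V) : (g • t).length = t.length :=
  List.length_map _

lemma smul_list_eq_self_iff {g : Γ} {t : List V} : g • t = t ↔ ∀ y ∈ t, g • y = y := by
  induction t with
  | nil => simp
  | cons y t ih => simp [ih]

end Tuples

section TupleFaces

variable {Γ V : Type*}

/-- Adjoins a vector at the front of every tuple. -/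
noncomputable abbrev consTuple (y : V) : BarChain Γ (List V) →ₗ[ℤ] BarChain Γ (List V) :=
  mapPoint (y :: ·)

/-- The alternating sum of the faces of a tuple, with the list `l` carried along. -/
noncomputable def tupleBoundary (l : List Γ) : List V → BarChain Γ (List V)
  | [] => 0
  | y :: t => simplex l t - consTuple y (tupleBoundary l t)

/-- The differential of the augmented complex of tuples, the empty tuple having degree `-1`. -/
noncomputable def tupleD : BarChain Γ (List V) →ₗ[ℤ] BarChain Γ (List V) :=
  Finsupp.linearCombination ℤ fun p => tupleBoundary p.1 p.2

@[simp] lemma tupleD_simplex (l : List Γ) (t : List V) :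
    tupleD (simplex l t) = tupleBoundary l t := by
  simp [tupleD]

lemma tupleD_consTuple (y : V) (z : BarChain Γ (List V)) :
    tupleD (consTuple y z) = z - consTuple y (tupleD z) :=
  LinearMap.congr_fun (f := tupleD ∘ₗ consTuple y) (g := LinearMap.id - consTuple y ∘ₗ tupleD)
    (hom_ext fun l t => by simp [tupleBoundary]) z

lemma tupleD_tupleBoundary (l : List Γ) (t : List V) : tupleD (tupleBoundary l t) = 0 := by
  induction t with
  | nil => simp [tupleBoundary]
  | cons y t ih => simp [tupleBoundary, tupleD_consTuple, ih]

lemma tupleD_tupleD (z : BarChain Γ (List V)) : tupleD (tupleD z) = 0 := by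
  have : tupleD ∘ₗ tupleD = (0 : BarChain Γ (List V) →ₗ[ℤ] BarChain Γ (List V)) :=
    hom_ext fun l t => by simp [tupleD_tupleBoundary]
  exact LinearMap.congr_fun this z

lemma tupleBoundary_mem_supported (l : List Γ) (t : List V) :
    tupleBoundary l t ∈ Finsupp.supported ℤ ℤ
      {p : List Γ × List V | p.1 = l ∧ p.2.length + 1 = t.length ∧ p.2 ⊆ t} := by
  induction t with
  | nil => simp [tupleBoundary]
  | cons y t ih =>
    refine Submodule.sub_mem _
      (simplex_mem_supported ⟨rfl, rfl, List.subset_cons_self y t⟩) ?_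
    refine map_mem_of_supported (consTuple y) ?_ ih
    rintro l' t' ⟨rfl, hlen, hsub⟩
    rw [mapPoint_simplex]
    exact simplex_mem_supported
      ⟨rfl, congrArg Nat.succ hlen, List.cons_subset_cons y hsub⟩

lemma prepend_tupleBoundary (g : Γ) (l : List Γ) (t : List V) :
    prepend g (tupleBoundary l t) = tupleBoundary (g :: l) t := by
  induction t with
  | nil => simp [tupleBoundary]
  | cons y t ih => simp [tupleBoundary, prepend_mapPoint, ih]

lemma tupleD_prepend (g : Γ) (z : BarChain Γ (List V)) :
    tupleD (prepend g z) = prepend g (tupleD z) :=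
  LinearMap.congr_fun (f := tupleD ∘ₗ prepend g) (g := prepend g ∘ₗ tupleD)
    (hom_ext fun l t => by simp [prepend_tupleBoundary]) z

lemma tupleD_atPoint_mem {X : Type*} (t : List V) (z : BarChain Γ X) :
    tupleD (atPoint t z) ∈ Submodule.span ℤ
      {w | ∃ s : List V, s.length + 1 = t.length ∧ s ⊆ t ∧ atPoint s z = w} := by
  induction t with
  | nil =>
    have : tupleD ∘ₗ atPoint ([] : List V) = (0 : BarChain Γ X →ₗ[ℤ] BarChain Γ (List V)) :=
      hom_ext fun l _ => by simp [tupleBoundary]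
    exact (LinearMap.congr_fun this z).symm ▸ Submodule.zero_mem _
  | cons y t ih =>
    have face : tupleD (atPoint (y :: t) z) = atPoint t z - consTuple y (tupleD (atPoint t z)) :=
      (congrArg tupleD (mapPoint_mapPoint (y :: ·) (fun _ => t) z).symm).trans
        (tupleD_consTuple y _)
    rw [face]
    refine Submodule.sub_mem _
      (Submodule.subset_span ⟨t, rfl, List.subset_cons_self y t, rfl⟩) ?_
    refine (Submodule.span_le (p := (Submodule.span ℤ _).comap (consTuple y))).2 ?_ ih
    rintro - ⟨s, hlen, hsub, rfl⟩
    exact Submodule.subset_span ⟨y :: s, congrArg Nat.succ hlen, List.cons_subset_cons y hsub,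
      (mapPoint_mapPoint (y :: ·) (fun _ => s) z).symm⟩

lemma tupleD_eq_zero_of_nil [Group Γ] {K : Subgroup Γ} {z : BarChain Γ (List V)}
    (hz : z ∈ chainsOn K {[]}) : tupleD z = 0 := by
  refine map_eq_zero_of_supported ?_ hz
  rintro l _ ⟨-, rfl⟩
  simp [tupleBoundary]

lemma tupleD_atPoint_singleton [Group Γ] {K : Subgroup Γ} (y : V) {z : BarChain Γ (List V)}
    (hz : z ∈ chainsOn K {[]}) : tupleD (atPoint [y] z) = z := by
  refine map_eq_of_supported (f := tupleD ∘ₗ atPoint [y]) (g := LinearMap.id) ?_ hz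
  rintro l _ ⟨-, rfl⟩
  simp [tupleBoundary]

lemma four_term_of_tupleD_mem (a b c : V) (t : List V) {X : Type*} (z : BarChain Γ X)
    {N : Submodule ℤ (BarChain Γ (List V))}
    (hN : ∀ s : List V, s.length + 1 = t.length → s ⊆ t → atPoint (a :: b :: c :: s) z ∈ N)
    (hd : tupleD (atPoint (a :: b :: c :: t) z) ∈ N) :
    atPoint (b :: c :: t) z - atPoint (a :: c :: t) z + atPoint (a :: b :: t) z ∈ N := by
  have faces : tupleD (atPoint (a :: b :: c :: t) z) =
      atPoint (b :: c :: t) z - atPoint (a :: c :: t) z + atPoint (a :: b :: t) z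
        - consTuple a (consTuple b (consTuple c (tupleD (atPoint t z)))) :=
    LinearMap.congr_fun (f := tupleD ∘ₗ atPoint (a :: b :: c :: t))
      (g := atPoint (b :: c :: t) - atPoint (a :: c :: t) + atPoint (a :: b :: t)
        - consTuple a ∘ₗ consTuple b ∘ₗ consTuple c ∘ₗ tupleD ∘ₗ atPoint t)
      (hom_ext fun l x => by simp [tupleBoundary]; abel) z
  have rest : consTuple a (consTuple b (consTuple c (tupleD (atPoint t z)))) ∈ N := by
    refine (Submodule.span_le (p := N.comap (consTuple a ∘ₗ consTuple b ∘ₗ consTuple c))).2 ?_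
      (tupleD_atPoint_mem t z)
    rintro - ⟨s, hlen, hsub, rfl⟩
    simp only [Submodule.comap_coe, Set.mem_preimage, LinearMap.comp_apply, mapPoint_mapPoint]
    exact hN s hlen hsub
  simpa [faces] using N.add_mem hd rest

variable [Group Γ] [MulAction Γ V]

lemma tailFacesHom_tupleBoundary_nil (g : Γ) (t : List V) :
    tailFacesHom g (tupleBoundary [] t) = tupleBoundary [] (g • t) := by
  induction t with
  | nil => simp [tupleBoundary]
  | cons y t ih =>
    have cons_comm : tailFacesHom g (consTuple y (tupleBoundary [] t))
        = consTuple (g • y) (tailFacesHom g (tupleBoundary [] t)) := by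
      refine map_eq_of_supported (f := tailFacesHom g ∘ₗ consTuple y)
        (g := consTuple (g • y) ∘ₗ tailFacesHom g) ?_ (tupleBoundary_mem_supported [] t)
      rintro _ s ⟨rfl, -⟩
      simp [tailFaces]
    simp [tupleBoundary, cons_comm, ih, tailFaces]

lemma tupleD_tailFaces (g : Γ) (l : List Γ) (t : List V) :
    tupleD (tailFaces g l t) = tailFacesHom g (tupleBoundary l t) := by
  induction l generalizing g with
  | nil => simp [tailFaces, tailFacesHom_tupleBoundary_nil]
  | cons h l ih =>
    simp [tailFaces, tupleD_prepend, ih, ← prepend_tupleBoundary, tailFacesHom_prepend]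

lemma tupleD_tailFacesHom (g : Γ) (z : BarChain Γ (List V)) :
    tupleD (tailFacesHom g z) = tailFacesHom g (tupleD z) :=
  LinearMap.congr_fun (f := tupleD ∘ₗ tailFacesHom (X := List V) g)
    (g := tailFacesHom g ∘ₗ tupleD)
    (hom_ext fun l t => by simp [tupleD_tailFaces]) z

lemma tupleD_barD (z : BarChain Γ (List V)) : tupleD (barD z) = barD (tupleD z) := by
  refine LinearMap.congr_fun (f := tupleD ∘ₗ barD (Γ := Γ) (X := List V)) (g := barD ∘ₗ tupleD)
    (hom_ext fun l t => ?_) z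
  cases l with
  | nil =>
    have : barD (tupleBoundary ([] : List Γ) t) = 0 :=
      map_eq_zero_of_supported (by rintro _ s ⟨rfl, -⟩; simp [boundary])
        (tupleBoundary_mem_supported [] t)
    simp [boundary, this]
  | cons g l =>
    rw [LinearMap.comp_apply, LinearMap.comp_apply, ← prepend_simplex, barD_prepend,
      tupleD_prepend, barD_prepend, map_sub, tupleD_tailFacesHom]

end TupleFaces

section TupleSupports

variable {Γ V : Type*}

/-- The tuples of length `k` with entries in `Y`. -/
def tuples (Y : Set V) (k : ℕ) : Set (List V) := {t | t.length = k ∧ ∀ y ∈ t, y ∈ Y}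

/-- The tuples of arbitrary length with entries in `Y`. -/
def allTuples (Y : Set V) : Set (List V) := {t | ∀ y ∈ t, y ∈ Y}

lemma tuples_subset_allTuples {Y : Set V} {k : ℕ} : tuples Y k ⊆ allTuples Y := fun _ h => h.2

lemma nil_mem_allTuples {Y : Set V} : [] ∈ allTuples Y := by simp [allTuples]

lemma tuples_zero (Y : Set V) : tuples Y 0 = {[]} := by
  ext t
  simp +contextual [tuples]

lemma allTuples_cons {Y : Set V} {y : V} (hy : y ∈ Y) :
    Set.MapsTo (y :: ·) (allTuples Y) (allTuples Y) :=
  fun _ ht => List.forall_mem_cons.2 ⟨hy, ht⟩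

lemma tuples_cons {Y : Set V} {y : V} (hy : y ∈ Y) {k : ℕ} :
    Set.MapsTo (y :: ·) (tuples Y k) (tuples Y (k + 1)) :=
  fun _ ht => ⟨congrArg Nat.succ ht.1, allTuples_cons hy ht.2⟩

variable [Group Γ] {K : Subgroup Γ} {Y : Set V} {k q : ℕ} {z : BarChain Γ (List V)}

lemma tupleD_mem_chainsOfDeg (hz : z ∈ chainsOfDeg K (tuples Y (k + 1)) q) :
    tupleD z ∈ chainsOfDeg K (tuples Y k) q := by
  refine map_mem_of_supported tupleD ?_ hz
  rintro l s ⟨hq, hl, hlen, hs⟩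
  rw [tupleD_simplex]
  refine Finsupp.supported_mono ?_ (tupleBoundary_mem_supported l s)
  rintro ⟨l, t⟩ ⟨rfl, ht, hsub⟩
  exact ⟨hq, hl, Nat.succ_injective (ht.trans hlen), fun y hy => hs y (hsub hy)⟩

lemma tupleD_mem_chainsOn (hz : z ∈ chainsOn K (allTuples Y)) :
    tupleD z ∈ chainsOn K (allTuples Y) := by
  refine map_mem_of_supported tupleD ?_ hz
  rintro l s ⟨hl, hs⟩
  rw [tupleD_simplex]
  refine Finsupp.supported_mono ?_ (tupleBoundary_mem_supported l s)
  rintro ⟨l, t⟩ ⟨rfl, -, hsub⟩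
  exact ⟨hl, fun y hy => hs y (hsub hy)⟩

variable [MulAction Γ V]

lemma IsStable.allTuples (h : IsStable K Y) : IsStable K (allTuples Y) := by
  intro g hg t ht y hy
  obtain ⟨v, hv, rfl⟩ := mem_smul_list.1 hy
  exact h g hg v (ht v hv)

lemma IsStable.tuples (h : IsStable K Y) (k : ℕ) : IsStable K (tuples Y k) :=
  fun g hg t ht => ⟨(length_smul_list g t).trans ht.1, h.allTuples g hg t ht.2⟩

lemma isStable_nil (K : Subgroup Γ) : IsStable K ({[]} : Set (List V)) := by
  rintro g - _ rfl
  rfl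

end TupleSupports

section SpanTuple

variable {F V : Type*} [Field F] [AddCommGroup V] [Module F V] {S T : Submodule F V} {t : List V}
  {y : V}

/-- The subspace generated by a subspace and the entries of a tuple. -/
def spanTuple (S : Submodule F V) (t : List V) : Submodule F V :=
  S ⊔ Submodule.span F {y | y ∈ t}

lemma le_spanTuple (S : Submodule F V) (t : List V) : S ≤ spanTuple S t := le_sup_left

lemma mem_spanTuple (hy : y ∈ t) : y ∈ spanTuple S t :=
  Submodule.mem_sup_right (Submodule.subset_span hy)

lemma spanTuple_le_iff : spanTuple S t ≤ T ↔ S ≤ T ∧ ∀ y ∈ t, y ∈ T := by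
  rw [spanTuple, sup_le_iff, Submodule.span_le]
  rfl

lemma spanTuple_le (hS : S ≤ T) (ht : ∀ y ∈ t, y ∈ T) : spanTuple S t ≤ T :=
  spanTuple_le_iff.2 ⟨hS, ht⟩

@[simp] lemma spanTuple_nil (S : Submodule F V) : spanTuple S [] = S := by simp [spanTuple]

lemma spanTuple_cons (S : Submodule F V) (y : V) (t : List V) :
    spanTuple S (y :: t) = spanTuple (S ⊔ F ∙ y) t := by
  have : {z | z ∈ y :: t} = insert y {z | z ∈ t} := by ext z; simp
  rw [spanTuple, spanTuple, this, Submodule.span_insert, sup_assoc]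

lemma mem_sup_span_iff {x : V} : x ∈ T ⊔ F ∙ y ↔ ∃ v ∈ T, ∃ c : F, v + c • y = x := by
  simp [Submodule.mem_sup, Submodule.mem_span_singleton]

lemma mem_sup_span_self (T : Submodule F V) (y : V) : y ∈ T ⊔ F ∙ y :=
  Submodule.mem_sup_right (Submodule.mem_span_singleton_self y)

lemma spanTuple_mono {s : List V} (h : s ⊆ t) : spanTuple S s ≤ spanTuple S t :=
  spanTuple_le (le_spanTuple S t) fun _ hy => mem_spanTuple (h hy)

lemma spanTuple_cons_add (S : Submodule F V) (y d : V) (t : List V) :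
    spanTuple S (y :: (y + d) :: t) = spanTuple S (y :: d :: t) := by
  refine eq_of_forall_ge_iff fun R => ?_
  simp only [spanTuple_le_iff, List.forall_mem_cons]
  grind [R.add_mem_iff_right]

lemma spanTuple_add_smul_cons (S : Submodule F V) (y d : V) (c : F) (t : List V) :
    spanTuple S ((y + c • d) :: d :: t) = spanTuple S (y :: d :: t) := by
  have mem_iff {R : Submodule F V} (hd : d ∈ R) : y + c • d ∈ R ↔ y ∈ R :=
    R.add_mem_iff_left (R.smul_mem c hd)
  refine eq_of_forall_ge_iff fun R => ?_
  simp only [spanTuple_le_iff, List.forall_mem_cons]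
  grind

end SpanTuple

/-- A symplectic form on the vector space `V`: a nondegenerate alternating bilinear form. -/
structure SymplecticForm (F V : Type) [Field F] [AddCommGroup V] [Module F V] where
  form : LinearMap.BilinForm F V
  isAlt : form.IsAlt
  nondegenerate : form.Nondegenerate

namespace SymplecticForm

variable {F V : Type} [Field F] [AddCommGroup V] [Module F V] (M : SymplecticForm F V)

section Perp

variable {T T' : Submodule F V} {t : List V} {v w y : V}

lemma form_swap (v w : V) : M.form v w = -M.form w v := by
  rw [← M.isAlt.neg_eq v w, neg_neg]

@[simp] lemma form_self (v : V) : M.form v v = 0 := M.isAlt v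

lemma form_eq_zero_comm : M.form v w = 0 ↔ M.form w v = 0 := by
  rw [form_swap, neg_eq_zero]

/-- The orthogonal complement of a subspace. -/
def perp (T : Submodule F V) : Submodule F V := M.form.orthogonal T

lemma mem_perp : v ∈ M.perp T ↔ ∀ t ∈ T, M.form t v = 0 := Iff.rfl

lemma mem_perp_iff_le_ker : v ∈ M.perp T ↔ T ≤ LinearMap.ker (M.form.flip v) := Iff.rfl

variable {M} in
lemma form_eq_zero (hw : w ∈ T) (hv : v ∈ M.perp T) : M.form w v = 0 := hv w hw

variable {M} in
lemma form_eq_zero' (hv : v ∈ M.perp T) (hw : w ∈ T) : M.form v w = 0 :=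
  M.form_eq_zero_comm.1 (hv w hw)

lemma perp_antitone (h : T ≤ T') : M.perp T' ≤ M.perp T := LinearMap.BilinForm.orthogonal_le h

lemma le_perp_comm : T ≤ M.perp T' ↔ T' ≤ M.perp T :=
  ⟨fun h _ ht' _ ht => form_eq_zero' (h ht) ht', fun h _ ht _ ht' => form_eq_zero' (h ht') ht⟩

lemma mem_perp_sup : v ∈ M.perp (T ⊔ T') ↔ v ∈ M.perp T ∧ v ∈ M.perp T' := by
  simp only [mem_perp_iff_le_ker, sup_le_iff]

lemma mem_perp_span {s : Set V} : v ∈ M.perp (Submodule.span F s) ↔ ∀ y ∈ s, M.form y v = 0 := by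
  rw [mem_perp_iff_le_ker, Submodule.span_le]
  rfl

lemma mem_perp_sup_span :
    v ∈ M.perp (T ⊔ F ∙ y) ↔ v ∈ M.perp T ∧ M.form y v = 0 := by
  simp [mem_perp_sup, mem_perp_span]

lemma mem_perp_spanTuple :
    v ∈ M.perp (spanTuple T t) ↔ v ∈ M.perp T ∧ ∀ y ∈ t, M.form y v = 0 := by
  rw [spanTuple, mem_perp_sup, mem_perp_span]
  rfl

end Perp

section Isometries

/-- The group of linear automorphisms preserving the symplectic form. -/
abbrev isometryGroup : Subgroup (V ≃ₗ[F] V) := bilinIsoms F fun v w => M.form v w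

variable {M}

@[simp] lemma form_smul_smul (g : M.isometryGroup) (v w : V) :
    M.form (g • v) (g • w) = M.form v w :=
  g.2 v w

lemma isometry_ext {g h : M.isometryGroup} (H : ∀ v : V, g • v = h • v) : g = h :=
  Subtype.ext (LinearEquiv.ext H)

variable {S T T' : Submodule F V} {t : List V} {g : M.isometryGroup} {v y : V}

variable (M) in
/-- The pointwise stabilizer of a subspace. -/
def fixing (T : Submodule F V) : Subgroup M.isometryGroup := fixingSubgroup _ (T : Set V)

lemma mem_fixing : g ∈ M.fixing T ↔ ∀ v ∈ T, g • v = v := mem_fixingSubgroup_iff _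

lemma smul_eq_of_mem_fixing (hg : g ∈ M.fixing T) (hv : v ∈ T) : g • v = v := mem_fixing.1 hg v hv

lemma mem_fixing_iff_le_eqLocus :
    g ∈ M.fixing T ↔ T ≤ LinearMap.eqLocus ((g : V ≃ₗ[F] V) : V →ₗ[F] V) LinearMap.id :=
  mem_fixing

lemma fixing_antitone (h : T ≤ T') : M.fixing T' ≤ M.fixing T :=
  fun _ hg => mem_fixing.2 fun _ hv => smul_eq_of_mem_fixing hg (h hv)

lemma fixing_sup : M.fixing (T ⊔ T') = M.fixing T ⊓ M.fixing T' := by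
  ext g
  simp only [Subgroup.mem_inf, mem_fixing_iff_le_eqLocus, sup_le_iff]

lemma mem_fixing_span {s : Set V} : g ∈ M.fixing (Submodule.span F s) ↔ ∀ v ∈ s, g • v = v := by
  rw [mem_fixing_iff_le_eqLocus, Submodule.span_le]
  rfl

lemma mem_fixing_sup_span : g ∈ M.fixing (T ⊔ F ∙ y) ↔ g ∈ M.fixing T ∧ g • y = y := by
  simp [fixing_sup, Subgroup.mem_inf, mem_fixing_span]

lemma mem_fixing_spanTuple : g ∈ M.fixing (spanTuple S t) ↔ g ∈ M.fixing S ∧ g • t = t := by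
  rw [spanTuple, fixing_sup, Subgroup.mem_inf, mem_fixing_span, smul_list_eq_self_iff]
  rfl

lemma smul_mem_perp (hg : g ∈ M.fixing T) (hv : v ∈ M.perp T) : g • v ∈ M.perp T := by
  intro t ht
  have := form_smul_smul g t v
  rw [smul_eq_of_mem_fixing hg ht] at this
  exact this.trans (hv t ht)

end Isometries

/-- The quotient of `T^⊥` by its radical `T ∩ T^⊥`, which is again symplectic, contains `j`
orthogonal hyperbolic planes. It measures how far the pointwise stabilizer of `T` is from being
unipotent. -/
def PerpGenusGE (T : Submodule F V) (j : ℕ) : Prop :=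
  Module.finrank F ↥(T ⊓ M.perp T) + 2 * j ≤ Module.finrank F (M.perp T)

variable {M} in
lemma PerpGenusGE.mono {T : Submodule F V} {i j : ℕ} (h : M.PerpGenusGE T j) (hij : i ≤ j) :
    M.PerpGenusGE T i := by
  unfold PerpGenusGE at *
  lia

section FiniteDimensional

variable [FiniteDimensional F V] {S T T' : Submodule F V}

lemma perp_perp (T : Submodule F V) : M.perp (M.perp T) = T :=
  LinearMap.BilinForm.orthogonal_orthogonal M.nondegenerate M.isAlt.isRefl T

lemma finrank_perp_add_finrank (T : Submodule F V) :
    Module.finrank F (M.perp T) + Module.finrank F T = Module.finrank F V := by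
  rw [perp, LinearMap.BilinForm.finrank_orthogonal M.nondegenerate T]
  exact Nat.sub_add_cancel T.finrank_le

lemma exists_mem_perp_form_eq_one {d : V} (hd : d ∉ T) : ∃ f ∈ M.perp T, M.form d f = 1 := by
  rw [← M.perp_perp T, mem_perp] at hd
  push Not at hd
  obtain ⟨f, hf, hfd⟩ := hd
  have hdf : M.form d f ≠ 0 := fun h => hfd (M.form_eq_zero_comm.1 h)
  exact ⟨(M.form d f)⁻¹ • f, Submodule.smul_mem _ _ hf, by simp [hdf]⟩

lemma perpGenusGE_bot {j : ℕ} (h : 2 * j ≤ Module.finrank F V) : M.PerpGenusGE ⊥ j := by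
  have radical_eq : (⊥ : Submodule F V) ⊓ M.perp ⊥ = ⊥ := bot_inf_eq _
  have := M.finrank_perp_add_finrank ⊥
  rw [finrank_bot] at this
  rw [PerpGenusGE, radical_eq, finrank_bot]
  lia

lemma finrank_sup_span_le (T : Submodule F V) (y : V) :
    Module.finrank F ↥(T ⊔ F ∙ y) ≤ Module.finrank F T + 1 :=
  (Submodule.finrank_add_le_finrank_add_finrank _ _).trans
    (Nat.add_le_add_left (by simpa using finrank_span_le_card (R := F) {y}) _)

variable {M}

lemma PerpGenusGE.sup_span {j : ℕ} (h : M.PerpGenusGE T (j + 1)) (y : V) :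
    M.PerpGenusGE (T ⊔ F ∙ y) j := by
  unfold PerpGenusGE at *
  set R := (T ⊔ F ∙ y) ⊓ M.perp (T ⊔ F ∙ y)
  have modular := Submodule.finrank_sup_add_finrank_inf_eq R T
  have sup_le : Module.finrank F ↥(R ⊔ T) ≤ Module.finrank F ↥(T ⊔ F ∙ y) :=
    Submodule.finrank_mono (sup_le inf_le_left le_sup_left)
  have inf_le : Module.finrank F ↥(R ⊓ T) ≤ Module.finrank F ↥(T ⊓ M.perp T) :=
    Submodule.finrank_mono
      (le_inf inf_le_right ((inf_le_left.trans inf_le_right).trans (M.perp_antitone le_sup_left)))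
  have := finrank_sup_span_le T y
  have := M.finrank_perp_add_finrank T
  have := M.finrank_perp_add_finrank (T ⊔ F ∙ y)
  lia

/-- Adjoining a vector not orthogonal to the radical shrinks the radical. -/
lemma PerpGenusGE.sup_span_of_radical {j : ℕ} (h : M.PerpGenusGE T j) {r y : V} (hr : r ∈ T)
    (hr' : r ∈ M.perp T) (hry : M.form r y ≠ 0) : M.PerpGenusGE (T ⊔ F ∙ y) j := by
  have radical_le : (T ⊔ F ∙ y) ⊓ M.perp (T ⊔ F ∙ y) ≤ T ⊓ M.perp T := by
    rintro x ⟨hx, hx'⟩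
    refine ⟨?_, M.perp_antitone le_sup_left hx'⟩
    obtain ⟨t, ht, c, rfl⟩ := mem_sup_span_iff.1 hx
    have hrx := form_eq_zero (Submodule.mem_sup_left hr) hx'
    simp only [map_add, form_eq_zero' hr' ht, map_smul, smul_eq_mul, zero_add, mul_eq_zero, hry,
      or_false] at hrx
    simpa [hrx] using ht
  have radical_ne : (T ⊔ F ∙ y) ⊓ M.perp (T ⊔ F ∙ y) ≠ T ⊓ M.perp T := fun heq =>
    have hr'' : r ∈ (T ⊔ F ∙ y) ⊓ M.perp (T ⊔ F ∙ y) := heq ▸ ⟨hr, hr'⟩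
    hry (form_eq_zero' hr''.2 (mem_sup_span_self T y))
  have := Submodule.finrank_lt_finrank_of_lt (lt_of_le_of_ne radical_le radical_ne)
  have := finrank_sup_span_le T y
  have := M.finrank_perp_add_finrank T
  have := M.finrank_perp_add_finrank (T ⊔ F ∙ y)
  unfold PerpGenusGE at *
  lia

lemma perpGenusGE_spanTuple {j : ℕ} (t : List V) (h : M.PerpGenusGE T (j + t.length)) :
    M.PerpGenusGE (spanTuple T t) j := by
  induction t generalizing T with
  | nil => simpa using h
  | cons y t ih =>
    rw [spanTuple_cons]
    exact ih (PerpGenusGE.sup_span (by simpa [add_assoc] using h) y)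

end FiniteDimensional

end SymplecticForm

namespace SymplecticForm

variable {F V : Type} [Field F] [AddCommGroup V] [Module F V] {M : SymplecticForm F V}
  {S T T' : Submodule F V} {t : List V}

variable (M) in
/-- A hyperbolic pair: two vectors with `ω(e, f) = 1`. -/
@[ext] structure HyperbolicPair where
  e : V
  f : V
  form_e_f : M.form e f = 1

namespace HyperbolicPair

variable (P P' : M.HyperbolicPair)

attribute [simp] form_e_f

@[simp] lemma form_f_e : M.form P.f P.e = -1 := by simp [M.form_swap P.f]

/-- The hyperbolic plane spanned by a hyperbolic pair. -/
def plane : Submodule F V := Submodule.span F {P.e, P.f}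

/-- The translate of a hyperbolic pair by an isometry. -/
def map (g : M.isometryGroup) : M.HyperbolicPair := ⟨g • P.e, g • P.f, by simp⟩

variable {P P'} {v : V} {g : M.isometryGroup}

lemma e_mem_plane : P.e ∈ P.plane := Submodule.subset_span (by simp)

lemma f_mem_plane : P.f ∈ P.plane := Submodule.subset_span (by simp)

lemma plane_le : P.plane ≤ T ↔ P.e ∈ T ∧ P.f ∈ T := by
  simp [plane, Submodule.span_le, Set.pair_subset_iff]

lemma mem_perp_plane : v ∈ M.perp P.plane ↔ M.form P.e v = 0 ∧ M.form P.f v = 0 := by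
  simp [plane, mem_perp_span]

lemma mem_fixing_plane : g ∈ M.fixing P.plane ↔ g • P.e = P.e ∧ g • P.f = P.f := by
  simp [plane, mem_fixing_span]

lemma eq_zero_of_mem_plane_of_mem_perp (hv : v ∈ P.plane) (hv' : v ∈ M.perp P.plane) : v = 0 := by
  obtain ⟨a, b, rfl⟩ := Submodule.mem_span_pair.1 hv
  obtain ⟨he, hf⟩ := mem_perp_plane.1 hv'
  simp only [map_add, map_smul, form_self, form_e_f, form_f_e, smul_eq_mul, mul_zero, mul_one,
    zero_add, add_zero, mul_neg, neg_eq_zero] at he hf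
  simp [he, hf]

lemma notMem_sup_plane (hT : T ≤ M.perp P.plane) (hv : v ∈ M.perp P.plane) (hvT : v ∉ T) :
    v ∉ T ⊔ P.plane := fun h => by
  obtain ⟨t, ht, p, hp, rfl⟩ := Submodule.mem_sup.1 h
  have p_perp : p ∈ M.perp P.plane := ((M.perp P.plane).add_mem_iff_right (hT ht)).1 hv
  rw [eq_zero_of_mem_plane_of_mem_perp hp p_perp, add_zero] at hvT
  exact hvT ht

lemma e_notMem (hP : P.plane ≤ M.perp T) : P.e ∉ T := fun h => by
  simpa using form_eq_zero h (hP f_mem_plane)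

lemma notMem_sup_span_e (hP : P.plane ≤ M.perp T) (hv : M.form P.e v = 1) : v ∉ T ⊔ F ∙ P.e := by
  intro h
  obtain ⟨w, hw, c, rfl⟩ := mem_sup_span_iff.1 h
  simp [form_eq_zero' (hP e_mem_plane) hw] at hv

end HyperbolicPair

variable [FiniteDimensional F V]

section Transvections

variable (M)

lemma injective_of_form_eq (φ : V →ₗ[F] V) (h : ∀ v w, M.form (φ v) (φ w) = M.form v w) :
    Function.Injective φ := by
  refine LinearMap.ker_eq_bot.1 (LinearMap.ker_eq_bot'.2 fun v hv => ?_)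
  by_contra hne
  obtain ⟨f, -, hf⟩ := M.exists_mem_perp_form_eq_one (T := ⊥) (d := v) (by simpa using hne)
  simp [← h, hv] at hf

/-- The isometry given by an endomorphism that preserves the form. -/
noncomputable def isometryOf (φ : V →ₗ[F] V) (h : ∀ v w, M.form (φ v) (φ w) = M.form v w) :
    M.isometryGroup :=
  ⟨LinearEquiv.ofInjectiveEndo φ (M.injective_of_form_eq φ h), h⟩

@[simp] lemma isometryOf_smul (φ : V →ₗ[F] V) (h : ∀ v w, M.form (φ v) (φ w) = M.form v w)
    (v : V) : M.isometryOf φ h • v = φ v := rfl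

/-- The symplectic transvection `v ↦ v + c ω(v, u) u`. -/
noncomputable def transvection (u : V) (c : F) : M.isometryGroup :=
  M.isometryOf (LinearMap.id + c • (M.form.flip u).smulRight u) fun v w => by
    simp [M.form_swap u w]
    ring

lemma transvection_smul (u : V) (c : F) (v : V) :
    M.transvection u c • v = v + c • M.form v u • u := by
  simp [transvection]

variable {M} {y y' : V}

lemma exists_mem_fixing_smul_eq_of_form_ne_zero (h : y' - y ∈ M.perp T) (hne : M.form y y' ≠ 0) :
    ∃ g ∈ M.fixing T, g • y = y' := by
  refine ⟨M.transvection (y' - y) (M.form y y')⁻¹, mem_fixing.2 fun v hv => ?_, ?_⟩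
  · simp [transvection_smul, form_eq_zero hv h]
  · simp [transvection_smul, smul_smul, hne]

lemma exists_mem_perp_form_ne_zero (hy : y ∉ T) (hy' : y' ∉ T) :
    ∃ a ∈ M.perp T, M.form y a ≠ 0 ∧ M.form y' a ≠ 0 := by
  obtain ⟨a, ha, hya⟩ := M.exists_mem_perp_form_eq_one hy
  obtain ⟨a', ha', hy'a'⟩ := M.exists_mem_perp_form_eq_one hy'
  by_cases hy'a : M.form y' a = 0
  · by_cases hya' : M.form y a' = 0
    · exact ⟨a + a', add_mem ha ha', by simp [hya, hya'], by simp [hy'a, hy'a']⟩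
    · exact ⟨a', ha', hya', by simp [hy'a']⟩
  · exact ⟨a, ha, by simp [hya], hy'a⟩

/-- A form of Witt's theorem: if `ω(y, y') = 0`, a single transvection does not suffice and one
passes through a third vector `y + a`. -/
lemma exists_mem_fixing_smul_eq (hy : y ∉ T) (hy' : y' ∉ T) (h : y' - y ∈ M.perp T) :
    ∃ g ∈ M.fixing T, g • y = y' := by
  by_cases hne : M.form y y' = 0
  · obtain ⟨a, ha, hya, hy'a⟩ := M.exists_mem_perp_form_ne_zero hy hy'
    obtain ⟨g, hg, hgy⟩ := exists_mem_fixing_smul_eq_of_form_ne_zero (M := M) (T := T) (y := y)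
      (y' := y + a) (by simpa using ha) (by simpa using hya)
    obtain ⟨k, hk, hky⟩ := exists_mem_fixing_smul_eq_of_form_ne_zero (M := M) (T := T) (y := y + a)
      (y' := y') (by simpa [sub_sub] using sub_mem h ha)
      (by simpa [hne, M.form_eq_zero_comm (v := a)] using hy'a)
    exact ⟨k * g, mul_mem hk hg, by rw [mul_smul, hgy, hky]⟩
  · exact exists_mem_fixing_smul_eq_of_form_ne_zero h hne

end Transvections

lemma PerpGenusGE.exists_hyperbolicPair (h : M.PerpGenusGE T 1) :
    ∃ P : M.HyperbolicPair, P.e ∈ M.perp T ∧ P.f ∈ M.perp T := by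
  have perp_not_le : ¬ M.perp T ≤ T := fun hle => by
    rw [PerpGenusGE, inf_eq_right.2 hle] at h
    lia
  obtain ⟨e, he, heT⟩ := Set.not_subset.1 perp_not_le
  obtain ⟨f, hf, hef⟩ := M.exists_mem_perp_form_eq_one heT
  exact ⟨⟨e, f, hef⟩, he, hf⟩

namespace HyperbolicPair

variable {P P' : M.HyperbolicPair} {v : V} {g : M.isometryGroup}

lemma exists_mem_fixing_map_eq (hP : P.plane ≤ M.perp T) (hP' : P'.plane ≤ M.perp T) :
    ∃ g ∈ M.fixing T, P.map g = P' := by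
  obtain ⟨g, hg, hge⟩ := exists_mem_fixing_smul_eq (e_notMem hP) (e_notMem hP')
    (sub_mem (hP' e_mem_plane) (hP e_mem_plane))
  have form_e_gf : M.form P'.e (g • P.f) = 1 := by rw [← hge, form_smul_smul, form_e_f]
  obtain ⟨k, hk, hkf⟩ := exists_mem_fixing_smul_eq (notMem_sup_span_e hP' form_e_gf)
    (notMem_sup_span_e hP' P'.form_e_f)
    (M.mem_perp_sup_span.2 ⟨sub_mem (hP' f_mem_plane) (smul_mem_perp hg (hP f_mem_plane)),
      by simp [form_e_gf]⟩)
  refine ⟨k * g, mul_mem (fixing_antitone le_sup_left hk) hg, HyperbolicPair.ext ?_ ?_⟩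
  · change (k * g) • P.e = P'.e
    rw [mul_smul, hge, smul_eq_of_mem_fixing hk (mem_sup_span_self T P'.e)]
  · change (k * g) • P.f = P'.f
    rw [mul_smul, hkf]

lemma exists_smul_mem_perp_plane (hS : S ≤ M.perp P.plane) (h : M.PerpGenusGE (spanTuple S t) 1) :
    ∃ g ∈ M.fixing S, ∀ y ∈ g • t, y ∈ M.perp P.plane := by
  obtain ⟨Q, he, hf⟩ := h.exists_hyperbolicPair
  obtain ⟨g, hg, rfl⟩ := exists_mem_fixing_map_eq (P := Q) (P' := P)
    ((plane_le.2 ⟨he, hf⟩).trans (M.perp_antitone (le_spanTuple S t))) (M.le_perp_comm.1 hS)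
  refine ⟨g, hg, fun y hy => ?_⟩
  obtain ⟨v, hv, rfl⟩ := mem_smul_list.1 hy
  rw [mem_perp_plane, map, form_smul_smul, form_smul_smul]
  exact ⟨form_eq_zero' he (mem_spanTuple hv), form_eq_zero' hf (mem_spanTuple hv)⟩

lemma exists_mem_fixing_sup_plane_smul_eq (hS : S ≤ M.perp P.plane)
    (ht : ∀ y ∈ t, y ∈ M.perp P.plane) (hgt : ∀ y ∈ g • t, y ∈ M.perp P.plane)
    (hg : g ∈ M.fixing S) : ∃ h ∈ M.fixing (S ⊔ P.plane), h • t = g • t := by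
  have plane_le_perp : P.plane ≤ M.perp (spanTuple S (g • t)) :=
    M.le_perp_comm.1 (spanTuple_le hS hgt)
  have smul_mem_perp_span : ∀ x ∈ P.plane, g • x ∈ M.perp (spanTuple S (g • t)) := fun x hx => by
    refine M.mem_perp_spanTuple.2 ⟨smul_mem_perp hg (M.le_perp_comm.1 hS hx), fun y hy => ?_⟩
    obtain ⟨v, hv, rfl⟩ := mem_smul_list.1 hy
    rw [form_smul_smul]
    exact form_eq_zero' (ht v hv) hx
  obtain ⟨h, hh, hmap⟩ := exists_mem_fixing_map_eq (P := P.map g) (P' := P)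
    (plane_le.2 ⟨smul_mem_perp_span _ e_mem_plane, smul_mem_perp_span _ f_mem_plane⟩) plane_le_perp
  obtain ⟨hhS, hht⟩ := mem_fixing_spanTuple.1 hh
  refine ⟨h * g, ?_, by rw [mul_smul, hht]⟩
  rw [fixing_sup]
  refine ⟨mul_mem hhS hg, mem_fixing_plane.2 ?_⟩
  rw [mul_smul, mul_smul]
  exact ⟨congrArg HyperbolicPair.e hmap, congrArg HyperbolicPair.f hmap⟩

variable (P) in
/-- The isometry scaling `e` by `κ` and `f` by `κ⁻¹`, and fixing the orthogonal complement of the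
hyperbolic plane. -/
noncomputable def scaling (κ : Fˣ) : M.isometryGroup :=
  M.isometryOf (LinearMap.id + (κ - 1 : F) • (M.form.flip P.f).smulRight P.e
    + (κ⁻¹ - 1 : F) • (M.form P.e).smulRight P.f) fun v w => by
    have := κ.ne_zero
    simp [M.form_swap P.f w, M.form_swap v P.e]
    field

lemma scaling_smul (κ : Fˣ) (v : V) :
    P.scaling κ • v
      = v + (κ - 1 : F) • M.form v P.f • P.e + (κ⁻¹ - 1 : F) • M.form P.e v • P.f := by
  simp [scaling]

lemma scaling_smul_of_form_eq_zero (κ : Fˣ) (he : M.form P.e v = 0) (hf : M.form v P.f = 0) :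
    P.scaling κ • v = v := by
  simp [scaling_smul, he, hf]

lemma scaling_smul_e (κ : Fˣ) : P.scaling κ • P.e = (κ : F) • P.e := by
  simp [scaling_smul, sub_smul]

lemma mul_scaling (g : M.isometryGroup) (κ : Fˣ) :
    g * P.scaling κ = (P.map g).scaling κ * g :=
  isometry_ext fun v => by
    simp [mul_smul, scaling_smul, map, smul_comm g (_ : F)]

lemma commute_scaling (κ : Fˣ) (he : g • P.e = P.e) (hf : g • P.f = P.f) :
    Commute g (P.scaling κ) := by
  have map_eq : P.map g = P := HyperbolicPair.ext he hf
  rw [Commute, SemiconjBy, mul_scaling, map_eq]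

end HyperbolicPair

section Eichler

variable {a b v : V}

variable (M) in
/-- The Eichler transformation `v ↦ v + c (ω(v, b) a + ω(v, a) b)`. -/
noncomputable def eichler (a b : V) (hab : M.form a b = 0) (c : F) : M.isometryGroup :=
  M.isometryOf (LinearMap.id + c • (M.form.flip b).smulRight a + c • (M.form.flip a).smulRight b)
    fun v w => by
      simp [M.form_swap a w, M.form_swap b w, M.form_swap b a, hab]
      ring

lemma eichler_smul (hab : M.form a b = 0) (c : F) (v : V) :
    M.eichler a b hab c • v = v + c • M.form v b • a + c • M.form v a • b := by
  simp [eichler]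

lemma eichler_smul_of_form_eq_zero (hab : M.form a b = 0) (c : F) (ha : M.form v a = 0)
    (hb : M.form v b = 0) : M.eichler a b hab c • v = v := by
  simp [eichler_smul, ha, hb]

lemma mul_eichler (g : M.isometryGroup) (hab : M.form a b = 0) (c : F) :
    g * M.eichler a b hab c = M.eichler (g • a) (g • b) (by simpa) c * g :=
  isometry_ext fun v => by
    simp [mul_smul, eichler_smul, smul_comm g (_ : F)]

lemma eichler_mul_eichler (hab : M.form a b = 0) (c c' : F) :
    M.eichler a b hab c * M.eichler a b hab c' = M.eichler a b hab (c + c') :=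
  isometry_ext fun v => by
    simp only [mul_smul, eichler_smul, map_add, map_smul, LinearMap.add_apply,
      LinearMap.smul_apply, form_self, hab, M.form_eq_zero_comm.1 hab, smul_zero]
    module

lemma eichler_smul_left (hab : M.form a b = 0) (κ c : F) :
    M.eichler (κ • a) b (by simp [hab]) c = M.eichler a b hab (κ * c) :=
  isometry_ext fun v => by
    simp only [eichler_smul, map_smul, smul_eq_mul]
    module

lemma commute_eichler {g : M.isometryGroup} (hab : M.form a b = 0) (c : F) (ha : g • a = a)
    (hb : g • b = b) : Commute g (M.eichler a b hab c) := by
  rw [Commute, SemiconjBy, mul_eichler]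
  simp only [ha, hb]

/-- An Eichler transformation is a commutator as soon as `F` contains a scalar `κ ≠ 0, 1`. -/
lemma scaling_mul_eichler {P : M.HyperbolicPair} (heb : M.form P.e b = 0) (hfb : M.form b P.f = 0)
    (κ : Fˣ) (c : F) :
    P.scaling κ * M.eichler P.e b heb c
      = M.eichler P.e b heb ((κ - 1) * c) * M.eichler P.e b heb c * P.scaling κ := by
  have scaling_b := HyperbolicPair.scaling_smul_of_form_eq_zero κ heb hfb
  rw [eichler_mul_eichler, mul_eichler]
  simp only [scaling_b, HyperbolicPair.scaling_smul_e, eichler_smul_left heb]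
  congr 2
  ring

end Eichler

end SymplecticForm

namespace SymplecticForm

variable {F V : Type} [Field F] [AddCommGroup V] [Module F V] {M : SymplecticForm F V}

namespace HyperbolicPair

section RelativeChains

lemma mem_chainsOn_fixing_sup {X : Type*} {S T : Submodule F V}
    {Y Y' : Set X} {z : BarChain M.isometryGroup X} (hS : z ∈ chainsOn (M.fixing S) Y)
    (hT : z ∈ chainsOn (M.fixing T) Y') : z ∈ chainsOn (M.fixing (S ⊔ T)) Y := by
  rw [fixing_sup]
  exact chainsOn_mono le_rfl Set.inter_subset_left (chainsOn_inf_chainsOn ⟨hS, hT⟩)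

variable (M) in
/-- The `q`-chains of the bar complex of the pointwise stabilizer of `S`. The empty tuple serves as
the base point, on which all isometries act trivially. -/
def fixingChains (S : Submodule F V) (q : ℕ) : Submodule ℤ (BarChain M.isometryGroup (List V)) :=
  chainsOfDeg (M.fixing S) {[]} q

variable (P : M.HyperbolicPair)

/-- The chains on the pointwise stabilizer of the hyperbolic plane, at arbitrary points. -/
def planeChains : Submodule ℤ (BarChain M.isometryGroup (List V)) :=
  chainsOn (M.fixing P.plane) Set.univ

/-- The `q`-cycles of the stabilizer of `S` relative to the stabilizer of the hyperbolic plane. -/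
noncomputable def relCycles (S : Submodule F V) (q : ℕ) :
    Submodule ℤ (BarChain M.isometryGroup (List V)) :=
  fixingChains M S q ⊓ P.planeChains.comap barD

/-- The `q`-boundaries of the stabilizer of `S` modulo chains on the stabilizer of the hyperbolic
plane. -/
noncomputable def relBoundaries (S : Submodule F V) (q : ℕ) :
    Submodule ℤ (BarChain M.isometryGroup (List V)) :=
  (fixingChains M S (q + 1)).map barD ⊔ P.planeChains

/-- The pointwise stabilizers of subspaces orthogonal to the hyperbolic plane with orthogonal
complement of genus greater than `q` have trivial `q`-th homology relative to the stabilizer of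
the plane. -/
def RelVanishing (q : ℕ) : Prop :=
  ∀ S ≤ M.perp P.plane, M.PerpGenusGE S (q + 1) → P.relCycles S q ≤ P.relBoundaries S q

/-- Relative `q`-cycles of the stabilizer of `S` come, up to boundaries, from the stabilizer of any
vector `f` pairing nontrivially with an isotropic vector `ε` in the radical of `S`. -/
def RadicalReduction (q : ℕ) : Prop :=
  ∀ S ≤ M.perp P.plane, M.PerpGenusGE S q → ∀ ε ∈ S, ε ∈ M.perp S →
    ∀ f ∈ M.perp P.plane, M.form ε f = 1 →
      P.relCycles S q ≤ fixingChains M (S ⊔ F ∙ f) q ⊔ P.relBoundaries S q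

variable {P} {S T : Submodule F V} {q : ℕ} {z : BarChain M.isometryGroup (List V)}

lemma fixingChains_antitone (h : S ≤ T) : fixingChains M T q ≤ fixingChains M S q :=
  chainsOfDeg_mono (fixing_antitone h) le_rfl

lemma relCycles_antitone (h : S ≤ T) : P.relCycles T q ≤ P.relCycles S q :=
  inf_le_inf_right _ (fixingChains_antitone h)

lemma fixingChains_zero (S T : Submodule F V) : fixingChains M S 0 = fixingChains M T 0 := by
  unfold fixingChains chainsOfDeg
  congr 1
  ext ⟨l, x⟩
  simp +contextual

lemma barD_mem_planeChains (hz : z ∈ P.planeChains) : barD z ∈ P.planeChains :=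
  barD_mem_chainsOn (isStable_univ _) hz

lemma barD_mem_fixingChains (hz : z ∈ fixingChains M S (q + 1)) : barD z ∈ fixingChains M S q :=
  barD_mem_chainsOfDeg (isStable_nil _) hz

lemma relBoundaries_antitone (h : S ≤ T) : P.relBoundaries T q ≤ P.relBoundaries S q :=
  sup_le_sup_right (Submodule.map_mono (fixingChains_antitone h)) _

lemma mem_relBoundaries :
    z ∈ P.relBoundaries S q ↔ ∃ w ∈ fixingChains M S (q + 1), z - barD w ∈ P.planeChains := by
  constructor
  · intro hz
    obtain ⟨_, ⟨w, hw, rfl⟩, b, hb, rfl⟩ := Submodule.mem_sup.1 hz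
    exact ⟨w, hw, by rwa [add_sub_cancel_left]⟩
  · rintro ⟨w, hw, hb⟩
    rw [← add_sub_cancel (barD w) z]
    exact Submodule.add_mem_sup (Submodule.mem_map_of_mem hw) hb

lemma relBoundaries_le_comap_barD : P.relBoundaries S q ≤ P.planeChains.comap barD := by
  refine sup_le ?_ fun z hz => barD_mem_planeChains hz
  rintro _ ⟨w, -, rfl⟩
  simp [barD_barD]

lemma relVanishing_zero : P.RelVanishing 0 := fun _ _ _ _ hz =>
  Submodule.mem_sup_right <| chainsOn_mono le_rfl (Set.subset_univ _)
    (chainsOfDeg_le_chainsOn ((fixingChains_zero _ P.plane).le hz.1))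

lemma radicalReduction_zero : P.RadicalReduction 0 := fun _ _ _ _ _ _ _ _ _ _ hz =>
  Submodule.mem_sup_left ((fixingChains_zero _ _).le hz.1)

end RelativeChains

section RelTupleBoundaries

variable (M) in
/-- The vectors outside `S` that pair with `S` like `x`; by Witt's theorem this is the orbit of
`x ∉ S` under the pointwise stabilizer of `S`. -/
def orthoOrbit (S : Submodule F V) (x : V) : Set V := {y | y ∉ S ∧ y - x ∈ M.perp S}

variable (P : M.HyperbolicPair)

/-- The vectors of `orthoOrbit` orthogonal to the hyperbolic plane. -/
def planeOrthoOrbit (S : Submodule F V) (x : V) : Set V := orthoOrbit M S x ∩ M.perp P.plane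

/-- The chains on the stabilizer of `S` and of the hyperbolic plane, at tuples in the orbit of `x`
orthogonal to the plane. -/
def planeTupleChains (S : Submodule F V) (x : V) :
    Submodule ℤ (BarChain M.isometryGroup (List V)) :=
  chainsOn (M.fixing (S ⊔ P.plane)) (allTuples (P.planeOrthoOrbit S x))

/-- The boundaries of `(q + 1)`-chains at `k`-tuples in the orbit of `x`, modulo chains on the
stabilizer of the hyperbolic plane. -/
noncomputable def relTupleBoundaries (S : Submodule F V) (x : V) (k q : ℕ) :
    Submodule ℤ (BarChain M.isometryGroup (List V)) :=
  (chainsOfDeg (M.fixing S) (tuples (orthoOrbit M S x) k) (q + 1)).map barD ⊔ P.planeTupleChains S x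

variable {P} {S T : Submodule F V} {x : V} {k q : ℕ} {s : List V}
  {g : M.isometryGroup} {z : BarChain M.isometryGroup (List V)}

lemma isStable_orthoOrbit (S : Submodule F V) (x : V) :
    IsStable (M.fixing S) (orthoOrbit M S x) := by
  rintro g hg y ⟨hyS, hyx⟩
  refine ⟨fun h => hyS ?_, M.mem_perp.2 fun v hv => ?_⟩
  · rwa [← inv_smul_smul g y, smul_eq_of_mem_fixing (inv_mem hg) h]
  · nth_rw 1 [map_sub, ← smul_eq_of_mem_fixing hg hv]
    rw [form_smul_smul, ← map_sub, form_eq_zero hv hyx]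

lemma isStable_planeOrthoOrbit (S : Submodule F V) (x : V) :
    IsStable (M.fixing (S ⊔ P.plane)) (P.planeOrthoOrbit S x) := fun _ hg y hy =>
  ⟨isStable_orthoOrbit S x _ (fixing_antitone le_sup_left hg) y hy.1,
    smul_mem_perp (fixing_antitone le_sup_right hg) hy.2⟩

lemma smul_eq_of_mem_fixing_of_forall_mem (hg : g ∈ M.fixing T) (hs : ∀ y ∈ s, y ∈ T) : g • s = s :=
  smul_list_eq_self_iff.2 fun y hy => smul_eq_of_mem_fixing hg (hs y hy)

lemma atPoint_mem_relTupleBoundaries_of_mem_relBoundaries (hST : S ≤ T) (hsT : ∀ y ∈ s, y ∈ T)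
    (hs : s ∈ tuples (P.planeOrthoOrbit S x) k) (hz : z ∈ fixingChains M T q)
    (hz' : z ∈ P.relBoundaries T q) : atPoint s z ∈ P.relTupleBoundaries S x k q := by
  obtain ⟨w, hw, hb⟩ := mem_relBoundaries.1 hz'
  have hb_plane : z - barD w ∈ chainsOn (M.fixing (S ⊔ P.plane)) {[]} :=
    chainsOn_mono (fixing_antitone (sup_le_sup_right hST _)) le_rfl
      (mem_chainsOn_fixing_sup (chainsOfDeg_le_chainsOn (sub_mem hz (barD_mem_fixingChains hw))) hb)
  have decomposition : atPoint s z = barD (atPoint s w) + atPoint s (z - barD w) := by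
    rw [barD_atPoint (fun h hh => smul_eq_of_mem_fixing_of_forall_mem hh hsT)
      (chainsOfDeg_le_chainsOn hw), map_sub, add_sub_cancel]
  rw [decomposition]
  exact Submodule.add_mem_sup
    (Submodule.mem_map_of_mem (atPoint_mem_chainsOfDeg ⟨hs.1, fun y hy => (hs.2 y hy).1⟩
      (fixingChains_antitone hST hw)))
    (atPoint_mem_chainsOn hs.2 hb_plane)

lemma atPoint_sub_smul_mem_of_deg_zero (hs : s ∈ tuples (orthoOrbit M S x) k)
    (hz : z ∈ fixingChains M T 0) (hg : g ∈ M.fixing S) :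
    atPoint s z - atPoint (g • s) z ∈ P.relTupleBoundaries S x k 0 := by
  have barD_prepend_atPoint :
      barD (prepend g (atPoint s z)) = atPoint s z - atPoint (g • s) z := by
    rw [barD_prepend]
    congr 1
    refine map_eq_of_supported (f := tailFacesHom g ∘ₗ atPoint s) (g := atPoint (g • s)) ?_ hz
    rintro l y ⟨hl, -⟩
    obtain rfl := List.length_eq_zero_iff.1 hl
    simp [tailFaces]
  rw [← barD_prepend_atPoint]
  exact Submodule.mem_sup_left (Submodule.mem_map_of_mem (prepend_mem_chainsOfDeg hg
    (atPoint_mem_chainsOfDeg hs ((fixingChains_zero T S).le hz))))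

lemma gauge_const_atPoint {K : Subgroup M.isometryGroup} {Y : Set (List V)}
    (hg : ∀ h ∈ K, Commute g h) (hz : z ∈ chainsOn K Y) :
    gauge (fun _ => g) (atPoint s z) = atPoint (g • s) z := by
  refine map_eq_of_supported (f := gauge (fun _ => g) ∘ₗ atPoint s) (g := atPoint (g • s)) ?_ hz
  rintro l y ⟨hl, -⟩
  simp [gaugeList_const_of_commute fun h hh => hg h (hl h hh)]

lemma atPoint_sub_smul_mem_of_commute (hST : S ≤ T) (hsT : ∀ y ∈ s, y ∈ T)
    (hs : s ∈ tuples (P.planeOrthoOrbit S x) k) (hg : g ∈ M.fixing (S ⊔ P.plane))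
    (hgT : ∀ h ∈ M.fixing T, Commute g h) (hz : z ∈ P.relCycles T q) :
    atPoint s z - atPoint (g • s) z ∈ P.relTupleBoundaries S x k q := by
  have hz_on : z ∈ chainsOn (M.fixing T) {[]} := chainsOfDeg_le_chainsOn hz.1
  have barD_mem : barD z ∈ chainsOn (M.fixing (S ⊔ P.plane)) {[]} :=
    chainsOn_mono (fixing_antitone (sup_le_sup_right hST _)) le_rfl
      (mem_chainsOn_fixing_sup (barD_mem_chainsOn (isStable_nil _) hz_on) hz.2)
  rw [← gauge_const_atPoint hgT hz_on, ← barD_gaugeHomotopy_add,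
    barD_atPoint (fun h hh => smul_eq_of_mem_fixing_of_forall_mem hh hsT) hz_on]
  refine Submodule.add_mem_sup (Submodule.mem_map_of_mem ?_) ?_
  · exact gaugeHomotopy_mem_chainsOfDeg ((isStable_orthoOrbit S x).tuples k)
      (fun _ _ => fixing_antitone le_sup_left hg)
      (atPoint_mem_chainsOfDeg ⟨hs.1, fun y hy => (hs.2 y hy).1⟩ (fixingChains_antitone hST hz.1))
  · exact gaugeHomotopy_mem_chainsOn (isStable_planeOrthoOrbit S x).allTuples (fun _ _ => hg)
      (atPoint_mem_chainsOn hs.2 barD_mem)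

variable [FiniteDimensional F V]

/-- In positive degree the tuple has to be orthogonal to the hyperbolic plane; in degree zero it
can be moved there. -/
lemma RelVanishing.atPoint_mem_relTupleBoundaries (hP : P.RelVanishing q)
    (hS : S ≤ M.perp P.plane) (hs : s ∈ tuples (orthoOrbit M S x) k) (hsT : spanTuple S s ≤ T)
    (hT : T ≤ M.perp P.plane ∨ q = 0) (hgenus : M.PerpGenusGE (spanTuple S s) (q + 1))
    (hz : z ∈ P.relCycles T q) : atPoint s z ∈ P.relTupleBoundaries S x k q := by
  rcases hT with hT | rfl
  · have hz_span := relCycles_antitone hsT hz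
    exact atPoint_mem_relTupleBoundaries_of_mem_relBoundaries (le_spanTuple S s)
      (fun _ => mem_spanTuple) ⟨hs.1, fun y hy => ⟨hs.2 y hy, hT (hsT (mem_spanTuple hy))⟩⟩
      hz_span.1 (hP _ (hsT.trans hT) hgenus hz_span)
  · obtain ⟨g, hg, hgs⟩ := exists_smul_mem_perp_plane hS hgenus
    have moved_mem : atPoint (g • s) z ∈ P.planeTupleChains S x :=
      atPoint_mem_chainsOn (Y := {[]})
        (fun y hy => ⟨((isStable_orthoOrbit S x).tuples k g hg s hs).2 y hy, hgs y hy⟩)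
        (chainsOfDeg_le_chainsOn ((fixingChains_zero _ _).le hz.1))
    rw [← sub_add_cancel (atPoint s z) (atPoint (g • s) z)]
    exact add_mem (atPoint_sub_smul_mem_of_deg_zero hs hz.1 hg) (Submodule.mem_sup_right moved_mem)

/-- The radical of `T` contains `d`, so some hyperbolic pair `(d, f)` has `f` orthogonal to `T'`.
Up to boundaries `z` fixes `f` as well, and then commutes with the isometry scaling `d` by `κ`. -/
lemma RadicalReduction.atPoint_sub_mem_relTupleBoundaries {T' : Submodule F V} {s' : List V} {d : V}
    (hQ : P.RadicalReduction q) (hST' : S ≤ T') (hT' : T' ≤ T) (hT : T ≤ M.perp P.plane)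
    (hgenus : M.PerpGenusGE T q) (hd : d ∈ T) (hd' : d ∈ M.perp T) (hdT' : d ∉ T')
    (hs : s ∈ tuples (orthoOrbit M S x) k) (hsT : ∀ y ∈ s, y ∈ T) (hs'T : ∀ y ∈ s', y ∈ T)
    (κ : Fˣ) (hss' : ∀ g ∈ M.fixing T', g • d = (κ : F) • d → g • s = s')
    (hz : z ∈ P.relCycles T q) :
    atPoint s z - atPoint s' z ∈ P.relTupleBoundaries S x k q := by
  have hST := hST'.trans hT'
  have hd_plane : d ∉ T' ⊔ P.plane := notMem_sup_plane (hT'.trans hT) (hT hd) hdT'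
  obtain ⟨f, hf, hdf⟩ := M.exists_mem_perp_form_eq_one hd_plane
  obtain ⟨z₁, hz₁, r, hr, rfl⟩ :=
    Submodule.mem_sup.1 (hQ T hT hgenus d hd hd' f (M.perp_antitone le_sup_right hf) hdf hz)
  have hz₁T := fixingChains_antitone le_sup_left hz₁
  have hrT : r ∈ fixingChains M T q := (Submodule.add_mem_iff_right _ hz₁T).1 hz.1
  have hz₁_cycle : z₁ ∈ P.planeChains.comap barD :=
    (Submodule.add_mem_iff_left _ (relBoundaries_le_comap_barD hr)).1 hz.2
  let Q : M.HyperbolicPair := ⟨d, f, hdf⟩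
  have hg : Q.scaling κ ∈ M.fixing (T' ⊔ P.plane) := mem_fixing.2 fun v hv =>
    scaling_smul_of_form_eq_zero κ
      (form_eq_zero' (M.mem_perp_sup.2 ⟨M.perp_antitone hT' hd', hT hd⟩) hv) (form_eq_zero hv hf)
  have hgs : Q.scaling κ • s = s' :=
    hss' _ (fixing_antitone le_sup_left hg) (Q.scaling_smul_e κ)
  have hgS : Q.scaling κ ∈ M.fixing (S ⊔ P.plane) :=
    fixing_antitone (sup_le_sup_right hST' _) hg
  have hs_plane : s ∈ tuples (P.planeOrthoOrbit S x) k :=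
    ⟨hs.1, fun y hy => ⟨hs.2 y hy, hT (hsT y hy)⟩⟩
  have hs'_plane := (isStable_planeOrthoOrbit S x).tuples k _ hgS s hs_plane
  rw [hgs] at hs'_plane
  rw [map_add, map_add, add_sub_add_comm]
  refine add_mem ?_ (sub_mem
    (atPoint_mem_relTupleBoundaries_of_mem_relBoundaries hST hsT hs_plane hrT hr)
    (atPoint_mem_relTupleBoundaries_of_mem_relBoundaries hST hs'T hs'_plane hrT hr))
  rw [← hgs]
  refine atPoint_sub_smul_mem_of_commute (T := T ⊔ F ∙ f) (hST.trans le_sup_left)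
    (fun y hy => Submodule.mem_sup_left (hsT y hy)) hs_plane hgS (fun h hh => ?_) ⟨hz₁, hz₁_cycle⟩
  obtain ⟨hhT, hhf⟩ := mem_fixing_sup_span.1 hh
  exact (commute_scaling κ (smul_eq_of_mem_fixing hhT hd) hhf).symm

lemma atPoint_sub_mem_relTupleBoundaries_of_deg_zero {s' : List V} {d : V} (hST : S ≤ T)
    (hd : d ∉ T) (hd' : d ∈ M.perp T) (hs : s ∈ tuples (orthoOrbit M S x) k) (κ : Fˣ)
    (hss' : ∀ g ∈ M.fixing T, g • d = (κ : F) • d → g • s = s') {T' : Submodule F V}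
    (hz : z ∈ fixingChains M T' 0) :
    atPoint s z - atPoint s' z ∈ P.relTupleBoundaries S x k 0 := by
  obtain ⟨f, hf, hdf⟩ := M.exists_mem_perp_form_eq_one hd
  let Q : M.HyperbolicPair := ⟨d, f, hdf⟩
  have hg : Q.scaling κ ∈ M.fixing T := mem_fixing.2 fun v hv =>
    scaling_smul_of_form_eq_zero κ (form_eq_zero' hd' hv) (form_eq_zero hv hf)
  rw [← hss' _ hg (Q.scaling_smul_e κ)]
  exact atPoint_sub_smul_mem_of_deg_zero hs hz (fixing_antitone hST hg)

end RelTupleBoundaries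

section CriticalTuples

/-- The hypotheses on a vector `x` under which the tuples in its orbit under the stabilizer of `S`
compute the relative homology of that stabilizer below degree `N`: stabilizers of one vector have
large genus, and so have stabilizers of two vectors, unless these differ, modulo `S`, by a vector
orthogonal to `S` and to the first one. -/
structure IsAdmissible (P : M.HyperbolicPair) (S : Submodule F V) (x : V) (N : ℕ) : Prop where
  le_perp : S ≤ M.perp P.plane
  mem_perp : x ∈ M.perp P.plane
  notMem : x ∉ S
  perpGenusGE : ∀ y ∈ orthoOrbit M S x, M.PerpGenusGE (S ⊔ F ∙ y) N
  exists_or_perpGenusGE : ∀ y₀ ∈ orthoOrbit M S x, ∀ y₁ ∈ orthoOrbit M S x,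
    (∃ d ∈ M.perp (S ⊔ F ∙ y₀), y₀ + d - y₁ ∈ S) ∨ M.PerpGenusGE (S ⊔ F ∙ y₀ ⊔ F ∙ y₁) N

/-- The boundaries at `k`-tuples, together with the faces of the chains at `(k + 1)`-tuples. -/
noncomputable def tupleRelations (P : M.HyperbolicPair) (S : Submodule F V) (x : V) (k q : ℕ) :
    Submodule ℤ (BarChain M.isometryGroup (List V)) :=
  P.relTupleBoundaries S x k q ⊔
    (chainsOfDeg (M.fixing S) (tuples (orthoOrbit M S x) (k + 1)) q).map tupleD

lemma add_smul_mem_orthoOrbit {S : Submodule F V} {x y d : V}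
    (hy : y ∈ orthoOrbit M S x) (hd : d ∈ M.perp S)
    (hdy : d ∉ S ⊔ F ∙ y) {c : F} (hc : c ≠ 0) : y + c • d ∈ orthoOrbit M S x := by
  refine ⟨fun h => hdy ?_, ?_⟩
  · have smul_mem : c • d ∈ S ⊔ F ∙ y :=
      (Submodule.add_mem_iff_right _ (mem_sup_span_self S y)).1 (Submodule.mem_sup_left h)
    exact (Submodule.smul_mem_iff _ hc).1 smul_mem
  · rw [add_sub_right_comm]
    exact add_mem hy.2 (Submodule.smul_mem _ c hd)

variable [FiniteDimensional F V] {P : M.HyperbolicPair} {S T : Submodule F V} {x : V} {N q k : ℕ}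
  {t : List V} {y y₀ y₁ d : V} {z : BarChain M.isometryGroup (List V)}

lemma IsAdmissible.perpGenusGE_spanTuple_cons (m : P.IsAdmissible S x N)
    (hy : y ∈ orthoOrbit M S x) (hN : q + t.length ≤ N) :
    M.PerpGenusGE (spanTuple S (y :: t)) q := by
  rw [spanTuple_cons]
  exact perpGenusGE_spanTuple t ((m.perpGenusGE y hy).mono hN)

lemma IsAdmissible.notMem_spanTuple (m : P.IsAdmissible S x N) (hy : y ∈ orthoOrbit M S x)
    (hN : q + t.length ≤ N) (hcrit : ¬ M.PerpGenusGE (spanTuple S (y :: d :: t)) q) :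
    d ∉ spanTuple S (y :: t) := fun h => by
  refine hcrit ?_
  have span_eq : spanTuple S (y :: d :: t) = spanTuple S (y :: t) := by
    refine eq_of_forall_ge_iff fun R => ?_
    have (hR : spanTuple S (y :: t) ≤ R) : d ∈ R := hR h
    simp only [spanTuple_le_iff, List.forall_mem_cons] at this ⊢
    grind
  rw [span_eq]
  exact m.perpGenusGE_spanTuple_cons hy hN

lemma IsAdmissible.mem_perp_spanTuple (m : P.IsAdmissible S x N) (hy : y ∈ orthoOrbit M S x)
    (hN : q + t.length ≤ N) (hcrit : ¬ M.PerpGenusGE (spanTuple S (y :: d :: t)) q)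
    (hd : d ∈ M.perp (S ⊔ F ∙ y)) : d ∈ M.perp (spanTuple S (y :: d :: t)) := by
  obtain ⟨hdS, hdy⟩ := M.mem_perp_sup_span.1 hd
  have hdd : d ∈ M.perp (S ⊔ F ∙ y ⊔ F ∙ d) := M.mem_perp_sup_span.2 ⟨hd, M.form_self d⟩
  refine M.mem_perp_spanTuple.2 ⟨hdS, List.forall_mem_cons.2 ⟨hdy, List.forall_mem_cons.2
    ⟨M.form_self d, fun w hw => by_contra fun hdw => hcrit ?_⟩⟩⟩
  obtain ⟨l₁, l₂, rfl⟩ := List.append_of_mem hw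
  have length_eq : (l₁ ++ w :: l₂).length = (l₁ ++ l₂).length + 1 := by
    simp only [List.length_append, List.length_cons, add_assoc]
  have span_eq : spanTuple S (y :: d :: (l₁ ++ w :: l₂))
      = spanTuple (S ⊔ F ∙ y ⊔ F ∙ d ⊔ F ∙ w) (l₁ ++ l₂) := by
    refine eq_of_forall_ge_iff fun R => ?_
    simp only [← spanTuple_cons, spanTuple_le_iff, List.forall_mem_cons, List.forall_mem_append]
    tauto
  obtain ⟨N, rfl⟩ : ∃ N', N = N' + 1 := ⟨N - 1, by lia⟩
  rw [span_eq]
  refine perpGenusGE_spanTuple _ (.mono (j := N) ?_ (by lia))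
  exact ((m.perpGenusGE y hy).sup_span d).sup_span_of_radical (mem_sup_span_self _ d) hdd
    (M.form_eq_zero_comm.not.1 hdw)

/-- The face relation of the tuples `(a, b, c, t)`, in which the faces omitting an entry of `t` are
not critical. -/
lemma IsAdmissible.four_term_mem_tupleRelations (m : P.IsAdmissible S x N) (hP : P.RelVanishing q)
    {a b c : V} (habc : a :: b :: c :: t ∈ tuples (orthoOrbit M S x) (k + 3))
    (hc : ∀ R, S ≤ R → a ∈ R → b ∈ R → c ∈ R) (hN : q + k + 1 ≤ N)
    (habcT : spanTuple S (a :: b :: c :: t) ≤ T) (hT : T ≤ M.perp P.plane ∨ q = 0)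
    (hz : z ∈ P.relCycles T q) :
    atPoint (b :: c :: t) z - atPoint (a :: c :: t) z + atPoint (a :: b :: t) z
      ∈ P.tupleRelations S x (k + 2) q := by
  have length_t : t.length = k := by simpa using habc.1
  refine four_term_of_tupleD_mem a b c t z (fun s hs hst => Submodule.mem_sup_left ?_)
    (Submodule.mem_sup_right (Submodule.mem_map_of_mem (atPoint_mem_chainsOfDeg habc
      (fixingChains_antitone ((le_spanTuple S _).trans habcT) hz.1))))
  have habs : a :: b :: c :: s ⊆ a :: b :: c :: t :=
    List.cons_subset_cons a (List.cons_subset_cons b (List.cons_subset_cons c hst))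
  refine hP.atPoint_mem_relTupleBoundaries m.le_perp
    ⟨by simp only [List.length_cons]; lia, fun y hy => habc.2 y (habs hy)⟩
    ((spanTuple_mono habs).trans habcT) hT ?_ hz
  have span_eq : spanTuple S (a :: b :: c :: s) = spanTuple S (a :: b :: s) := by
    refine eq_of_forall_ge_iff fun R => ?_
    have := hc R
    simp only [spanTuple_le_iff, List.forall_mem_cons]
    grind
  rw [span_eq]
  exact m.perpGenusGE_spanTuple_cons (habc.2 a (by simp)) (by simp only [List.length_cons]; lia)

lemma IsAdmissible.atPoint_mem_tupleRelations_of_sub_mem (m : P.IsAdmissible S x N)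
    (hP : P.RelVanishing q) {y₁' : V} (hsub : y₁' - y₁ ∈ S)
    (ht : y₀ :: y₁ :: y₁' :: t ∈ tuples (orthoOrbit M S x) (k + 3)) (hN : q + k + 1 ≤ N)
    (hT : spanTuple S (y₀ :: y₁ :: t) ≤ M.perp P.plane ∨ q = 0)
    (hz : z ∈ P.relCycles (spanTuple S (y₀ :: y₁ :: t)) q)
    (hrel : atPoint (y₀ :: y₁' :: t) z ∈ P.tupleRelations S x (k + 2) q) :
    atPoint (y₀ :: y₁ :: t) z ∈ P.tupleRelations S x (k + 2) q := by
  have length_t : t.length = k := by simpa using ht.1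
  have mem_of_mem {R : Submodule F V} (hR : S ≤ R) (h : y₁ ∈ R) : y₁' ∈ R :=
    (R.sub_mem_iff_left h).1 (hR hsub)
  have relation := m.four_term_mem_tupleRelations hP ht (fun R hR _ h => mem_of_mem hR h) hN
    (spanTuple_le (le_spanTuple _ _) (by
      have := mem_of_mem (le_spanTuple S (y₀ :: y₁ :: t)) (mem_spanTuple (by simp))
      grind [mem_spanTuple])) hT hz
  have noncritical : atPoint (y₁ :: y₁' :: t) z ∈ P.tupleRelations S x (k + 2) q := by
    have span_eq : spanTuple S (y₁ :: y₁' :: t) = spanTuple S (y₁ :: t) := by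
      refine eq_of_forall_ge_iff fun R => ?_
      simp only [spanTuple_le_iff, List.forall_mem_cons]
      grind
    refine Submodule.mem_sup_left (hP.atPoint_mem_relTupleBoundaries m.le_perp
      ⟨by simp [length_t], fun y hy => ht.2 y (List.mem_cons_of_mem _ hy)⟩ ?_ hT ?_ hz)
    · rw [span_eq]
      exact spanTuple_mono (List.subset_cons_self _ _)
    · rw [span_eq]
      exact m.perpGenusGE_spanTuple_cons (ht.2 y₁ (by simp)) (by lia)
  rw [← (P.tupleRelations S x (k + 2) q).add_mem_iff_right (sub_mem noncritical hrel)]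
  exact relation

/-- The scaling factor is chosen so that the isometry fixing `y + b • d` and scaling `d` by it
carries `y + d` to `y`. -/
lemma IsAdmissible.atPoint_sub_mem_relTupleBoundaries (m : P.IsAdmissible S x N)
    (hQ : P.RadicalReduction q) {b : F} (hb₀ : b ≠ 0) (hb₁ : b ≠ 1)
    (ht : y :: (y + d) :: (y + b • d) :: t ∈ tuples (orthoOrbit M S x) (k + 3))
    (hd : d ∈ M.perp (spanTuple S (y :: d :: t))) (hN : q + k + 1 ≤ N)
    (hcrit : ¬ M.PerpGenusGE (spanTuple S (y :: d :: t)) (q + 1))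
    (hT : spanTuple S (y :: d :: t) ≤ M.perp P.plane ∨ q = 0)
    (hz : z ∈ P.relCycles (spanTuple S (y :: d :: t)) q) :
    atPoint ((y + d) :: (y + b • d) :: t) z - atPoint (y :: (y + b • d) :: t) z
      ∈ P.relTupleBoundaries S x (k + 2) q := by
  have length_t : t.length = k := by simpa using ht.1
  have hb : 1 - b ≠ 0 := sub_ne_zero.2 hb₁.symm
  let κ : Fˣ := Units.mk0 (-b / (1 - b)) (div_ne_zero (neg_ne_zero.2 hb₀) hb)
  have hdT' : d ∉ spanTuple S ((y + b • d) :: t) :=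
    m.notMem_spanTuple (q := q + 1) (ht.2 _ (by simp)) (by lia) (by rwa [spanTuple_add_smul_cons])
  have carries : ∀ g ∈ M.fixing (spanTuple S ((y + b • d) :: t)), g • d = (κ : F) • d →
      g • ((y + d) :: (y + b • d) :: t) = y :: (y + b • d) :: t := fun g hg hgd => by
    have hgt := (mem_fixing_spanTuple.1 hg).2
    have hgy : g • (y + d) = y := by
      have hgb : g • (y + b • d) = y + b • d := (List.cons.inj hgt).1
      have : y + d = (y + b • d) + (1 - b) • d := by module
      rw [this, smul_add, smul_comm, hgd, hgb, smul_smul]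
      simp [κ, mul_div_cancel₀ _ hb]
    rw [smul_cons, hgt, hgy]
  have hT' : spanTuple S ((y + b • d) :: t) ≤ spanTuple S (y :: d :: t) := by
    rw [← spanTuple_add_smul_cons S y d b t]
    exact spanTuple_mono (List.cons_subset_cons _ (List.subset_cons_self _ _))
  have hs : (y + d) :: (y + b • d) :: t ∈ tuples (orthoOrbit M S x) (k + 2) :=
    ⟨by simp [length_t], fun w hw => ht.2 w (List.mem_cons_of_mem _ hw)⟩
  rcases hT with hT | rfl
  · have hyT : y ∈ spanTuple S (y :: d :: t) := mem_spanTuple (by simp)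
    have hdT : d ∈ spanTuple S (y :: d :: t) := mem_spanTuple (by simp)
    have hbT := add_mem hyT (Submodule.smul_mem _ b hdT)
    have htT : ∀ w ∈ t, w ∈ spanTuple S (y :: d :: t) := fun w hw => mem_spanTuple (by simp [hw])
    refine hQ.atPoint_sub_mem_relTupleBoundaries (le_spanTuple _ _) hT' hT
      (m.perpGenusGE_spanTuple_cons (ht.2 y (by simp)) (by simp only [List.length_cons]; lia))
      hdT hd hdT' hs ?_ ?_ κ carries hz
    · exact List.forall_mem_cons.2 ⟨add_mem hyT hdT, List.forall_mem_cons.2 ⟨hbT, htT⟩⟩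
    · exact List.forall_mem_cons.2 ⟨hyT, List.forall_mem_cons.2 ⟨hbT, htT⟩⟩
  · exact atPoint_sub_mem_relTupleBoundaries_of_deg_zero (le_spanTuple _ _) hdT'
      (M.perp_antitone hT' hd) hs κ carries hz.1

lemma IsAdmissible.atPoint_add_mem_tupleRelations (m : P.IsAdmissible S x N)
    (hP : P.RelVanishing q) (hQ : P.RadicalReduction q) (hF : ∃ b : F, b ≠ 0 ∧ b ≠ 1)
    (hd : d ∈ M.perp (S ⊔ F ∙ y))
    (ht : y :: (y + d) :: t ∈ tuples (orthoOrbit M S x) (k + 2)) (hN : q + k + 1 ≤ N)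
    (hT : spanTuple S (y :: d :: t) ≤ M.perp P.plane ∨ q = 0)
    (hz : z ∈ P.relCycles (spanTuple S (y :: d :: t)) q) :
    atPoint (y :: (y + d) :: t) z ∈ P.tupleRelations S x (k + 2) q := by
  have length_t : t.length = k := by simpa using ht.1
  by_cases hcrit : M.PerpGenusGE (spanTuple S (y :: d :: t)) (q + 1)
  · rw [← spanTuple_cons_add] at hcrit hT hz
    exact Submodule.mem_sup_left
      (hP.atPoint_mem_relTupleBoundaries m.le_perp ht le_rfl hT hcrit hz)
  obtain ⟨b, hb₀, hb₁⟩ := hF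
  have hy : y ∈ orthoOrbit M S x := ht.2 y (by simp)
  have hdy : d ∉ S ⊔ F ∙ y := fun h => by
    refine m.notMem_spanTuple (q := q + 1) hy (by lia) hcrit ?_
    rw [spanTuple_cons]
    exact le_spanTuple _ _ h
  have hyb := add_smul_mem_orthoOrbit hy (M.mem_perp_sup.1 hd).1 hdy hb₀
  have hyb_tuple : y :: (y + d) :: (y + b • d) :: t ∈ tuples (orthoOrbit M S x) (k + 3) := by
    refine ⟨by simp [length_t], fun w hw => ?_⟩
    have := ht.2 w
    grind
  have hc (R : Submodule F V) (hy : y ∈ R) (hyd : y + d ∈ R) : y + b • d ∈ R :=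
    add_mem hy (R.smul_mem b ((R.add_mem_iff_right hy).1 hyd))
  have span_le : spanTuple S (y :: (y + d) :: (y + b • d) :: t) ≤ spanTuple S (y :: d :: t) := by
    rw [← spanTuple_cons_add S y d t]
    refine spanTuple_le (le_spanTuple _ _) ?_
    have := hc (spanTuple S (y :: (y + d) :: t)) (mem_spanTuple (by simp)) (mem_spanTuple (by simp))
    grind [mem_spanTuple]
  have relation := m.four_term_mem_tupleRelations hP hyb_tuple (fun R _ => hc R) hN span_le hT hz
  have difference := m.atPoint_sub_mem_relTupleBoundaries hQ hb₀ hb₁ hyb_tuple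
    (m.mem_perp_spanTuple (q := q + 1) hy (by lia) hcrit hd) hN hcrit hT hz
  exact (Submodule.add_mem_iff_right _ (Submodule.mem_sup_left difference)).1 relation

lemma IsAdmissible.atPoint_mem_tupleRelations (m : P.IsAdmissible S x N)
    (hP : P.RelVanishing q) (hQ : P.RadicalReduction q) (hF : ∃ b : F, b ≠ 0 ∧ b ≠ 1)
    (ht : t ∈ tuples (orthoOrbit M S x) (k + 2)) (hN : q + k + 1 ≤ N)
    (hT : spanTuple S t ≤ M.perp P.plane ∨ q = 0) (hz : z ∈ P.relCycles (spanTuple S t) q) :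
    atPoint t z ∈ P.tupleRelations S x (k + 2) q := by
  obtain ⟨y₀, y₁, t, rfl⟩ : ∃ y₀ y₁ t', t = y₀ :: y₁ :: t' := by
    match t, ht.1 with
    | y₀ :: y₁ :: t', _ => exact ⟨y₀, y₁, t', rfl⟩
  have length_t : t.length = k := by simpa using ht.1
  have hy₀ : y₀ ∈ orthoOrbit M S x := ht.2 y₀ (by simp)
  have hy₁ : y₁ ∈ orthoOrbit M S x := ht.2 y₁ (by simp)
  rcases m.exists_or_perpGenusGE y₀ hy₀ y₁ hy₁ with ⟨d, hd, hdS⟩ | hgenus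
  · have hd_orbit : y₀ + d ∈ orthoOrbit M S x := by
      refine ⟨fun h => hy₁.1 ((S.sub_mem_iff_right h).1 hdS), ?_⟩
      rw [add_sub_right_comm]
      exact add_mem hy₀.2 (M.mem_perp_sup.1 hd).1
    have htd : y₀ :: y₁ :: (y₀ + d) :: t ∈ tuples (orthoOrbit M S x) (k + 3) := by
      refine ⟨by simp [length_t], fun w hw => ?_⟩
      have := ht.2 w
      grind
    refine m.atPoint_mem_tupleRelations_of_sub_mem hP hdS htd hN hT hz ?_
    have span_eq : spanTuple S (y₀ :: d :: t) = spanTuple S (y₀ :: y₁ :: t) := by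
      refine eq_of_forall_ge_iff fun R => ?_
      have mem_iff (hR : S ≤ R) (h : y₀ ∈ R) : d ∈ R ↔ y₁ ∈ R := by
        rw [← R.add_mem_iff_right h, ← R.sub_mem_iff_left (hR hdS), sub_sub_cancel]
      simp only [spanTuple_le_iff, List.forall_mem_cons]
      grind
    rw [← span_eq] at hT hz
    refine m.atPoint_add_mem_tupleRelations hP hQ hF hd
      ⟨by simp [length_t], fun w hw => ?_⟩ hN hT hz
    have := htd.2 w
    grind
  · refine Submodule.mem_sup_left
      (hP.atPoint_mem_relTupleBoundaries m.le_perp ht le_rfl hT ?_ hz)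
    rw [spanTuple_cons, spanTuple_cons]
    exact perpGenusGE_spanTuple t (hgenus.mono (by lia))

end CriticalTuples

end HyperbolicPair

end SymplecticForm

section Fibers

variable {Γ V : Type*}

open Classical in
/-- The part of a chain lying over the tuple `t`, moved to the empty tuple. -/
noncomputable def fiberAt (t : List V) : BarChain Γ (List V) →ₗ[ℤ] BarChain Γ (List V) :=
  Finsupp.linearCombination ℤ fun p => if p.2 = t then simplex p.1 [] else 0

lemma fiberAt_simplex_self (l : List Γ) (t : List V) : fiberAt t (simplex l t) = simplex l [] := by
  simp [fiberAt, simplex]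

lemma fiberAt_simplex_of_ne {s t : List V} (h : s ≠ t) (l : List Γ) :
    fiberAt t (simplex l s) = 0 := by
  simp [fiberAt, simplex, h]

lemma fiberAt_atPoint_self (t : List V) (z : BarChain Γ (List V)) :
    fiberAt t (atPoint t z) = atPoint [] z :=
  LinearMap.congr_fun (f := fiberAt t ∘ₗ atPoint (X := List V) t) (g := atPoint [])
    (hom_ext fun l x => by simp [fiberAt_simplex_self]) z

lemma fiberAt_atPoint_of_ne {s t : List V} (h : s ≠ t) (z : BarChain Γ (List V)) :
    fiberAt t (atPoint s z) = 0 :=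
  LinearMap.congr_fun (f := fiberAt t ∘ₗ atPoint (X := List V) s) (g := 0)
    (hom_ext fun l x => by simp [fiberAt_simplex_of_ne h]) z

lemma mem_of_forall_atPoint_fiberAt_mem {N : Submodule ℤ (BarChain Γ (List V))}
    {z : BarChain Γ (List V)} (h : ∀ t, atPoint t (fiberAt t z) ∈ N) : z ∈ N := by
  classical
  let T := z.support.image Prod.snd
  have hz : z ∈ Finsupp.supported ℤ ℤ {p : List Γ × List V | p.2 ∈ T} :=
    fun p hp => Finset.mem_image_of_mem _ hp
  have sum_fibers : (∑ t ∈ T, atPoint t ∘ₗ fiberAt t) z = z := by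
    refine map_eq_of_supported (g := LinearMap.id) (fun l x hx => ?_) hz
    rw [LinearMap.sum_apply, Finset.sum_eq_single_of_mem x hx fun t _ ht => by
      simp [fiberAt_simplex_of_ne ht.symm]]
    simp [fiberAt_simplex_self]
  rw [← sum_fibers, LinearMap.sum_apply]
  exact sum_mem fun t _ => h t

variable [Group Γ]

lemma fiberAt_mem_chainsOn (t : List V) {K : Subgroup Γ} {Y : Set (List V)}
    {z : BarChain Γ (List V)} (hz : z ∈ chainsOn K Y) : fiberAt t z ∈ chainsOn K {[]} := by
  refine map_mem_of_supported (fiberAt t) (fun l x hx => ?_) hz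
  by_cases h : x = t
  · rw [h, fiberAt_simplex_self]
    exact simplex_mem_chainsOn hx.1 rfl
  · rw [fiberAt_simplex_of_ne h]
    exact zero_mem _

variable [MulAction Γ V]

/-- The `q`-chains with group elements in `K` and points in `Y`, all of whose group elements fix
the point. -/
def isotropyChains (K : Subgroup Γ) (Y : Set (List V)) (q : ℕ) :
    Submodule ℤ (BarChain Γ (List V)) :=
  Finsupp.supported ℤ ℤ {p | p.1.length = q ∧ (∀ g ∈ p.1, g ∈ K ∧ g • p.2 = p.2) ∧ p.2 ∈ Y}

variable {K : Subgroup Γ} {Y Y' : Set (List V)} {q : ℕ} {z : BarChain Γ (List V)}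

lemma barD_fiberAt (t : List V) (hz : z ∈ isotropyChains K Y q) :
    barD (fiberAt t z) = fiberAt t (barD z) := by
  rw [← LinearMap.comp_apply, ← LinearMap.comp_apply]
  refine map_eq_of_supported (fun l x hx => ?_) hz
  have hl : ∀ g ∈ l, g • x = x := fun g hg => (hx.2.1 g hg).2
  have hl_on : simplex l ([] : List V) ∈ chainsOn (MulAction.stabilizer Γ x) {[]} :=
    simplex_mem_chainsOn hl rfl
  have barD_simplex_eq : barD (simplex l x) = atPoint x (barD (simplex l (X := List V) [])) := by
    rw [← barD_atPoint (X' := List V) (fun _ h => h) hl_on, mapPoint_simplex]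
  rw [LinearMap.comp_apply, LinearMap.comp_apply, barD_simplex_eq]
  by_cases h : x = t
  · rw [h, fiberAt_simplex_self, fiberAt_atPoint_self,
      atPoint_eq_self (barD_mem_chainsOn (isStable_nil _) hl_on)]
  · rw [fiberAt_simplex_of_ne h, fiberAt_atPoint_of_ne h, map_zero]

lemma fiberAt_eq_zero {t : List V} (ht : t ∉ Y) (hz : z ∈ isotropyChains K Y q) :
    fiberAt t z = 0 := by
  refine map_eq_zero_of_supported (fun l x hx => fiberAt_simplex_of_ne ?_ l) hz
  rintro rfl
  exact ht hx.2.2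

/-- When the gauge moves every point of an orbit to the same representative, it carries every
morphism of the action groupoid to an element of an isotropy group. -/
lemma gauge_mem_isotropyChains {c : List V → Γ} (hY : IsStable K Y) (hc : ∀ y ∈ Y, c y ∈ K)
    (hcc : ∀ g ∈ K, ∀ y ∈ Y, c (g • y) • g • y = c y • y) (hY' : ∀ y ∈ Y, c y • y ∈ Y')
    (hz : z ∈ chainsOfDeg K Y q) : gauge c z ∈ isotropyChains K Y' q := by
  refine map_mem_of_supported (gauge c) ?_ hz
  rintro l x ⟨hlq, hl, (hx : x ∈ Y)⟩
  rw [gauge_simplex]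
  refine simplex_mem_supported ⟨by rw [length_gaugeList]; exact hlq, fun g hg =>
    ⟨gaugeList_mem hY hc hl hx g hg, ?_⟩, hY' x hx⟩
  have representative_target (l : List Γ) (hl : ∀ g ∈ l, g ∈ K) :
      c (target l x) • target l x = c x • x := hcc _ (list_prod_mem hl) x hx
  clear hlq
  induction l with
  | nil => simp [gaugeList] at hg
  | cons h l ih =>
    obtain ⟨-, hl'⟩ := List.forall_mem_cons.1 hl
    rcases List.mem_cons.1 hg with rfl | hg
    · rw [← representative_target l hl', mul_smul, inv_smul_smul, mul_smul, ← target_cons,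
        representative_target _ hl, representative_target _ hl']
    · exact ih hl' hg

end Fibers

lemma exists_orbit_representative {Γ X : Type*} [Group Γ] [MulAction Γ X] (K : Subgroup Γ)
    (Y : Set X) : ∃ r : X → X, (∀ x, ∃ g ∈ K, g • x = r x) ∧ (∀ g ∈ K, ∀ x, r (g • x) = r x) ∧
      ∀ x, (∃ g ∈ K, g • x ∈ Y) → r x ∈ Y := by
  have exists_mk_eq (o : MulAction.orbitRel.Quotient K X) :
      ∃ y : X, ⟦y⟧ = o ∧ ((∃ x ∈ Y, ⟦x⟧ = o) → y ∈ Y) := by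
    by_cases h : ∃ x ∈ Y, ⟦x⟧ = o
    · exact h.imp fun x hx => ⟨hx.2, fun _ => hx.1⟩
    · exact o.exists_rep.imp fun x hx => ⟨hx, fun h' => absurd h' h⟩
  have mk_smul (g : Γ) (hg : g ∈ K) (x : X) :
      (⟦g • x⟧ : MulAction.orbitRel.Quotient K X) = ⟦x⟧ := Quotient.sound ⟨⟨g, hg⟩, rfl⟩
  choose r hr hrY using exists_mk_eq
  refine ⟨fun x => r ⟦x⟧, fun x => ?_, fun g hg x => by simp only [mk_smul g hg x], ?_⟩
  · obtain ⟨⟨g, hg⟩, hgx⟩ := Quotient.exact (hr ⟦x⟧)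
    exact ⟨g, hg, hgx⟩
  · rintro x ⟨g, hg, hgx⟩
    exact hrY _ ⟨g • x, hgx, mk_smul g hg x⟩

namespace SymplecticForm

namespace HyperbolicPair

section TupleVanishing

variable {F V : Type} [Field F] [AddCommGroup V] [Module F V] {M : SymplecticForm F V}

/-- The `q`-chains at `k`-tuples that are cycles for the face map of the tuples, and cycles relative
to the stabilizer of the hyperbolic plane, are relative boundaries of chains of the same kind. -/
def TupleVanishing (P : M.HyperbolicPair) (S : Submodule F V) (x : V) (k q : ℕ) : Prop :=
  ∀ z ∈ chainsOfDeg (M.fixing S) (tuples (orthoOrbit M S x) k) q, tupleD z = 0 →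
    barD z ∈ P.planeTupleChains S x →
      ∃ w ∈ chainsOfDeg (M.fixing S) (tuples (orthoOrbit M S x) k) (q + 1),
        tupleD w = 0 ∧ z - barD w ∈ P.planeTupleChains S x

variable {P : M.HyperbolicPair} {S : Submodule F V} {x : V} {N q k : ℕ} {t : List V}
  {z : BarChain M.isometryGroup (List V)} {c : List V → M.isometryGroup}

lemma planeTupleChains_le_planeChains : P.planeTupleChains S x ≤ P.planeChains :=
  chainsOn_mono (fixing_antitone le_sup_right) (Set.subset_univ _)

lemma mem_chainsOn_planeOrthoOrbit_of_barD_mem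
    (hz : z ∈ chainsOfDeg (M.fixing S) (tuples (orthoOrbit M S x) k) q)
    (hbz : barD z ∈ P.planeTupleChains S x) :
    barD z ∈ chainsOn (M.fixing (S ⊔ P.plane)) (tuples (P.planeOrthoOrbit S x) k) := by
  have hbz' := barD_mem_chainsOn ((isStable_orthoOrbit S x).tuples k) (chainsOfDeg_le_chainsOn hz)
  refine chainsOn_mono inf_le_left ?_ (chainsOn_inf_chainsOn ⟨hbz, hbz'⟩)
  exact fun t ht => ⟨ht.2.1, ht.1⟩

lemma sub_gauge_mem_relTupleBoundaries
    (hc : ∀ t ∈ tuples (orthoOrbit M S x) k, c t ∈ M.fixing S)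
    (hc' : ∀ t ∈ tuples (P.planeOrthoOrbit S x) k, c t ∈ M.fixing (S ⊔ P.plane))
    (hz : z ∈ chainsOfDeg (M.fixing S) (tuples (orthoOrbit M S x) k) q)
    (hbz : barD z ∈ P.planeTupleChains S x) :
    z - gauge c z ∈ P.relTupleBoundaries S x k q := by
  rw [← barD_gaugeHomotopy_add]
  refine Submodule.add_mem_sup (Submodule.mem_map_of_mem
    (gaugeHomotopy_mem_chainsOfDeg ((isStable_orthoOrbit S x).tuples k) hc hz)) ?_
  exact chainsOn_mono le_rfl tuples_subset_allTuples
    (gaugeHomotopy_mem_chainsOn ((isStable_planeOrthoOrbit S x).tuples k) hc'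
      (mem_chainsOn_planeOrthoOrbit_of_barD_mem hz hbz))

lemma barD_gauge_mem_planeTupleChains
    (hc' : ∀ t ∈ tuples (P.planeOrthoOrbit S x) k, c t ∈ M.fixing (S ⊔ P.plane))
    (hz : z ∈ chainsOfDeg (M.fixing S) (tuples (orthoOrbit M S x) k) q)
    (hbz : barD z ∈ P.planeTupleChains S x) : barD (gauge c z) ∈ P.planeTupleChains S x := by
  rw [barD_gauge]
  exact chainsOn_mono le_rfl tuples_subset_allTuples
    (gauge_mem_chainsOn ((isStable_planeOrthoOrbit S x).tuples k) hc'
      (mem_chainsOn_planeOrthoOrbit_of_barD_mem hz hbz))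

lemma fiberAt_mem_relCycles {Y : Set (List V)} (hz : z ∈ isotropyChains (M.fixing S) Y q)
    (hbz : barD z ∈ P.planeTupleChains S x) (t : List V) :
    fiberAt t z ∈ P.relCycles (spanTuple S t) q := by
  constructor
  · refine map_mem_of_supported (fiberAt t) (fun l s hs => ?_) hz
    by_cases h : s = t
    · subst h
      rw [fiberAt_simplex_self]
      exact simplex_mem_chainsOfDeg hs.1 (fun g hg => mem_fixing_spanTuple.2 (hs.2.1 g hg)) rfl
    · rw [fiberAt_simplex_of_ne h]
      exact zero_mem _
  · refine Submodule.mem_comap.2 ?_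
    rw [barD_fiberAt t hz]
    exact chainsOn_mono le_rfl (Set.subset_univ _)
      (fiberAt_mem_chainsOn t (planeTupleChains_le_planeChains hbz))

lemma exists_tupleD_eq (hx : x ∈ P.planeOrthoOrbit S x)
    (hvan : ∀ j, j + 1 = q → P.TupleVanishing S x (k + 1) j)
    (hz : z ∈ chainsOfDeg (M.fixing S) (tuples (orthoOrbit M S x) k) q) (hdz : tupleD z = 0)
    (hbz : barD z ∈ P.planeTupleChains S x) :
    ∃ u ∈ chainsOfDeg (M.fixing S) (tuples (orthoOrbit M S x) (k + 1)) q,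
      tupleD u = z ∧ barD u ∈ P.planeTupleChains S x := by
  have hcone := mapPoint_mem_chainsOfDeg (tuples_cons hx.1) hz
  have tupleD_cone : tupleD (consTuple x z) = z := by rw [tupleD_consTuple, hdz, map_zero, sub_zero]
  obtain _ | j := q
  · exact ⟨consTuple x z, hcone, tupleD_cone, by
      rw [barD_eq_zero_of_deg_zero hcone]; exact zero_mem _⟩
  have hst (k : ℕ) := (isStable_orthoOrbit (M := M) S x).tuples k
  have cone_barD_mem : consTuple x (barD z) ∈ P.planeTupleChains S x :=
    mapPoint_mem_chainsOn (allTuples_cons hx) hbz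
  obtain ⟨w, hw, hdw, hbw⟩ := hvan j rfl (barD (consTuple x z) - consTuple x (barD z))
    (sub_mem (barD_mem_chainsOfDeg (hst _) hcone)
      (mapPoint_mem_chainsOfDeg (tuples_cons hx.1) (barD_mem_chainsOfDeg (hst _) hz)))
    (by rw [map_sub, tupleD_barD, tupleD_cone, tupleD_consTuple, tupleD_barD, hdz, map_zero,
      map_zero, sub_zero, sub_self])
    (by
      rw [map_sub, barD_barD, zero_sub]
      exact neg_mem (barD_mem_chainsOn (isStable_planeOrthoOrbit S x).allTuples cone_barD_mem))
  refine ⟨consTuple x z - w, sub_mem hcone hw, by rw [map_sub, tupleD_cone, hdw, sub_zero], ?_⟩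
  rw [map_sub, ← sub_add_cancel (barD (consTuple x z) - barD w) (consTuple x (barD z)),
    sub_right_comm]
  exact add_mem hbw cone_barD_mem

lemma IsAdmissible.mem_planeOrthoOrbit (m : P.IsAdmissible S x N) : x ∈ P.planeOrthoOrbit S x :=
  ⟨⟨m.notMem, by simp⟩, m.mem_perp⟩

variable [FiniteDimensional F V]

lemma exists_gauge_orbit_representative (hS : S ≤ M.perp P.plane) (x : V) :
    ∃ c : List V → M.isometryGroup, (∀ t, c t ∈ M.fixing S) ∧
      (∀ g ∈ M.fixing S, ∀ t, c (g • t) • g • t = c t • t) ∧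
      (∀ t ∈ allTuples (P.planeOrthoOrbit S x), c t ∈ M.fixing (S ⊔ P.plane)) ∧
      ∀ t, (∃ g ∈ M.fixing S, g • t ∈ allTuples (P.planeOrthoOrbit S x)) →
        c t • t ∈ allTuples (P.planeOrthoOrbit S x) := by
  obtain ⟨r, hr, hr_smul, hr_mem⟩ :=
    exists_orbit_representative (M.fixing S) (allTuples (P.planeOrthoOrbit S x))
  have exists_carrier (t : List V) : ∃ g ∈ M.fixing S, g • t = r t ∧
      (t ∈ allTuples (P.planeOrthoOrbit S x) → g ∈ M.fixing (S ⊔ P.plane)) := by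
    obtain ⟨g, hg, hgt⟩ := hr t
    by_cases ht : t ∈ allTuples (P.planeOrthoOrbit S x)
    · have hrt := hr_mem t ⟨1, one_mem _, by rwa [one_smul]⟩
      obtain ⟨h, hh, hht⟩ := exists_mem_fixing_sup_plane_smul_eq hS (fun y hy => (ht y hy).2)
        (fun y hy => (hrt y (hgt ▸ hy)).2) hg
      exact ⟨h, fixing_antitone le_sup_left hh, hht.trans hgt, fun _ => hh⟩
    · exact ⟨g, hg, hgt, fun h => absurd h ht⟩
  choose c hc hct hc' using exists_carrier
  refine ⟨c, hc, fun g hg t => ?_, hc', fun t ht => ?_⟩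
  · rw [hct, hct, hr_smul g hg]
  · rw [hct]
    exact hr_mem t ht

/-- Gauging by orbit representatives decomposes a chain into chains on the stabilizers of single
tuples, to which the local relations apply. -/
lemma IsAdmissible.mem_tupleRelations (m : P.IsAdmissible S x N)
    (hP : P.RelVanishing q) (hQ : P.RadicalReduction q) (hF : ∃ b : F, b ≠ 0 ∧ b ≠ 1)
    (hN : q + k + 1 ≤ N)
    (hz : z ∈ chainsOfDeg (M.fixing S) (tuples (orthoOrbit M S x) (k + 2)) q)
    (hbz : barD z ∈ P.planeTupleChains S x) : z ∈ P.tupleRelations S x (k + 2) q := by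
  obtain ⟨c, hc, hc_smul, hc_plane, hc_mem⟩ := exists_gauge_orbit_representative m.le_perp x
  have hst := (isStable_orthoOrbit (M := M) S x).tuples (k + 2)
  have hc_plane' : ∀ t ∈ tuples (P.planeOrthoOrbit S x) (k + 2), c t ∈ M.fixing (S ⊔ P.plane) :=
    fun t ht => hc_plane t ht.2
  rw [← sub_add_cancel z (gauge c z)]
  refine add_mem (Submodule.mem_sup_left
    (sub_gauge_mem_relTupleBoundaries (fun t _ => hc t) hc_plane' hz hbz)) ?_
  let Y : Set (List V) := {t | t ∈ tuples (orthoOrbit M S x) (k + 2) ∧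
    ((∃ g ∈ M.fixing S, g • t ∈ allTuples (P.planeOrthoOrbit S x)) →
      t ∈ allTuples (P.planeOrthoOrbit S x))}
  have gauge_mem : gauge c z ∈ isotropyChains (M.fixing S) Y q := by
    refine gauge_mem_isotropyChains hst (fun t _ => hc t) (fun g hg t _ => hc_smul g hg t)
      (fun t ht => ⟨hst _ (hc t) _ ht, ?_⟩) hz
    rintro ⟨g, hg, hgt⟩
    exact hc_mem t ⟨g * c t, mul_mem hg (hc t), by rwa [mul_smul]⟩
  refine mem_of_forall_atPoint_fiberAt_mem fun t => ?_
  by_cases ht : t ∈ Y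
  swap
  · rw [fiberAt_eq_zero ht gauge_mem, map_zero]
    exact zero_mem _
  refine m.atPoint_mem_tupleRelations hP hQ hF ht.1 hN ?_
    (fiberAt_mem_relCycles gauge_mem (barD_gauge_mem_planeTupleChains hc_plane' hz hbz) t)
  refine (Nat.eq_zero_or_pos q).symm.imp_left fun hq => spanTuple_le m.le_perp ?_
  have hgenus : M.PerpGenusGE (spanTuple S t) 1 := by
    match t, ht.1 with
    | y :: t, ht => exact m.perpGenusGE_spanTuple_cons (ht.2 y (by simp)) (by grind [tuples])
  obtain ⟨g, hg, hgt⟩ := exists_smul_mem_perp_plane m.le_perp hgenus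
  exact fun y hy => (ht.2 ⟨g, hg, fun y hy => ⟨(hst g hg _ ht.1).2 y hy, hgt y hy⟩⟩ y hy).2

lemma IsAdmissible.tupleVanishing_of_forall (m : P.IsAdmissible S x N)
    (hP : P.RelVanishing q) (hQ : P.RadicalReduction q) (hF : ∃ b : F, b ≠ 0 ∧ b ≠ 1)
    (hN : q + k + 1 ≤ N) (hvan : ∀ j, j + 1 = q → P.TupleVanishing S x (k + 2) j) :
    P.TupleVanishing S x (k + 1) q := by
  intro z hz hdz hbz
  obtain ⟨u, hu, rfl, hbu⟩ := exists_tupleD_eq m.mem_planeOrthoOrbit hvan hz hdz hbz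
  obtain ⟨_, ha, _, ⟨y, -, rfl⟩, rfl⟩ :=
    Submodule.mem_sup.1 (m.mem_tupleRelations hP hQ hF hN hu hbu)
  obtain ⟨_, ⟨v, hv, rfl⟩, b, hb, rfl⟩ := Submodule.mem_sup.1 ha
  refine ⟨tupleD v, tupleD_mem_chainsOfDeg hv, tupleD_tupleD v, ?_⟩
  rw [map_add, map_add, tupleD_tupleD, tupleD_barD, add_zero, add_sub_cancel_left]
  exact tupleD_mem_chainsOn hb

lemma IsAdmissible.tupleVanishing (m : P.IsAdmissible S x N) (hF : ∃ b : F, b ≠ 0 ∧ b ≠ 1)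
    (hPQ : ∀ j ≤ q, P.RelVanishing j ∧ P.RadicalReduction j) (hN : q + k + 1 ≤ N) :
    P.TupleVanishing S x (k + 1) q := by
  induction q generalizing k with
  | zero => exact m.tupleVanishing_of_forall (hPQ 0 le_rfl).1 (hPQ 0 le_rfl).2 hF hN (by simp)
  | succ q ih =>
    refine m.tupleVanishing_of_forall (hPQ _ le_rfl).1 (hPQ _ le_rfl).2 hF hN fun j hj => ?_
    obtain rfl : j = q := by lia
    exact ih (fun i hi => hPQ i (by lia)) (by lia)

lemma IsAdmissible.exists_gauge_singleton (m : P.IsAdmissible S x N) :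
    ∃ c : List V → M.isometryGroup,
      (∀ t ∈ tuples (orthoOrbit M S x) 1, c t ∈ M.fixing S ∧ c t • t = [x]) ∧
      ∀ t ∈ tuples (P.planeOrthoOrbit S x) 1, c t ∈ M.fixing (S ⊔ P.plane) := by
  have exists_carrier (t : List V) : ∃ g : M.isometryGroup,
      (t ∈ tuples (orthoOrbit M S x) 1 → g ∈ M.fixing S ∧ g • t = [x]) ∧
      (t ∈ tuples (P.planeOrthoOrbit S x) 1 → g ∈ M.fixing (S ⊔ P.plane)) := by
    by_cases ht : t ∈ tuples (orthoOrbit M S x) 1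
    swap
    · exact ⟨1, fun h => absurd h ht, fun _ => one_mem _⟩
    obtain ⟨y, rfl⟩ := List.length_eq_one_iff.1 ht.1
    obtain ⟨hyS, hyx⟩ : y ∈ orthoOrbit M S x := ht.2 y (by simp)
    have hxy : x - y ∈ M.perp S := by rwa [← neg_sub, Submodule.neg_mem_iff]
    by_cases hy : y ∈ M.perp P.plane
    · obtain ⟨g, hg, hgy⟩ := exists_mem_fixing_smul_eq (notMem_sup_plane m.le_perp hy hyS)
        (notMem_sup_plane m.le_perp m.mem_perp m.notMem)
        (M.mem_perp_sup.2 ⟨hxy, sub_mem m.mem_perp hy⟩)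
      exact ⟨g, fun _ => ⟨fixing_antitone le_sup_left hg, by simp [hgy]⟩, fun _ => hg⟩
    · obtain ⟨g, hg, hgy⟩ := exists_mem_fixing_smul_eq hyS m.notMem hxy
      exact ⟨g, fun _ => ⟨hg, by simp [hgy]⟩, fun h => absurd (h.2 y (by simp)).2 hy⟩
  choose c hc hc' using exists_carrier
  exact ⟨c, hc, hc'⟩

omit [FiniteDimensional F V] in
lemma tupleD_mem_fixingChains_of_singleton (hz : z ∈ isotropyChains (M.fixing S) {[x]} q) :
    tupleD z ∈ fixingChains M (S ⊔ F ∙ x) q := by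
  have atPoint_nil_mem : atPoint [] z ∈ fixingChains M (S ⊔ F ∙ x) q := by
    refine map_mem_of_supported (atPoint []) ?_ hz
    rintro l _ ⟨hlq, hl, rfl⟩
    rw [mapPoint_simplex]
    refine simplex_mem_chainsOfDeg hlq (fun g hg => mem_fixing_sup_span.2 ?_) rfl
    exact ⟨(hl g hg).1, by simpa using (hl g hg).2⟩
  have eq_atPoint : atPoint [x] (atPoint ([] : List V) z) = z := by
    rw [mapPoint_mapPoint]
    refine map_eq_of_supported (f := atPoint [x]) (g := LinearMap.id) ?_ hz
    rintro l _ ⟨-, -, rfl⟩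
    simp
  rw [← eq_atPoint, tupleD_atPoint_singleton x (chainsOfDeg_le_chainsOn atPoint_nil_mem)]
  exact atPoint_nil_mem

lemma IsAdmissible.relCycles_le (m : P.IsAdmissible S x (q + 1)) (hF : ∃ b : F, b ≠ 0 ∧ b ≠ 1)
    (hPQ : ∀ j ≤ q, P.RelVanishing j ∧ P.RadicalReduction j) :
    P.relCycles S (q + 1) ≤ fixingChains M (S ⊔ F ∙ x) (q + 1) ⊔ P.relBoundaries S (q + 1) := by
  rintro z ⟨hz, hbz⟩
  have hz_nil : z ∈ chainsOfDeg (M.fixing S) (tuples (orthoOrbit M S x) 0) (q + 1) := by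
    rwa [tuples_zero]
  have hbz_plane : barD z ∈ P.planeTupleChains S x :=
    chainsOn_mono le_rfl (Set.singleton_subset_iff.2 nil_mem_allTuples)
      (mem_chainsOn_fixing_sup
        (barD_mem_chainsOn (isStable_nil _) (chainsOfDeg_le_chainsOn hz)) hbz)
  obtain ⟨u, hu, rfl, hbu⟩ := exists_tupleD_eq m.mem_planeOrthoOrbit
    (fun j hj => m.tupleVanishing hF (fun i hi => hPQ i (by lia)) (by lia)) hz_nil
    (tupleD_eq_zero_of_nil (chainsOfDeg_le_chainsOn hz)) hbz_plane
  obtain ⟨c, hc, hc_plane⟩ := m.exists_gauge_singleton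
  have hst := (isStable_orthoOrbit (M := M) S x).tuples 1
  have gauge_mem : gauge c u ∈ isotropyChains (M.fixing S) {[x]} (q + 1) := by
    refine gauge_mem_isotropyChains hst (fun t ht => (hc t ht).1) (fun g hg t ht => ?_)
      (fun t ht => (hc t ht).2) hu
    rw [(hc _ (hst g hg t ht)).2, (hc t ht).2]
  obtain ⟨_, ⟨v, hv, rfl⟩, b, hb, hvb⟩ := Submodule.mem_sup.1
    (sub_gauge_mem_relTupleBoundaries (fun t ht => (hc t ht).1) hc_plane hu hbu)
  have decomposition : tupleD u = tupleD (gauge c u) + (barD (tupleD v) + tupleD b) := by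
    rw [← tupleD_barD, ← map_add, ← map_add, hvb, add_sub_cancel]
  rw [decomposition]
  refine Submodule.add_mem_sup (tupleD_mem_fixingChains_of_singleton gauge_mem)
    (Submodule.add_mem_sup (Submodule.mem_map_of_mem ?_)
      (planeTupleChains_le_planeChains (tupleD_mem_chainsOn hb)))
  rw [fixingChains, ← tuples_zero]
  exact tupleD_mem_chainsOfDeg hv

end TupleVanishing

end HyperbolicPair

end SymplecticForm

section Conjugation

variable {Γ X : Type*} [Group Γ] [MulAction Γ X] {K L : Subgroup Γ} {Y : Set X} {q : ℕ} {g : Γ}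
  {z : BarChain Γ X}

lemma gauge_const_mul (g h : Γ) (z : BarChain Γ X) :
    gauge (fun _ => g * h) z = gauge (fun _ => g) (gauge (fun _ => h) z) :=
  LinearMap.congr_fun (f := gauge fun _ => g * h) (g := gauge (fun _ => g) ∘ₗ gauge fun _ => h)
    (hom_ext fun l x => by simp [gaugeList_const, mul_smul, Function.comp_def, mul_assoc]) z

lemma gauge_const_mem_chainsOfDeg (hY : IsStable K Y) (hg : g ∈ K) (hz : z ∈ chainsOfDeg K Y q) :
    gauge (fun _ => g) z ∈ chainsOfDeg K Y q := by
  refine map_mem_of_supported (gauge fun _ => g) ?_ hz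
  rintro l x ⟨hlq, hl, hx⟩
  rw [gauge_simplex]
  exact simplex_mem_chainsOfDeg ((length_gaugeList _ l x).trans hlq)
    (gaugeList_mem hY (fun _ _ => hg) hl hx) (hY g hg x hx)

lemma gauge_const_eq_self (hg : g ∈ Subgroup.centralizer (L : Set Γ)) (hY : ∀ y ∈ Y, g • y = y)
    (hz : z ∈ chainsOn L Y) : gauge (fun _ => g) z = z := by
  refine map_eq_of_supported (f := gauge fun _ => g) (g := LinearMap.id) ?_ hz
  rintro l x ⟨hl, hx⟩
  have comm (h : Γ) (hh : h ∈ l) : Commute g h := (hg h (hl h hh)).symm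
  rw [gauge_simplex, gaugeList_const_of_commute comm, hY x hx, LinearMap.id_apply]

lemma barD_sub_gauge_const (hg : g ∈ Subgroup.centralizer (L : Set Γ)) (hY : ∀ y ∈ Y, g • y = y)
    (hbz : barD z ∈ chainsOn L Y) : barD (z - gauge (fun _ => g) z) = 0 := by
  rw [map_sub, barD_gauge, gauge_const_eq_self hg hY hbz, sub_self]

lemma sub_gauge_const_mem_of_barD_eq_zero (hY : IsStable K Y) (hg : g ∈ K)
    (hz : z ∈ chainsOfDeg K Y q) (hbz : barD z = 0) :
    z - gauge (fun _ => g) z ∈ (chainsOfDeg K Y (q + 1)).map barD := by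
  rw [← barD_gaugeHomotopy_add, hbz, map_zero, add_zero]
  exact Submodule.mem_map_of_mem (gaugeHomotopy_mem_chainsOfDeg hY (fun _ _ => hg) hz)

/-- The obstruction to `g` acting trivially by conjugation on the class of a chain `z`. On the
isometries that centralize the boundary of `z` it is a homomorphism to an abelian group. -/
noncomputable def conjugationClass (hY : ∀ g ∈ K, ∀ y ∈ Y, g • y = y)
    (hz : z ∈ chainsOfDeg K Y q) (hbz : barD z ∈ chainsOn L Y) :
    ↥(K ⊓ Subgroup.centralizer (L : Set Γ)) →*
      Multiplicative (BarChain Γ X ⧸ (chainsOfDeg K Y (q + 1)).map barD) where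
  toFun g := .ofAdd (Submodule.Quotient.mk (z - gauge (fun _ => (g : Γ)) z))
  map_one' := by
    have gauge_one : gauge (fun _ => (1 : Γ)) z = z :=
      gauge_const_eq_self (L := ⊤) (one_mem _) (fun y _ => one_smul Γ y)
        (chainsOn_mono le_top le_rfl (chainsOfDeg_le_chainsOn hz))
    simp [gauge_one]
  map_mul' := by
    rintro ⟨g, hgK, hgL⟩ ⟨h, hhK, hhL⟩
    have hst : IsStable K Y := fun k hk y hy => by rwa [hY k hk y hy]
    have boundary_mem := sub_gauge_const_mem_of_barD_eq_zero hst hgK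
      (sub_mem hz (gauge_const_mem_chainsOfDeg hst hhK hz))
      (barD_sub_gauge_const hhL (hY h hhK) hbz)
    rw [← ofAdd_add, ← Submodule.Quotient.mk_add]
    refine congrArg Multiplicative.ofAdd ((Submodule.Quotient.eq _).2 ?_)
    convert neg_mem boundary_mem using 1
    simp only [Subgroup.coe_mul, gauge_const_mul, map_sub]
    abel

lemma sub_gauge_const_mem_of_mem_commutator (hY : ∀ g ∈ K, ∀ y ∈ Y, g • y = y)
    (hz : z ∈ chainsOfDeg K Y q) (hbz : barD z ∈ chainsOn L Y)
    (hg : g ∈ ⁅K ⊓ Subgroup.centralizer (L : Set Γ), K ⊓ Subgroup.centralizer (L : Set Γ)⁆) :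
    z - gauge (fun _ => g) z ∈ (chainsOfDeg K Y (q + 1)).map barD := by
  rw [← Subgroup.map_subtype_commutator] at hg
  obtain ⟨g, hg, rfl⟩ := hg
  have := Abelianization.commutator_subset_ker (conjugationClass hY hz hbz) hg
  exact (Submodule.Quotient.mk_eq_zero _).1 (congrArg Multiplicative.toAdd this)

end Conjugation

namespace SymplecticForm

namespace HyperbolicPair

variable {F V : Type} [Field F] [AddCommGroup V] [Module F V] [FiniteDimensional F V]
  {M : SymplecticForm F V} {P Q : M.HyperbolicPair} {S T : Submodule F V} {q : ℕ}

section Swap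

variable (M) in
/-- The isometries that fix `S` and commute with all isometries fixing `T`. -/
def centralFixing (S T : Submodule F V) : Subgroup M.isometryGroup :=
  M.fixing S ⊓ Subgroup.centralizer (M.fixing T : Set M.isometryGroup)

lemma scaling_mem_centralFixing (hQS : Q.plane ≤ M.perp S) (hQT : Q.plane ≤ T) (κ : Fˣ) :
    Q.scaling κ ∈ centralFixing M S T := by
  refine ⟨mem_fixing.2 fun v hv => scaling_smul_of_form_eq_zero κ
    (form_eq_zero' (hQS e_mem_plane) hv) (form_eq_zero hv (hQS f_mem_plane)), fun g hg => ?_⟩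
  exact commute_scaling κ (smul_eq_of_mem_fixing hg (hQT e_mem_plane))
    (smul_eq_of_mem_fixing hg (hQT f_mem_plane))

lemma eichler_mem_centralFixing {a b : V} (hab : M.form a b = 0) (haS : a ∈ M.perp S)
    (hbS : b ∈ M.perp S) (haT : a ∈ T) (hbT : b ∈ T) (c : F) :
    M.eichler a b hab c ∈ centralFixing M S T := by
  refine ⟨mem_fixing.2 fun v hv => eichler_smul_of_form_eq_zero hab c
    (form_eq_zero hv haS) (form_eq_zero hv hbS), fun g hg => ?_⟩
  exact commute_eichler hab c (smul_eq_of_mem_fixing hg haT) (smul_eq_of_mem_fixing hg hbT)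

open scoped commutatorElement in
lemma eichler_mem_commutator_centralFixing (hF : ∃ κ : F, κ ≠ 0 ∧ κ ≠ 1)
    (hQS : Q.plane ≤ M.perp S) (hQT : Q.plane ≤ T) {b : V} (hbS : b ∈ M.perp S) (hbT : b ∈ T)
    (hb : b ∈ M.perp Q.plane) (c : F) :
    M.eichler Q.e b (mem_perp_plane.1 hb).1 c
      ∈ ⁅centralFixing M S T, centralFixing M S T⁆ := by
  obtain ⟨κ, hκ0, hκ1⟩ := hF
  obtain ⟨heb, hfb⟩ := mem_perp_plane.1 hb
  have commutator_eq : M.eichler Q.e b heb c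
      = ⁅Q.scaling (Units.mk0 κ hκ0), M.eichler Q.e b heb ((κ - 1)⁻¹ * c)⁆ := by
    have := scaling_mul_eichler heb (M.form_eq_zero_comm.1 hfb) (Units.mk0 κ hκ0) ((κ - 1)⁻¹ * c)
    rw [Units.val_mk0, mul_inv_cancel_left₀ (sub_ne_zero.2 hκ1)] at this
    rw [commutatorElement_def, this]
    group
  rw [commutator_eq]
  exact Subgroup.commutator_mem_commutator (scaling_mem_centralFixing hQS hQT _)
    (eichler_mem_centralFixing heb (hQS e_mem_plane) hbS (hQT e_mem_plane) hbT _)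

/-- The swap is a product of three Eichler transformations, like the Weyl element of `SL₂` is a
product of three elementary matrices. -/
lemma exists_mem_commutator_centralFixing_map_eq (hF : ∃ κ : F, κ ≠ 0 ∧ κ ≠ 1)
    (hPQ : Q.plane ≤ M.perp P.plane) (hPS : P.plane ≤ M.perp S) (hQS : Q.plane ≤ M.perp S)
    (hPT : P.plane ≤ T) (hQT : Q.plane ≤ T) :
    ∃ s ∈ ⁅centralFixing M S T, centralFixing M S T⁆, Q.map s = P := by
  have hQP := M.le_perp_comm.1 hPQ
  have hE (c : F) := eichler_mem_commutator_centralFixing hF hPS hPT (hQS f_mem_plane)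
    (hQT f_mem_plane) (hPQ f_mem_plane) c
  have hE' (c : F) := eichler_mem_commutator_centralFixing hF hQS hQT (hPS f_mem_plane)
    (hPT f_mem_plane) (hQP f_mem_plane) c
  obtain ⟨hee, -⟩ := mem_perp_plane.1 (hPQ e_mem_plane)
  obtain ⟨hef, hff⟩ := mem_perp_plane.1 (hPQ f_mem_plane)
  obtain ⟨hee', hfe'⟩ := mem_perp_plane.1 (hQP e_mem_plane)
  obtain ⟨hef', hff'⟩ := mem_perp_plane.1 (hQP f_mem_plane)
  refine ⟨_, mul_mem (mul_mem (hE 1) (hE' (-1))) (hE 1), HyperbolicPair.ext ?_ ?_⟩ <;>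
    simp [map, mul_smul, eichler_smul, *]

omit [FiniteDimensional F V] in
lemma gauge_const_mem_planeChains {g : M.isometryGroup} (hg : Q.map g = P)
    {z : BarChain M.isometryGroup (List V)} (hz : z ∈ Q.planeChains) :
    gauge (fun _ => g) z ∈ P.planeChains := by
  refine map_mem_of_supported (gauge fun _ => g) ?_ hz
  rintro l x ⟨hl, -⟩
  rw [gauge_simplex, gaugeList_const]
  refine simplex_mem_chainsOn (fun k hk => ?_) trivial
  obtain ⟨h, hh, rfl⟩ := List.mem_map.1 hk
  obtain ⟨he, hf⟩ := mem_fixing_plane.1 (hl h hh)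
  subst hg
  simp [mem_fixing_plane, map, mul_smul, he, hf]

/-- Conjugating by the swap of the two planes moves the cycle into the stabilizer of the plane
of `P`. -/
lemma relCycles_sup_plane_le (hF : ∃ κ : F, κ ≠ 0 ∧ κ ≠ 1) (hPQ : Q.plane ≤ M.perp P.plane)
    (hPS : P.plane ≤ M.perp S) (hQS : Q.plane ≤ M.perp S) :
    P.relCycles (S ⊔ Q.plane) q ≤ P.relBoundaries S q := by
  rintro z ⟨hz, hbz⟩
  have barD_mem : barD z ∈ chainsOn (M.fixing (S ⊔ Q.plane ⊔ P.plane)) {[]} :=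
    mem_chainsOn_fixing_sup (barD_mem_chainsOn (isStable_nil _) (chainsOfDeg_le_chainsOn hz)) hbz
  obtain ⟨s, hs, hQs⟩ := exists_mem_commutator_centralFixing_map_eq (T := S ⊔ Q.plane ⊔ P.plane) hF
    hPQ hPS hQS le_sup_right (le_sup_right.trans le_sup_left)
  rw [← sub_add_cancel z (gauge (fun _ => s) z)]
  refine Submodule.add_mem_sup (sub_gauge_const_mem_of_mem_commutator (by simp)
    (fixingChains_antitone le_sup_left hz) barD_mem hs) (gauge_const_mem_planeChains hQs ?_)
  exact chainsOn_mono (fixing_antitone le_sup_right) (Set.subset_univ _)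
    (chainsOfDeg_le_chainsOn hz)

end Swap

section Induction

lemma isAdmissible_of_radical (hS : S ≤ M.perp P.plane) (hgenus : M.PerpGenusGE S q) {ε f : V}
    (hε : ε ∈ S) (hε' : ε ∈ M.perp S) (hf : f ∈ M.perp P.plane) (hεf : M.form ε f = 1) :
    P.IsAdmissible S f q := by
  have form_ε (y : V) (hy : y ∈ orthoOrbit M S f) : M.form ε y = 1 := by
    rw [← hεf, ← sub_eq_zero, ← map_sub]
    exact form_eq_zero hε hy.2
  refine ⟨hS, hf, fun hfS => ?_, fun y hy => ?_, fun y₀ hy₀ y₁ hy₁ =>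
    Or.inl ⟨y₁ - y₀ + M.form y₀ y₁ • ε, M.mem_perp_sup_span.2 ⟨?_, ?_⟩, ?_⟩⟩
  · simp [form_eq_zero' hε' hfS] at hεf
  · exact hgenus.sup_span_of_radical hε hε' (by simp [form_ε y hy])
  · refine add_mem ?_ (Submodule.smul_mem _ _ hε')
    simpa using sub_mem hy₁.2 hy₀.2
  · simp [M.form_swap y₀ ε, form_ε y₀ hy₀]
  · rw [← add_assoc, add_sub_cancel, add_sub_cancel_left]
    exact Submodule.smul_mem _ _ hε

lemma isAdmissible_e (hS : S ≤ M.perp P.plane) (hgenus : M.PerpGenusGE S (q + 1))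
    (hPQ : Q.plane ≤ M.perp P.plane) (hQS : Q.plane ≤ M.perp S) : P.IsAdmissible S Q.e q := by
  have mem_perp (y : V) (hy : y ∈ orthoOrbit M S Q.e) : y ∈ M.perp S :=
    (Submodule.sub_mem_iff_left _ (hQS e_mem_plane)).1 hy.2
  refine ⟨hS, hPQ e_mem_plane, e_notMem hQS, fun y _ => hgenus.sup_span y, fun y₀ hy₀ y₁ hy₁ => ?_⟩
  by_cases h : M.form y₀ y₁ = 0
  · refine Or.inl ⟨y₁ - y₀, M.mem_perp_sup_span.2
      ⟨sub_mem (mem_perp y₁ hy₁) (mem_perp y₀ hy₀), by simp [h]⟩, by simp⟩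
  · exact Or.inr ((hgenus.sup_span y₀).sup_span_of_radical (mem_sup_span_self S y₀)
      (M.mem_perp_sup_span.2 ⟨mem_perp y₀ hy₀, form_self M y₀⟩) h)

lemma exists_hyperbolicPair_plane_le_perp (hS : S ≤ M.perp P.plane) (h : M.PerpGenusGE S 2) :
    ∃ Q : M.HyperbolicPair, Q.plane ≤ M.perp P.plane ∧ Q.plane ≤ M.perp S := by
  have hPS := M.le_perp_comm.1 hS
  have hgenus : M.PerpGenusGE (S ⊔ F ∙ P.e ⊔ F ∙ P.f) 1 :=
    (h.sup_span P.e).sup_span_of_radical (mem_sup_span_self S P.e)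
      (M.mem_perp_sup_span.2 ⟨hPS e_mem_plane, form_self M P.e⟩) (by simp)
  obtain ⟨Q, he, hf⟩ := hgenus.exists_hyperbolicPair
  simp only [mem_perp_sup_span] at he hf
  exact ⟨Q, plane_le.2 ⟨mem_perp_plane.2 ⟨he.1.2, he.2⟩, mem_perp_plane.2 ⟨hf.1.2, hf.2⟩⟩,
    plane_le.2 ⟨he.1.1, hf.1.1⟩⟩

omit [FiniteDimensional F V] in
lemma relCycles_le_relCycles_sup_relBoundaries
    (h : P.relCycles S q ≤ fixingChains M T q ⊔ P.relBoundaries S q) :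
    P.relCycles S q ≤ P.relCycles T q ⊔ P.relBoundaries S q := by
  intro z hz
  obtain ⟨z₁, hz₁, b, hb, rfl⟩ := Submodule.mem_sup.1 (h hz)
  exact Submodule.add_mem_sup
    ⟨hz₁, (Submodule.add_mem_iff_left _ (relBoundaries_le_comap_barD hb)).1 hz.2⟩ hb

lemma radicalReduction_succ (hF : ∃ κ : F, κ ≠ 0 ∧ κ ≠ 1)
    (h : ∀ j ≤ q, P.RelVanishing j ∧ P.RadicalReduction j) : P.RadicalReduction (q + 1) :=
  fun _ hS hgenus _ hε hε' _ hf hεf =>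
    (isAdmissible_of_radical hS hgenus hε hε' hf hεf).relCycles_le hF h

lemma relVanishing_succ (hF : ∃ κ : F, κ ≠ 0 ∧ κ ≠ 1)
    (h : ∀ j ≤ q, P.RelVanishing j ∧ P.RadicalReduction j) (hQ : P.RadicalReduction (q + 1)) :
    P.RelVanishing (q + 1) := by
  intro S hS hgenus
  obtain ⟨Q, hPQ, hQS⟩ := exists_hyperbolicPair_plane_le_perp hS (hgenus.mono (by lia))
  have reduce_e := relCycles_le_relCycles_sup_relBoundaries
    ((isAdmissible_e hS hgenus hPQ hQS).relCycles_le hF h)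
  have hSe : S ⊔ F ∙ Q.e ≤ M.perp P.plane := by
    simpa using ⟨hS, hPQ e_mem_plane⟩
  have reduce_f := relCycles_le_relCycles_sup_relBoundaries
    (hQ (S ⊔ F ∙ Q.e) hSe (hgenus.sup_span Q.e) Q.e (mem_sup_span_self S Q.e)
      (M.mem_perp_sup_span.2 ⟨hQS e_mem_plane, form_self M Q.e⟩) Q.f (hPQ f_mem_plane) Q.form_e_f)
  have sup_plane_le : S ⊔ Q.plane ≤ S ⊔ F ∙ Q.e ⊔ F ∙ Q.f :=
    sup_le (le_sup_left.trans le_sup_left) (plane_le.2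
      ⟨Submodule.mem_sup_left (mem_sup_span_self S Q.e), mem_sup_span_self _ Q.f⟩)
  calc P.relCycles S (q + 1)
      ≤ P.relCycles (S ⊔ F ∙ Q.e) (q + 1) ⊔ P.relBoundaries S (q + 1) := reduce_e
    _ ≤ P.relCycles (S ⊔ F ∙ Q.e ⊔ F ∙ Q.f) (q + 1) ⊔ P.relBoundaries (S ⊔ F ∙ Q.e) (q + 1)
          ⊔ P.relBoundaries S (q + 1) := sup_le_sup_right reduce_f _
    _ ≤ P.relBoundaries S (q + 1) := sup_le (sup_le
      ((relCycles_antitone sup_plane_le).trans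
        (relCycles_sup_plane_le hF hPQ (M.le_perp_comm.1 hS) hQS))
      (relBoundaries_antitone le_sup_left)) le_rfl

lemma relVanishing_and_radicalReduction (P : M.HyperbolicPair) (hF : ∃ κ : F, κ ≠ 0 ∧ κ ≠ 1)
    (q : ℕ) : P.RelVanishing q ∧ P.RadicalReduction q := by
  induction q using Nat.strong_induction_on with
  | _ q ih =>
    obtain _ | q := q
    · exact ⟨relVanishing_zero, radicalReduction_zero⟩
    · have h (j : ℕ) (hj : j ≤ q) := ih j (Nat.lt_succ_of_le hj)
      have hQ := radicalReduction_succ hF h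
      exact ⟨relVanishing_succ hF h hQ, hQ⟩

end Induction

end HyperbolicPair

end SymplecticForm

open GroupHomologyBar

section Comparison

lemma ofFn_contractNth_zero {α : Type*} (op : α → α → α) {n : ℕ} (g : Fin (n + 2) → α) :
    List.ofFn (Fin.contractNth 0 op g) = op (g 0) (g 1) :: List.ofFn (Fin.tail (Fin.tail g)) := by
  rw [List.ofFn_succ]
  congr 1

lemma ofFn_contractNth_succ {α : Type*} (op : α → α → α) {n : ℕ} (j : Fin (n + 1))
    (g : Fin (n + 2) → α) :
    List.ofFn (Fin.contractNth j.succ op g)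
      = g 0 :: List.ofFn (Fin.contractNth j op (Fin.tail g)) := by
  rw [List.ofFn_succ]
  congr 2
  funext k
  simp [Fin.contractNth, Fin.tail]

variable {Γ X : Type} {o : X} {q : ℕ}

/-- Views the inhomogeneous chains of the group `Γ` as chains on the simplices starting at `o`. -/
noncomputable def toBarChain (o : X) (q : ℕ) : chains Γ ℤ q →ₗ[ℤ] BarChain Γ X :=
  Finsupp.lmapDomain ℤ ℤ fun v => (List.ofFn v, o)

@[simp] lemma toBarChain_single (v : Fin q → Γ) :
    toBarChain o q (Finsupp.single v 1) = simplex (List.ofFn v) o := by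
  simp [toBarChain]

lemma toBarChain_injective : Function.Injective (toBarChain (Γ := Γ) o q) :=
  Finsupp.mapDomain_injective fun _ _ h => List.ofFn_injective (Prod.ext_iff.1 h).1

variable [Group Γ]

lemma map_toBarChain_supported (K : Subgroup Γ) :
    (Finsupp.supported ℤ ℤ {v : Fin q → Γ | ∀ i, v i ∈ K}).map (toBarChain o q)
      = chainsOfDeg K {o} q := by
  rw [toBarChain, Finsupp.lmapDomain_supported, chainsOfDeg]
  congr 1
  ext ⟨l, x⟩
  constructor
  · rintro ⟨v, hv, h⟩
    obtain ⟨rfl, rfl⟩ := Prod.ext_iff.1 h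
    exact ⟨List.length_ofFn, by simpa [List.mem_ofFn] using hv, rfl⟩
  · rintro ⟨rfl, hl, rfl⟩
    exact ⟨l.get, fun i => hl _ (List.get_mem l i), by simp⟩

lemma range_toBarChain : LinearMap.range (toBarChain (Γ := Γ) o q) = chainsOfDeg ⊤ {o} q := by
  simp [← map_toBarChain_supported]

variable [MulAction Γ X]

lemma tailFaces_ofFn (ho : ∀ g : Γ, g • o = o) (g : Fin (q + 1) → Γ) :
    tailFaces (g 0) (List.ofFn (Fin.tail g)) o
      = ∑ j : Fin (q + 1),
          (-1 : ℤ) ^ (j : ℕ) • simplex (List.ofFn (Fin.contractNth j (· * ·) g)) o := by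
  induction q with
  | zero => simp [tailFaces, ho]
  | succ q ih =>
    have tail_succ : (fun i : Fin q => Fin.tail g i.succ) = Fin.tail (Fin.tail g) := rfl
    have tail_zero : Fin.tail g 0 = g 1 := rfl
    rw [List.ofFn_succ, tailFaces, Fin.sum_univ_succ, tail_succ, ih, ofFn_contractNth_zero,
      tail_zero, map_sum, sub_eq_add_neg, ← Finset.sum_neg_distrib]
    simp only [ofFn_contractNth_succ, map_smul, prepend_simplex, Fin.val_succ, pow_succ,
      Fin.val_zero, pow_zero, one_smul, mul_neg, mul_one, neg_smul]

lemma barD_toBarChain (ho : ∀ g : Γ, g • o = o) (x : chains Γ ℤ (q + 1)) :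
    barD (toBarChain o (q + 1) x) = toBarChain o q (d Γ ℤ q x) := by
  refine LinearMap.congr_fun (f := barD ∘ₗ toBarChain o (q + 1)) (g := toBarChain o q ∘ₗ d Γ ℤ q)
    (Finsupp.lhom_ext' fun v => LinearMap.ext_ring ?_) x
  have tail_eq : (fun i : Fin q => v i.succ) = Fin.tail v := rfl
  simp only [LinearMap.comp_apply, Finsupp.lsingle_apply, toBarChain_single, barD_simplex,
    d_single, map_add, map_sum, map_smul]
  rw [List.ofFn_succ, boundary, tail_eq, tailFaces_ofFn ho, sub_eq_add_neg,
    ← Finset.sum_neg_distrib]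
  simp only [pow_succ, mul_neg, mul_one, neg_smul]

lemma barD_toBarChain_eq_zero (ho : ∀ g : Γ, g • o = o) {x : chains Γ ℤ q}
    (hx : x ∈ cycles Γ ℤ q) : barD (toBarChain o q x) = 0 := by
  cases q with
  | zero => exact barD_eq_zero_of_deg_zero (range_toBarChain.le ⟨x, rfl⟩)
  | succ q => rw [barD_toBarChain ho, show d Γ ℤ q x = 0 from hx, map_zero]

end Comparison

section InducedMap

variable {G Γ : Type} [Group G] [Group Γ] {φ : G →* Γ} {q : ℕ}

lemma d_d (x : chains Γ ℤ (q + 2)) : d Γ ℤ q (d Γ ℤ (q + 1) x) = 0 := by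
  have trivial_action (g : Γ) : g • PUnit.unit.{1} = PUnit.unit := rfl
  apply toBarChain_injective (o := PUnit.unit.{1})
  rw [← barD_toBarChain trivial_action, ← barD_toBarChain trivial_action, barD_barD, map_zero]

lemma d_chainsMap_apply (φ : G →* Γ) (x : chains G ℤ (q + 1)) :
    d Γ ℤ q (chainsMap ℤ φ (q + 1) x) = chainsMap ℤ φ q (d G ℤ q x) :=
  LinearMap.congr_fun (d_chainsMap ℤ φ q) x

lemma chainsMap_injective (hφ : Function.Injective φ) : Function.Injective (chainsMap ℤ φ q) :=
  Finsupp.mapDomain_injective hφ.comp_left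

lemma range_chainsMap (φ : G →* Γ) :
    LinearMap.range (chainsMap ℤ φ q) = Finsupp.supported ℤ ℤ {v | ∀ i, v i ∈ φ.range} := by
  have range_comp : Set.range (fun v : Fin q → G => φ ∘ v) = {v | ∀ i, v i ∈ φ.range} := by
    ext v
    simp only [Set.mem_range, Set.mem_ofPred_eq, MonoidHom.mem_range, funext_iff,
      Function.comp_apply, Classical.skolem]
  rw [LinearMap.range_eq_map, ← Finsupp.supported_univ, chainsMap, Finsupp.lmapDomain_supported,
    Set.image_univ, range_comp]

lemma mem_cycles_of_chainsMap (hφ : Function.Injective φ) {y : chains G ℤ q}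
    (hy : chainsMap ℤ φ q y ∈ cycles Γ ℤ q) : y ∈ cycles G ℤ q := by
  cases q with
  | zero => trivial
  | succ q =>
    have hy : d Γ ℤ q (chainsMap ℤ φ (q + 1) y) = 0 := hy
    rw [d_chainsMap_apply] at hy
    exact (map_eq_zero_iff _ (chainsMap_injective hφ)).1 hy

lemma d_mem_cycles (w : chains Γ ℤ (q + 1)) : d Γ ℤ q w ∈ cycles Γ ℤ q := by
  cases q with
  | zero => trivial
  | succ q => exact d_d w

lemma inducedMap_surjective (hφ : Function.Injective φ)
    (h : cycles Γ ℤ q ≤ LinearMap.range (d Γ ℤ q) ⊔ LinearMap.range (chainsMap ℤ φ q)) :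
    Function.Surjective (inducedMap ℤ φ q) := by
  intro a
  obtain ⟨⟨x, hx⟩, rfl⟩ := Submodule.Quotient.mk_surjective _ a
  obtain ⟨_, ⟨w, rfl⟩, _, ⟨y, rfl⟩, rfl⟩ := Submodule.mem_sup.1 (h hx)
  have hy : y ∈ cycles G ℤ q :=
    mem_cycles_of_chainsMap hφ (((cycles Γ ℤ q).add_mem_iff_right (d_mem_cycles w)).1 hx)
  refine ⟨Submodule.Quotient.mk ⟨y, hy⟩, (Submodule.Quotient.eq _).2 ⟨-w, ?_⟩⟩
  change d Γ ℤ q (-w) = chainsMap ℤ φ q y - (d Γ ℤ q w + chainsMap ℤ φ q y)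
  rw [map_neg, sub_add_cancel_right]

lemma inducedMap_injective (hφ : Function.Injective φ)
    (h : (LinearMap.range (chainsMap ℤ φ q)).comap (d Γ ℤ q)
      ≤ LinearMap.range (d Γ ℤ (q + 1)) ⊔ LinearMap.range (chainsMap ℤ φ (q + 1))) :
    Function.Injective (inducedMap ℤ φ q) := by
  rw [injective_iff_map_eq_zero]
  intro a ha
  obtain ⟨x, rfl⟩ := Submodule.Quotient.mk_surjective _ a
  obtain ⟨u, hu⟩ := (Submodule.Quotient.mk_eq_zero _).1 ha
  change d Γ ℤ q u = chainsMap ℤ φ q x at hu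
  obtain ⟨_, ⟨w, rfl⟩, _, ⟨y, rfl⟩, rfl⟩ := Submodule.mem_sup.1 (h ⟨x, hu.symm⟩)
  rw [map_add, d_d, zero_add, d_chainsMap_apply] at hu
  exact (Submodule.Quotient.mk_eq_zero _).2 ⟨y, chainsMap_injective hφ hu⟩

end InducedMap

namespace SymplecticForm

variable {F V : Type} [Field F] [AddCommGroup V] [Module F V] {M : SymplecticForm F V}

lemma fixing_bot : M.fixing ⊥ = ⊤ := by
  ext g
  simp [mem_fixing]

namespace HyperbolicPair

variable {P : M.HyperbolicPair} {G : Type} [Group G] {φ : G →* M.isometryGroup} {q : ℕ}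

lemma toBarChain_mem_planeChains (hφ : φ.range = M.fixing P.plane) {x : chains M.isometryGroup ℤ q}
    (hx : x ∈ LinearMap.range (chainsMap ℤ φ q)) :
    toBarChain ([] : List V) q x ∈ P.planeChains := by
  rw [range_chainsMap, hφ] at hx
  exact chainsOn_mono le_rfl (Set.subset_univ _)
    (chainsOfDeg_le_chainsOn ((map_toBarChain_supported _).le ⟨x, hx, rfl⟩))

lemma mem_range_chainsMap (hφ : φ.range = M.fixing P.plane) {x : chains M.isometryGroup ℤ q}
    (hx : toBarChain ([] : List V) q x ∈ P.planeChains) :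
    x ∈ LinearMap.range (chainsMap ℤ φ q) := by
  have hx' : toBarChain ([] : List V) q x ∈ chainsOfDeg (M.fixing P.plane) {[]} q := fun p hp =>
    ⟨(range_toBarChain.le ⟨x, rfl⟩ hp).1, (hx hp).1, (range_toBarChain.le ⟨x, rfl⟩ hp).2.2⟩
  rw [← hφ, ← map_toBarChain_supported, ← range_chainsMap] at hx'
  obtain ⟨y, hy, hyx⟩ := hx'
  rwa [← toBarChain_injective hyx]

variable [FiniteDimensional F V]

lemma mem_range_d_sup_range_chainsMap (hF : ∃ κ : F, κ ≠ 0 ∧ κ ≠ 1)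
    (hφ : φ.range = M.fixing P.plane) (hq : 2 * (q + 1) ≤ Module.finrank F V)
    {x : chains M.isometryGroup ℤ q} (hx : barD (toBarChain ([] : List V) q x) ∈ P.planeChains) :
    x ∈ LinearMap.range (d M.isometryGroup ℤ q) ⊔ LinearMap.range (chainsMap ℤ φ q) := by
  have fixingChains_bot (j : ℕ) :
      fixingChains M ⊥ j = LinearMap.range (toBarChain ([] : List V) j) := by
    rw [range_toBarChain, ← fixing_bot]
    rfl
  have x_mem : toBarChain [] q x ∈ P.relBoundaries ⊥ q :=
    (P.relVanishing_and_radicalReduction hF q).1 ⊥ bot_le (M.perpGenusGE_bot hq)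
      ⟨(fixingChains_bot q).ge ⟨x, rfl⟩, hx⟩
  obtain ⟨_, w_mem, hw⟩ := mem_relBoundaries.1 x_mem
  obtain ⟨w, rfl⟩ := (fixingChains_bot (q + 1)).le w_mem
  rw [barD_toBarChain fun _ => rfl, ← map_sub] at hw
  rw [← add_sub_cancel (d M.isometryGroup ℤ q w) x]
  exact Submodule.add_mem_sup ⟨w, rfl⟩ (mem_range_chainsMap hφ hw)

lemma inducedMap_surjective (hF : ∃ κ : F, κ ≠ 0 ∧ κ ≠ 1) (hφ : Function.Injective φ)
    (hφ' : φ.range = M.fixing P.plane) (hq : 2 * (q + 1) ≤ Module.finrank F V) :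
    Function.Surjective (inducedMap ℤ φ q) :=
  SymplecticStability.inducedMap_surjective hφ fun x hx =>
    mem_range_d_sup_range_chainsMap hF hφ' hq <| by
      rw [barD_toBarChain_eq_zero (fun _ => rfl) hx]
      exact P.planeChains.zero_mem

lemma inducedMap_injective (hF : ∃ κ : F, κ ≠ 0 ∧ κ ≠ 1) (hφ : Function.Injective φ)
    (hφ' : φ.range = M.fixing P.plane) (hq : 2 * (q + 2) ≤ Module.finrank F V) :
    Function.Injective (inducedMap ℤ φ q) :=
  SymplecticStability.inducedMap_injective hφ fun x hx =>
    mem_range_d_sup_range_chainsMap hF hφ' hq <| by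
      rw [barD_toBarChain fun _ => rfl]
      exact toBarChain_mem_planeChains hφ' hx

end HyperbolicPair

end SymplecticForm

section Stabilization

variable {F W : Type} [Field F] [AddCommGroup W] [Module F W] {β : W → W → F} {n : ℕ}

lemma lastSplit_symm_zero_left (w : W) :
    (lastSplit F n).symm ((0 : Fin n → W), w) = Pi.single (Fin.last n) w := by
  rw [LinearEquiv.symm_apply_eq]
  refine Prod.ext (funext fun i => ?_) ?_
  · exact (Pi.single_eq_of_ne (M := fun _ => W) (Fin.castSucc_lt_last i).ne w).symm
  · exact (Pi.single_eq_same (M := fun _ => W) (Fin.last n) w).symm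

omit [Module F W] in
lemma pairForm_single_right (hβ : ∀ u, β u 0 = 0) (x : Fin n → W) (i : Fin n) (w : W) :
    pairForm F β n x (Pi.single i w) = β (x i) w := by
  rw [pairForm, Finset.sum_eq_single_of_mem i (Finset.mem_univ i)]
  · rw [Pi.single_eq_same]
  · intro j _ hj
    rw [Pi.single_eq_of_ne hj, hβ]

lemma stabAut_injective : Function.Injective (stabAut F n : ((Fin n → W) ≃ₗ[F] _) → _) := by
  intro g h hgh
  refine LinearEquiv.ext fun p => ?_
  have := LinearEquiv.congr_fun hgh ((lastSplit F n).symm (p, 0))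
  rw [stabAut_symm_apply, stabAut_symm_apply] at this
  exact (Prod.ext_iff.1 ((lastSplit F n).symm.injective this)).1

lemma bilinStab_injective : Function.Injective (bilinStab F β n) := fun _ _ h =>
  Subtype.ext (stabAut_injective (congrArg Subtype.val h))

lemma exists_prodCongr_refl_eq {U : Type*} [AddCommGroup U] [Module F U]
    (g : (U × W) ≃ₗ[F] U × W) (hsnd : ∀ x, (g x).2 = x.2) (hinr : ∀ w, g (0, w) = (0, w)) :
    ∃ h : U ≃ₗ[F] U, h.prodCongr (LinearEquiv.refl F W) = g := by
  let A : U →ₗ[F] U := LinearMap.fst F U W ∘ₗ g.toLinearMap ∘ₗ LinearMap.inl F U W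
  have g_inl (u : U) : g (u, 0) = (A u, 0) := Prod.ext rfl (hsnd _)
  have A_injective : Function.Injective A := by
    rw [injective_iff_map_eq_zero]
    intro u hu
    have : g (u, 0) = 0 := by rw [g_inl, hu, Prod.mk_zero_zero]
    exact (Prod.ext_iff.1 ((map_eq_zero_iff g g.injective).1 this)).1
  have A_surjective : Function.Surjective A := fun u => by
    obtain ⟨⟨u', w⟩, h⟩ := g.surjective (u, 0)
    obtain rfl : w = 0 := by simpa [h] using (hsnd (u', w)).symm
    exact ⟨u', congrArg Prod.fst h⟩
  refine ⟨LinearEquiv.ofBijective A ⟨A_injective, A_surjective⟩, LinearEquiv.ext fun ⟨u, w⟩ => ?_⟩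
  calc (A u, w) = (A u, 0) + (0, w) := by simp
    _ = g (u, 0) + g (0, w) := by rw [g_inl, hinr]
    _ = g (u, w) := by rw [← map_add]; simp

lemma exists_stabAut_eq {g : (Fin (n + 1) → W) ≃ₗ[F] (Fin (n + 1) → W)}
    (hlast : ∀ v, g v (Fin.last n) = v (Fin.last n))
    (hsingle : ∀ w, g (Pi.single (Fin.last n) w) = Pi.single (Fin.last n) w) :
    ∃ h, stabAut F n h = g := by
  obtain ⟨h, hh⟩ := exists_prodCongr_refl_eq
    ((lastSplit F n).symm.trans (g.trans (lastSplit F n)))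
    (fun x => (hlast _).trans (congrArg Prod.snd ((lastSplit F n).apply_symm_apply x)))
    (fun w => by
      simp only [LinearEquiv.trans_apply, lastSplit_symm_zero_left, hsingle]
      rw [← lastSplit_symm_zero_left (F := F), LinearEquiv.apply_symm_apply])
  refine ⟨h, LinearEquiv.ext fun v => ?_⟩
  simp [stabAut, hh]

/-- Nondegeneracy of the pairing forces an isometry fixing the last summand to preserve the last
coordinate. -/
lemma mem_range_bilinStab (hβ : Function.Injective β) (hβ' : ∀ u, β u 0 = 0)
    {g : bilinIsoms F (pairForm F β (n + 1))} :
    g ∈ (bilinStab F β n).range ↔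
      ∀ w, g.1 (Pi.single (Fin.last n) w) = Pi.single (Fin.last n) w := by
  constructor
  · rintro ⟨h, rfl⟩ w
    rw [← lastSplit_symm_zero_left (F := F)]
    exact (stabAut_symm_apply F n h.1 0 w).trans (by rw [map_zero])
  · intro hg
    have hlast (v : Fin (n + 1) → W) : g.1 v (Fin.last n) = v (Fin.last n) :=
      hβ <| funext fun w => by
        simpa only [hg, pairForm_single_right hβ'] using g.2 v (Pi.single (Fin.last n) w)
    obtain ⟨h, hh⟩ := exists_stabAut_eq hlast hg
    have h_mem : h ∈ bilinIsoms F (pairForm F β n) := fun p p' => by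
      have := g.2 ((lastSplit F n).symm (p, 0)) ((lastSplit F n).symm (p', 0))
      rwa [← hh, stabAut_symm_apply, stabAut_symm_apply, pairForm_snoc, pairForm_snoc,
        add_left_inj] at this
    exact ⟨⟨h, h_mem⟩, Subtype.ext hh⟩

end Stabilization

namespace SymplecticForm

section Power

variable {F W : Type} [Field F] [AddCommGroup W] [Module F W] {M : SymplecticForm F W} {n : ℕ}

variable (M n) in
/-- The form of the orthogonal sum of `n` copies of a symplectic space. -/
def powerForm : LinearMap.BilinForm F (Fin n → W) :=
  LinearMap.mk₂ F (pairForm F (fun v w => M.form v w) n)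
    (by simp [pairForm, Finset.sum_add_distrib]) (by simp [pairForm, Finset.mul_sum])
    (by simp [pairForm, Finset.sum_add_distrib]) (by simp [pairForm, Finset.mul_sum])

lemma powerForm_apply (x y : Fin n → W) : M.powerForm n x y = ∑ i, M.form (x i) (y i) := rfl

@[simp] lemma powerForm_single_right (x : Fin n → W) (i : Fin n) (w : W) :
    M.powerForm n x (Pi.single i w) = M.form (x i) w :=
  pairForm_single_right (fun u => map_zero (M.form u)) x i w

lemma isAlt_powerForm : (M.powerForm n).IsAlt := fun x => by
  simp [powerForm_apply]

lemma form_injective : Function.Injective fun v w => M.form v w := fun u v h => by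
  have := M.nondegenerate.1 (u - v) fun w => by simpa [sub_eq_zero] using congrFun h w
  exact sub_eq_zero.1 this

lemma nondegenerate_powerForm : (M.powerForm n).Nondegenerate :=
  (LinearMap.IsRefl.nondegenerate_iff_separatingLeft fun x y => isAlt_powerForm.isRefl x y).2
    fun x hx => funext fun i =>
    M.nondegenerate.1 (x i) fun w => by rw [← powerForm_single_right, hx]

variable (M n) in
/-- The orthogonal sum of `n` copies of a symplectic space. -/
def power : SymplecticForm F (Fin n → W) where
  form := M.powerForm n
  isAlt := isAlt_powerForm
  nondegenerate := nondegenerate_powerForm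

variable (M n) in
/-- The stabilization homomorphism `bilinStab` between the isometry groups of orthogonal powers. -/
def stabilization : (M.power n).isometryGroup →* (M.power (n + 1)).isometryGroup :=
  bilinStab F (fun v w => M.form v w) n

lemma stabilization_injective : Function.Injective (M.stabilization n) := bilinStab_injective

lemma mem_range_stabilization {g : (M.power (n + 1)).isometryGroup} :
    g ∈ (M.stabilization n).range ↔
      ∀ w : W, g • (Pi.single (Fin.last n) w : Fin (n + 1) → W) = Pi.single (Fin.last n) w :=
  mem_range_bilinStab form_injective fun u => map_zero (M.form u)

/-- A hyperbolic pair, placed in the `i`-th summand. -/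
def HyperbolicPair.single (P : M.HyperbolicPair) (i : Fin n) : (M.power n).HyperbolicPair :=
  ⟨Pi.single i P.e, Pi.single i P.f, by simp [power]⟩

lemma HyperbolicPair.plane_single (P : M.HyperbolicPair) (i : Fin n) :
    (P.single i).plane = P.plane.map (LinearMap.single F (fun _ => W) i) := by
  simp [plane, single, Submodule.map_span, Set.image_pair]

lemma range_stabilization {P : M.HyperbolicPair} (hP : P.plane = ⊤) :
    (M.stabilization n).range
      = (M.power (n + 1)).fixing (P.single (Fin.last n)).plane := by
  ext g
  rw [mem_range_stabilization]
  simp [P.plane_single, hP, mem_fixing]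

end Power

section HyperbolicPlane

variable (F : Type) [Field F]

/-- The hyperbolic plane `F²` with the alternating pairing `sympPair`. -/
def hyperbolicPlane : SymplecticForm F (F × F) where
  form := LinearMap.mk₂ F (sympPair F)
    (fun _ _ _ => by simp only [sympPair, Prod.fst_add, Prod.snd_add]; ring)
    (fun _ _ _ => by simp only [sympPair, Prod.smul_fst, Prod.smul_snd, smul_eq_mul]; ring)
    (fun _ _ _ => by simp only [sympPair, Prod.fst_add, Prod.snd_add]; ring)
    (fun _ _ _ => by simp only [sympPair, Prod.smul_fst, Prod.smul_snd, smul_eq_mul]; ring)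
  isAlt v := sub_eq_zero.2 (mul_comm v.1 v.2)
  nondegenerate := by
    constructor <;> intro v hv
    all_goals exact
      Prod.ext (by simpa [sympPair] using hv (0, 1)) (by simpa [sympPair] using hv (1, 0))

/-- The standard basis of the hyperbolic plane. -/
def standardPair : (hyperbolicPlane F).HyperbolicPair :=
  ⟨(1, 0), (0, 1), by simp [hyperbolicPlane, sympPair]⟩

lemma plane_standardPair : (standardPair F).plane = ⊤ :=
  Submodule.eq_top_iff'.2 fun w =>
    Submodule.mem_span_pair.2 ⟨w.1, w.2, by simp [standardPair]⟩

end HyperbolicPlane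

end SymplecticForm

end SymplecticStability

open SymplecticStability SymplecticForm

open GroupHomologyBar in
/-- Homological stability for the symplectic groups over a field other than `𝔽₂`.
Here `Sp_{2n}(F)` is realized as the group `bilinIsoms F (pairForm F (sympPair F) n)` of
linear automorphisms of `F^{2n} = (F²)ⁿ` preserving the nondegenerate alternating form
`ω(v, w) = ∑ᵢ (vᵢ w_{n+i} - v_{n+i} wᵢ)`, where the `i`-th copy of `F²` carries the pair
of coordinates `(vᵢ, v_{n+i})`.  The stabilization map `Sp_{2n}(F) → Sp_{2n+2}(F)`,
extending an automorphism by the identity on an added hyperbolic plane, induces an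
isomorphism on integral group homology `H_d` for `d ≤ n - 1` and a surjection for `d = n`. -/
theorem Sp_homology_stability (F : Type) [Field F] (hF : ∃ x : F, x ≠ 0 ∧ x ≠ 1)
    (n : ℕ) (hn : 1 ≤ n) :
    (∀ d : ℕ, d ≤ n - 1 →
      Function.Bijective (inducedMap ℤ (bilinStab F (sympPair F) n) d)) ∧
    Function.Surjective (inducedMap ℤ (bilinStab F (sympPair F) n) n) := by
  let M := hyperbolicPlane F
  have range_eq : (M.stabilization n).range = _ := range_stabilization (plane_standardPair F)
  have finrank_eq : Module.finrank F (Fin (n + 1) → F × F) = 2 * (n + 1) := by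
    simp [Module.finrank_pi_fintype, mul_comm]
  have surjective (d : ℕ) (hd : d ≤ n) : Function.Surjective (inducedMap ℤ (M.stabilization n) d) :=
    HyperbolicPair.inducedMap_surjective hF stabilization_injective range_eq (by lia)
  have injective (d : ℕ) (hd : d ≤ n - 1) :
      Function.Injective (inducedMap ℤ (M.stabilization n) d) :=
    HyperbolicPair.inducedMap_injective hF stabilization_injective range_eq (by lia)
  exact ⟨fun d hd => ⟨injective d hd, surjective d (by lia)⟩, surjective n le_rfl⟩
end

section
/- Let F be a field and let Q be a nondegenerate quadratic form on a k-dimensional F-vector space V. (1) If there exists a ∈ F with a² = −1, then Q ⊕ Q is equivalent to the hyperbolic quadratic form q_H^k on F^{2k}. (2) If there exist a, b ∈ F with a² + b² = −1, then Q^{⊕4} (the orthogonal sum of four copies of Q, on V⁴) is equivalent to the hyperbolic quadratic form q_H^{2k} on F^{4k}. -/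
/-- The hyperbolic quadratic form `q_H^n` on `F^{2n}`, `v ↦ ∑_{i=1}^n vᵢ v_{n+i}`. -/
def hypQ (F : Type) [Field F] (n : ℕ) (v : Fin (2 * n) → F) : F :=
  ∑ i : Fin n, v ⟨i.1, by have := i.isLt; omega⟩ * v ⟨n + i.1, by have := i.isLt; omega⟩

/-!
If `Q` is the diagonal of a bilinear form `B`, then `Q x - Q y = B x (x - y) + B (x - y) y`, so
`(x, y) ↦ (B x + B.flip y, x - y)` carries `Q ⊕ -Q` to the evaluation form on `M* × M`. As `B` need
not be symmetric, this works in every characteristic, and the map is invertible as soon as the polar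
form `B + B.flip` is. It remains to see that `Q`, respectively `Q ⊕ Q`, is equivalent to its own
negative: scale by `a` if `a ^ 2 = -1`, and apply the matrix `!![a, b; b, -a]` if
`a ^ 2 + b ^ 2 = -1`, since `Q (a x + b y) + Q (b x - a y) = (a ^ 2 + b ^ 2) (Q x + Q y)`.
-/

open QuadraticMap (polar polar_comm polar_prod)

section Semiring

variable {R M N : Type*} [CommSemiring R] [AddCommMonoid M] [Module R M] [AddCommMonoid N]
  [Module R N]

theorem pi_fin_four_equivalent_prod (Q : QuadraticMap R M N) :
    (QuadraticMap.pi fun _ : Fin 4 => Q).Equivalent ((Q.prod Q).prod (Q.prod Q)) := by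
  let e : (Fin 4 → M) ≃ₗ[R] (M × M) × (M × M) :=
    { toFun x := ((x 0, x 1), (x 2, x 3))
      invFun y := ![y.1.1, y.1.2, y.2.1, y.2.2]
      map_add' _ _ := rfl
      map_smul' _ _ := rfl
      left_inv x := by ext i; fin_cases i <;> rfl
      right_inv _ := rfl }
  refine ⟨⟨e, fun x => ?_⟩⟩
  simp [e, Fin.sum_univ_four, add_assoc]

/-- The quadratic form `v ↦ ∑ i < n, v i * v (n + i)` on `R ^ (2 * n)`: this is `hypQ` bundled as a
`QuadraticForm`, over an arbitrary commutative semiring. -/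
def hyperbolicForm (R : Type*) [CommSemiring R] (n : ℕ) : QuadraticForm R (Fin (2 * n) → R) :=
  ∑ i : Fin n, QuadraticMap.linMulLin
    (LinearMap.proj (Fin.cast (two_mul n).symm (Fin.castAdd n i)))
    (LinearMap.proj (Fin.cast (two_mul n).symm (Fin.natAdd n i)))

theorem hyperbolicForm_apply {n : ℕ} (v : Fin (2 * n) → R) :
    hyperbolicForm R n v = ∑ i : Fin n, v (Fin.cast (two_mul n).symm (Fin.castAdd n i)) *
      v (Fin.cast (two_mul n).symm (Fin.natAdd n i)) := by
  simp [hyperbolicForm]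

/-- The concatenation of two bases of length `n`, as a basis of the product indexed by
`Fin (2 * n)` to match the coordinates of `hyperbolicForm`. -/
noncomputable def finProdBasis {n : ℕ} (b : Module.Basis (Fin n) R M)
    (c : Module.Basis (Fin n) R N) : Module.Basis (Fin (2 * n)) R (M × N) :=
  (b.prod c).reindex (finSumFinEquiv.trans (finCongr (two_mul n).symm))

theorem finProdBasis_equivFun_castAdd {n : ℕ} (b : Module.Basis (Fin n) R M)
    (c : Module.Basis (Fin n) R N) (x : M × N) (i : Fin n) :
    (finProdBasis b c).equivFun x (Fin.cast (two_mul n).symm (Fin.castAdd n i)) =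
      b.repr x.1 i := by
  rw [finProdBasis, Module.Basis.equivFun_apply, Module.Basis.repr_reindex_apply]
  simp

theorem finProdBasis_equivFun_natAdd {n : ℕ} (b : Module.Basis (Fin n) R M)
    (c : Module.Basis (Fin n) R N) (x : M × N) (i : Fin n) :
    (finProdBasis b c).equivFun x (Fin.cast (two_mul n).symm (Fin.natAdd n i)) =
      c.repr x.2 i := by
  rw [finProdBasis, Module.Basis.equivFun_apply, Module.Basis.repr_reindex_apply]
  simp [-Fin.natAdd_eq_addNat]

theorem dualProd_equivalent_hyperbolicForm {n : ℕ} (b : Module.Basis (Fin n) R M) :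
    (QuadraticForm.dualProd R M).Equivalent (hyperbolicForm R n) := by
  refine ⟨⟨(finProdBasis b.dualBasis b).equivFun, fun ⟨f, x⟩ => ?_⟩⟩
  calc hyperbolicForm R n ((finProdBasis b.dualBasis b).equivFun (f, x))
      = ∑ i, f (b i) * b.repr x i := by
        simp only [hyperbolicForm_apply, finProdBasis_equivFun_castAdd,
          finProdBasis_equivFun_natAdd, Module.Basis.dualBasis_repr]
    _ = f (∑ i, b.repr x i • b i) := by
        simp only [map_sum, map_smul, smul_eq_mul, mul_comm]
    _ = f x := by rw [b.sum_repr]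

end Semiring

section Ring

variable {R M N : Type*} [CommRing R] [AddCommGroup M] [Module R M] [AddCommGroup N] [Module R N]

theorem equivalent_neg_of_map_eq_neg (Q : QuadraticMap R M N) (J : M →ₗ[R] M)
    (hJ : J ∘ₗ J = -LinearMap.id) (hQ : ∀ x, Q (J x) = -Q x) : Q.Equivalent (-Q) := by
  refine ⟨⟨LinearEquiv.ofLinearMap J (-J) ?_ ?_, fun x => ?_⟩⟩
  · rw [LinearMap.comp_neg, hJ, neg_neg]
  · rw [LinearMap.neg_comp, hJ, neg_neg]
  · exact neg_eq_iff_eq_neg.mpr (hQ x)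

theorem equivalent_neg_of_sq_eq_neg_one (Q : QuadraticMap R M N) {a : R} (ha : a ^ 2 = -1) :
    Q.Equivalent (-Q) := by
  refine equivalent_neg_of_map_eq_neg Q (a • LinearMap.id) ?_ fun x => ?_
  · ext x
    simp [smul_smul, ← sq, ha]
  · simp [QuadraticMap.map_smul, ← sq, ha]

theorem quadraticMap_map_smul_add_smul (Q : QuadraticMap R M N) (a b : R) (x y : M) :
    Q (a • x + b • y) = a ^ 2 • Q x + b ^ 2 • Q y + (a * b) • polar Q x y := by
  rw [QuadraticMap.map_add Q, QuadraticMap.map_smul, QuadraticMap.map_smul,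
    QuadraticMap.polar_smul_left, QuadraticMap.polar_smul_right, smul_smul, sq, sq]

theorem prod_self_equivalent_neg_of_sq_add_sq_eq_neg_one (Q : QuadraticMap R M N) {a b : R}
    (hab : a ^ 2 + b ^ 2 = -1) : (Q.prod Q).Equivalent (-Q.prod Q) := by
  let J : M × M →ₗ[R] M × M :=
    (a • LinearMap.fst R M M + b • LinearMap.snd R M M).prod
      (b • LinearMap.fst R M M + (-a) • LinearMap.snd R M M)
  have hJ_apply (x : M × M) : J x = (a • x.1 + b • x.2, b • x.1 + (-a) • x.2) := rfl
  refine equivalent_neg_of_map_eq_neg (Q.prod Q) J (LinearMap.ext fun x => ?_) fun x => ?_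
  · suffices J (J x) = -x from this
    simp only [hJ_apply]
    ext
    · simp only [Prod.fst_neg]
      linear_combination (norm := module) hab • x.1
    · simp only [Prod.snd_neg]
      linear_combination (norm := module) hab • x.2
  · simp only [hJ_apply, QuadraticMap.prod_apply, quadraticMap_map_smul_add_smul]
    linear_combination (norm := module) hab • (Q x.1 + Q x.2)

theorem bijective_polarBilin_prod {Q₁ : QuadraticForm R M} {Q₂ : QuadraticForm R N}
    (h₁ : Function.Bijective Q₁.polarBilin) (h₂ : Function.Bijective Q₂.polarBilin) :
    Function.Bijective (Q₁.prod Q₂).polarBilin := by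
  have h : ⇑(Q₁.prod Q₂).polarBilin =
      Module.dualProdDualEquivDual R M N ∘ Prod.map Q₁.polarBilin Q₂.polarBilin := by
    ext x : 1
    exact LinearMap.ext (polar_prod Q₁ Q₂ x)
  rw [h]
  exact (LinearEquiv.bijective _).comp (h₁.prodMap h₂)

theorem prod_neg_equivalent_dualProd [Module.Free R M] {Q : QuadraticForm R M}
    (hQ : Function.Bijective Q.polarBilin) :
    (Q.prod (-Q)).Equivalent (QuadraticForm.dualProd R M) := by
  obtain ⟨B, rfl⟩ := LinearMap.BilinMap.toQuadraticMap_surjective Q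
  have polarBilin_apply (x : M) : B.toQuadraticMap.polarBilin x = B x + B.flip x := by
    rw [LinearMap.BilinMap.polarBilin_toQuadraticMap, LinearMap.add_apply]
  let σ : M × M →ₗ[R] Module.Dual R M × M :=
    (B.coprod B.flip).prod (LinearMap.fst R M M - LinearMap.snd R M M)
  have σ_add (u y : M) : σ (u + y, y) = (B u + B.toQuadraticMap.polarBilin y, u) := by
    ext1
    · simp [σ, polarBilin_apply, add_assoc]
    · simp [σ]
  have σ_injective : Function.Injective σ := by
    refine (injective_iff_map_eq_zero σ).mpr fun ⟨x, y⟩ hxy => ?_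
    obtain ⟨u, rfl⟩ : ∃ u, x = u + y := ⟨x - y, (sub_add_cancel x y).symm⟩
    obtain ⟨hB, rfl⟩ := Prod.mk_eq_zero.mp ((σ_add u y).symm.trans hxy)
    have hy : y = 0 := (map_eq_zero_iff _ hQ.injective).mp <| by
      simpa only [map_zero, zero_add] using hB
    simp [hy]
  have σ_surjective : Function.Surjective σ := by
    rintro ⟨f, u⟩
    obtain ⟨y, hy⟩ := hQ.surjective (f - B u)
    exact ⟨(u + y, y), by rw [σ_add, hy, add_sub_cancel]⟩
  refine ⟨⟨.ofBijective σ ⟨σ_injective, σ_surjective⟩, fun ⟨x, y⟩ => ?_⟩⟩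
  calc B x (x - y) + B (x - y) y
      = B x x - B y y := by rw [map_sub, map_sub, LinearMap.sub_apply, sub_add_sub_cancel]
    _ = B x x + -B y y := sub_eq_add_neg _ _

theorem prod_self_equivalent_hyperbolicForm {n : ℕ} (b : Module.Basis (Fin n) R M)
    {Q : QuadraticForm R M} (hQ : Function.Bijective Q.polarBilin) (hneg : Q.Equivalent (-Q)) :
    (Q.prod Q).Equivalent (hyperbolicForm R n) :=
  have := Module.Free.of_basis b
  ((QuadraticMap.Equivalent.refl Q).prod hneg).trans <|
    (prod_neg_equivalent_dualProd hQ).trans (dualProd_equivalent_hyperbolicForm b)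

theorem quadratic_double_equiv_hyperbolic_general {k : ℕ} (b : Module.Basis (Fin k) R M)
    {Q : QuadraticForm R M} (hQ : Function.Bijective Q.polarBilin) :
    ((∃ a : R, a ^ 2 = -1) → (Q.prod Q).Equivalent (hyperbolicForm R k)) ∧
    ((∃ a b : R, a ^ 2 + b ^ 2 = -1) →
      (QuadraticMap.pi fun _ : Fin 4 => Q).Equivalent (hyperbolicForm R (2 * k))) := by
  constructor
  · rintro ⟨a, ha⟩
    exact prod_self_equivalent_hyperbolicForm b hQ (equivalent_neg_of_sq_eq_neg_one Q ha)
  · rintro ⟨a, c, hac⟩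
    exact (pi_fin_four_equivalent_prod Q).trans <|
      prod_self_equivalent_hyperbolicForm (finProdBasis b b) (bijective_polarBilin_prod hQ hQ)
        (prod_self_equivalent_neg_of_sq_add_sq_eq_neg_one Q hac)

end Ring

theorem bijective_polarBilin_of_separatingRight {K V : Type*} [Field K] [AddCommGroup V]
    [Module K V] [FiniteDimensional K V] {Q : QuadraticForm K V}
    (hQ : Q.polarBilin.SeparatingRight) : Function.Bijective Q.polarBilin := by
  have hflip : Q.polarBilin.flip = Q.polarBilin := LinearMap.ext₂ fun x y => polar_comm Q y x
  have hinj : Function.Injective Q.polarBilin := by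
    rw [← LinearMap.ker_eq_bot, ← hflip]
    exact LinearMap.separatingRight_iff_flip_ker_eq_bot.mp hQ
  exact (LinearMap.IsPerfPair.of_injective hinj (hflip ▸ hinj)).bijective_left

theorem exists_linearEquiv_hypQ_eq {F : Type} [Field F] {V : Type*} [AddCommGroup V] [Module F V]
    {n : ℕ} {Q : QuadraticForm F V} (h : Q.Equivalent (hyperbolicForm F n)) :
    ∃ e : V ≃ₗ[F] (Fin (2 * n) → F), ∀ x, hypQ F n (e x) = Q x :=
  h.elim fun e => ⟨e.toLinearEquiv, fun x => (hyperbolicForm_apply _).symm.trans (e.map_app x)⟩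

/-- Let `Q` be a nondegenerate quadratic form on a `k`-dimensional vector space `V` over
a field `F`.
(1) If `-1` is a square in `F`, then `Q ⊕ Q` is equivalent to the hyperbolic quadratic
form `q_H^k` on `F^{2k}`.
(2) If `-1` is a sum of two squares in `F`, then the orthogonal sum `Q^{⊕4}` of four
copies of `Q` (on `V⁴`) is equivalent to the hyperbolic quadratic form `q_H^{2k}` on
`F^{4k}`. -/
theorem quadratic_double_equiv_hyperbolic (F : Type) [Field F]
    (V : Type) [AddCommGroup V] [Module F V] [FiniteDimensional F V]
    (k : ℕ) (hk : Module.finrank F V = k) (Q : QuadraticForm F V)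
    (hQ : ∀ v : V, (∀ w : V, QuadraticMap.polar Q w v = 0) → v = 0) :
    ((∃ a : F, a ^ 2 = -1) →
      ∃ e : (V × V) ≃ₗ[F] (Fin (2 * k) → F),
        ∀ x : V × V, hypQ F k (e x) = Q x.1 + Q x.2) ∧
    ((∃ a b : F, a ^ 2 + b ^ 2 = -1) →
      ∃ e : (Fin 4 → V) ≃ₗ[F] (Fin (2 * (2 * k)) → F),
        ∀ x : Fin 4 → V, hypQ F (2 * k) (e x) = ∑ i : Fin 4, Q (x i)) := by
  have ⟨h₂, h₄⟩ := quadratic_double_equiv_hyperbolic_general (Module.finBasisOfFinrankEq F V hk)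
    (bijective_polarBilin_of_separatingRight hQ)
  exact ⟨fun ha => exists_linearEquiv_hypQ_eq (h₂ ha),
    fun hab => by simpa using exists_linearEquiv_hypQ_eq (h₄ hab)⟩
end

section
/- Let F be a field, V a finite-dimensional F-vector space, and Q a quadratic form on V (possibly degenerate). If U and W are subspaces of V that are each maximal (with respect to inclusion) among totally isotropic subspaces of Q, then dim U = dim W. -/
/-!
If `U` is maximal totally isotropic, then every `Q`-singular vector orthogonal to `U` lies in `U`.
Hence, for any totally isotropic `W`, the polar form restricted to `W × U` has left kernel inside
`U ∩ W`, while `U ∩ W` lies in its right kernel because `W` is totally isotropic. The polar form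
thus embeds `W / (U ∩ W)` into the dual of `U / (U ∩ W)`, and so bounds its dimension by that of the
finite-dimensional space `U / (U ∩ W)`. Exchanging `U` and `W` gives equality of the
dimensions of these quotients, hence of `U` and `W`.
-/

universe u v

theorem rank_submoduleOf {R M : Type*} [Semiring R] [AddCommMonoid M] [Module R M]
    (p q : Submodule R M) :
    Module.rank R (p.submoduleOf q) = Module.rank R (p ⊓ q : Submodule R M) := by
  rw [(Submodule.equivSubtypeMap q (p.submoduleOf q)).rank_eq, Submodule.submoduleOf,
    Submodule.map_comap_subtype, inf_comm]

theorem rank_quotient_le_of_ker_le {R : Type u} {M N : Type v} [Ring R] [AddCommGroup M]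
    [AddCommGroup N] [Module R M] [Module R N] (f : M →ₗ[R] N) {A : Submodule R M}
    (hA : LinearMap.ker f ≤ A) : Module.rank R (M ⧸ A) ≤ Module.rank R N :=
  calc
    Module.rank R (M ⧸ A) ≤ Module.rank R (M ⧸ LinearMap.ker f) :=
      LinearMap.rank_le_of_surjective _ (Submodule.factor_surjective hA)
    _ = Module.rank R (LinearMap.range f) := f.quotKerEquivRange.rank_eq
    _ ≤ Module.rank R N := Submodule.rank_le _

theorem rank_quotient_le_of_ker_le_of_le_ker_flip {K : Type u} {M N : Type v} [Field K]
    [AddCommGroup M] [AddCommGroup N] [Module K M] [Module K N] (B : M →ₗ[K] N →ₗ[K] K)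
    {A : Submodule K M} {C : Submodule K N} [FiniteDimensional K (N ⧸ C)]
    (hA : LinearMap.ker B ≤ A) (hC : C ≤ LinearMap.ker B.flip) :
    Module.rank K (M ⧸ A) ≤ Module.rank K (N ⧸ C) := by
  let toDual : M →ₗ[K] Module.Dual K (N ⧸ C) := (C.liftQ B.flip hC).flip
  have ker_toDual : LinearMap.ker toDual ≤ A := fun x hx ↦ hA <| LinearMap.ext fun y ↦
    LinearMap.congr_fun (LinearMap.mem_ker.mp hx) (C.mkQ y)
  -- Composing with a noncanonical isomorphism `N ⧸ C ≃ Dual K (N ⧸ C)` avoids universe lifts.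
  let dualEquiv := (Module.finBasis K (N ⧸ C)).toDualEquiv
  exact rank_quotient_le_of_ker_le (dualEquiv.symm.toLinearMap ∘ₗ toDual)
    ((LinearEquiv.ker_comp _ _).trans_le ker_toDual)

section

variable {R M N : Type*} [CommRing R] [AddCommGroup M] [AddCommGroup N] [Module R M] [Module R N]

/-- A submodule is totally isotropic for a quadratic map `Q` if `Q` vanishes on it. The maximal
totally isotropic submodules are those satisfying `Maximal (IsTotallyIsotropic Q)`. -/
def IsTotallyIsotropic (Q : QuadraticMap R M N) (U : Submodule R M) : Prop :=
  ∀ u ∈ U, Q u = 0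

namespace IsTotallyIsotropic

variable {Q : QuadraticMap R M N} {U W : Submodule R M}

theorem polar_eq_zero (hU : IsTotallyIsotropic Q U) {x y : M} (hx : x ∈ U) (hy : y ∈ U) :
    QuadraticMap.polar Q x y = 0 := by
  simp [QuadraticMap.polar, hU x hx, hU y hy, hU _ (U.add_mem hx hy)]

theorem span_singleton {x : M} (hx : Q x = 0) : IsTotallyIsotropic Q (R ∙ x) := by
  intro y hy
  obtain ⟨a, rfl⟩ := Submodule.mem_span_singleton.mp hy
  rw [QuadraticMap.map_smul, hx, smul_zero]

theorem sup (hU : IsTotallyIsotropic Q U) (hW : IsTotallyIsotropic Q W)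
    (hUW : ∀ u ∈ U, ∀ w ∈ W, QuadraticMap.polar Q u w = 0) : IsTotallyIsotropic Q (U ⊔ W) := by
  intro x hx
  obtain ⟨u, hu, w, hw, rfl⟩ := Submodule.mem_sup.mp hx
  rw [QuadraticMap.map_add Q, hU u hu, hW w hw, hUW u hu w hw, add_zero, add_zero]

theorem mem_of_maximal (hU : Maximal (IsTotallyIsotropic Q) U) {x : M} (hx : Q x = 0)
    (hxU : ∀ u ∈ U, QuadraticMap.polar Q u x = 0) : x ∈ U := by
  have orthogonal_span : ∀ u ∈ U, ∀ y ∈ R ∙ x, QuadraticMap.polar Q u y = 0 := by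
    intro u hu y hy
    obtain ⟨a, rfl⟩ := Submodule.mem_span_singleton.mp hy
    rw [QuadraticMap.polar_smul_right, hxU u hu, smul_zero]
  have sup_le : U ⊔ R ∙ x ≤ U :=
    hU.le_of_ge (hU.prop.sup (span_singleton hx) orthogonal_span) le_sup_left
  exact sup_le (Submodule.mem_sup_right (Submodule.mem_span_singleton_self x))

end IsTotallyIsotropic

end

namespace IsTotallyIsotropic

variable {F V : Type*} [Field F] [AddCommGroup V] [Module F V] {Q : QuadraticForm F V}
  {U W : Submodule F V}

theorem rank_quotient_le_of_maximal (hW : IsTotallyIsotropic Q W)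
    (hU : Maximal (IsTotallyIsotropic Q) U) [FiniteDimensional F (U ⧸ W.submoduleOf U)] :
    Module.rank F (W ⧸ U.submoduleOf W) ≤ Module.rank F (U ⧸ W.submoduleOf U) := by
  let B : W →ₗ[F] U →ₗ[F] F := Q.polarBilin.domRestrict₁₂ W U
  have ker_le : LinearMap.ker B ≤ U.submoduleOf W := fun w hw ↦
    mem_of_maximal hU (hW w w.2) fun u hu ↦
      (QuadraticMap.polar_comm Q u w).trans (LinearMap.congr_fun hw ⟨u, hu⟩)
  have le_ker_flip : W.submoduleOf U ≤ LinearMap.ker B.flip := fun _ hu ↦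
    LinearMap.ext fun w ↦ hW.polar_eq_zero w.2 hu
  exact rank_quotient_le_of_ker_le_of_le_ker_flip B ker_le le_ker_flip

theorem rank_quotient_eq_of_maximal (hU : Maximal (IsTotallyIsotropic Q) U)
    (hW : Maximal (IsTotallyIsotropic Q) W) [FiniteDimensional F (U ⧸ W.submoduleOf U)] :
    Module.rank F (U ⧸ W.submoduleOf U) = Module.rank F (W ⧸ U.submoduleOf W) := by
  have rank_le := hW.prop.rank_quotient_le_of_maximal hU
  have : FiniteDimensional F (W ⧸ U.submoduleOf W) :=
    Module.rank_lt_aleph0_iff.mp (rank_le.trans_lt (Module.rank_lt_aleph0 F _))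
  exact (hU.prop.rank_quotient_le_of_maximal hW).antisymm rank_le

end IsTotallyIsotropic

theorem maximal_isotropic_same_dim_general {F V : Type*} [Field F] [AddCommGroup V] [Module F V]
    {Q : QuadraticForm F V} {U W : Submodule F V} [FiniteDimensional F (U ⧸ W.submoduleOf U)]
    (hU : Maximal (IsTotallyIsotropic Q) U) (hW : Maximal (IsTotallyIsotropic Q) W) :
    Module.rank F U = Module.rank F W := by
  rw [← (W.submoduleOf U).rank_quotient_add_rank, ← (U.submoduleOf W).rank_quotient_add_rank,
    IsTotallyIsotropic.rank_quotient_eq_of_maximal hU hW, rank_submoduleOf, rank_submoduleOf,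
    inf_comm]

/-- In a finite-dimensional vector space `V` over a field `F` equipped with a (possibly
degenerate) quadratic form `Q`, any two subspaces that are maximal with respect to
inclusion among the totally isotropic subspaces of `Q` have the same dimension. -/
theorem maximal_isotropic_same_dim (F : Type) [Field F]
    (V : Type) [AddCommGroup V] [Module F V] [FiniteDimensional F V]
    (Q : QuadraticForm F V) (U W : Submodule F V)
    (hU : ∀ u ∈ U, Q u = 0) (hW : ∀ w ∈ W, Q w = 0)
    (hUmax : ∀ U' : Submodule F V, U ≤ U' → (∀ u ∈ U', Q u = 0) → U' = U)
    (hWmax : ∀ W' : Submodule F V, W ≤ W' → (∀ w ∈ W', Q w = 0) → W' = W) :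
    Module.finrank F ↥U = Module.finrank F ↥W := by
  exact congrArg Cardinal.toNat <| maximal_isotropic_same_dim_general
    ⟨hU, fun U' hU' hle ↦ (hUmax U' hle hU').le⟩ ⟨hW, fun W' hW' hle ↦ (hWmax W' hle hW').le⟩
end
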